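/- arXiv:1412.6657 — 3 statements merged into one kernel-verified Lean document; each statement's English description precedes it below -/
import Mathlib

section
/- Suppose K has the following Ramsey-type property: for any A ∈ K there is an extension A' ∈ K such that for any B₁ ∈ K with A' ≤ B₁ there exists an extension B₂ ∈ K of B₁ with B₂ → (B₁)^A_2, i.e. every 2-coloring of the copies of A in B₂ is monochromatic on the copies of A inside some copy of B₁ in B₂. Then K has the weak amalgamation property. -/
open FirstOrder FirstOrder.Language CategoryTheory Set

universe u v

namespace Paper


variable {L : FirstOrder.Language.{u, v}}

/-- `A` is an amalgamation base for the class `K`: any two extensions of `A` in `K`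
have a common extension in `K` amalgamating the embeddings over `A`. -/
def IsAmalgamationBase (K : Set (Bundled.{0} L.Structure)) (A : Bundled.{0} L.Structure) : Prop :=
  A ∈ K ∧ ∀ (B C : Bundled.{0} L.Structure) (f : A ↪[L] B) (g : A ↪[L] C),
    B ∈ K → C ∈ K → ∃ (D : Bundled.{0} L.Structure) (f' : B ↪[L] D) (g' : C ↪[L] D),
      D ∈ K ∧ f'.comp f = g'.comp g

/-- Truss' condition: every element of `K` extends to an amalgamation base. -/
def TrussCondition (K : Set (Bundled.{0} L.Structure)) : Prop :=
  ∀ A ∈ K, ∃ B : Bundled.{0} L.Structure, IsAmalgamationBase K B ∧ Nonempty (A ↪[L] B)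

/-- `C` is a cofinal subclass of `K`. -/
def IsCofinalIn (C K : Set (Bundled.{0} L.Structure)) : Prop :=
  C ⊆ K ∧ ∀ A ∈ K, ∃ B ∈ C, Nonempty (A ↪[L] B)

/-- The weak amalgamation property. -/
def WeakAmalgamation (K : Set (Bundled.{0} L.Structure)) : Prop :=
  ∀ A ∈ K, ∃ (A' : Bundled.{0} L.Structure) (i : A ↪[L] A'), A' ∈ K ∧
    ∀ (B₁ B₂ : Bundled.{0} L.Structure) (f₁ : A' ↪[L] B₁) (f₂ : A' ↪[L] B₂),
      B₁ ∈ K → B₂ ∈ K →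
      ∃ (D : Bundled.{0} L.Structure) (g₁ : B₁ ↪[L] D) (g₂ : B₂ ↪[L] D),
        D ∈ K ∧ (g₁.comp f₁).comp i = (g₂.comp f₂).comp i

/-- The set of copies of `A` inside a structure `C`: substructures of `C` isomorphic to `A`. -/
def copies (A : Bundled.{0} L.Structure) (C : Type) [L.Structure C] :
    Set (L.Substructure C) :=
  {S | Nonempty (A ≃[L] S)}

/-- The Ramsey property for a class of finite structures, phrased with copies:
for every `k` and every pair `A ≤ B` in the class there is `C₀` in the class such that
every `k`-coloring of the copies of `A` in `C₀` is monochromatic on the copies of `A`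
lying inside some copy of `B` in `C₀`. -/
def RamseyProperty (C : Set (Bundled.{0} L.Structure)) : Prop :=
  ∀ (k : ℕ), ∀ A ∈ C, ∀ B ∈ C, Nonempty (A ↪[L] B) →
    ∃ C₀ ∈ C, ∀ ξ : L.Substructure C₀ → Fin (k + 1),
      ∃ B' ∈ copies B C₀, ∀ S₁ ∈ copies A C₀, ∀ S₂ ∈ copies A C₀,
        S₁ ≤ B' → S₂ ≤ B' → ξ S₁ = ξ S₂

/-- `k` is a bound for the embedding Ramsey degree of `A` in the class `K`. -/
def EmbRamseyDegBound (K : Set (Bundled.{0} L.Structure)) (A : Bundled.{0} L.Structure)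
    (k : ℕ) : Prop :=
  ∀ (r : ℕ), ∀ B ∈ K, Nonempty (A ↪[L] B) →
    ∃ C ∈ K, ∀ ξ : (A ↪[L] C) → Fin (r + 1),
      ∃ h : B ↪[L] C, (Set.range fun e : A ↪[L] B => ξ (h.comp e)).ncard ≤ k

/-- The embedding Ramsey degree of `A` in `K`, as an extended natural number
(`⊤` if no finite bound exists). -/
noncomputable def embRamseyDegree (K : Set (Bundled.{0} L.Structure))
    (A : Bundled.{0} L.Structure) : ℕ∞ :=
  sInf {n : ℕ∞ | ∃ k : ℕ, n = k ∧ EmbRamseyDegBound K A k}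

/-- `k` is a bound for the (copy) Ramsey degree of `A` in the class `K`. -/
def RamseyDegBound (K : Set (Bundled.{0} L.Structure)) (A : Bundled.{0} L.Structure)
    (k : ℕ) : Prop :=
  ∀ (r : ℕ), ∀ B ∈ K, Nonempty (A ↪[L] B) →
    ∃ C ∈ K, ∀ ξ : L.Substructure C → Fin (r + 1),
      ∃ B' ∈ copies B (C : Type), (ξ '' {S | S ∈ copies A (C : Type) ∧ S ≤ B'}).ncard ≤ k

/-- `A` has finite (copy) Ramsey degree in `K`. -/
def HasFinRamseyDeg (K : Set (Bundled.{0} L.Structure)) (A : Bundled.{0} L.Structure) : Prop :=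
  ∃ k : ℕ, RamseyDegBound K A k

variable {L : FirstOrder.Language.{u, v}}

/-- The space of candidate `L`-structures on `ω`, for a relational language:
a point records, for each relation symbol, which tuples satisfy it.  It carries
the product topology (with `Bool` discrete), which is the standard logic topology. -/
abbrev StructureSpace (L : FirstOrder.Language.{u, v}) : Type v :=
  ∀ n : ℕ, L.Relations n → (Fin n → ℕ) → Bool

/-- The `L`-structure on `ℕ` coded by a point of the structure space. -/
def pointStructure [L.IsRelational] (x : StructureSpace L) : L.Structure ℕ where
  funMap := fun f _ => isEmptyElim f
  RelMap := fun {n} R t => x n R t = true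

/-- The point of the structure space coding a given `L`-structure on `ℕ`. -/
noncomputable def ofStructure (N : L.Structure ℕ) : StructureSpace L :=
  fun n R t => @decide (@Structure.RelMap L ℕ N n R t) (Classical.propDecidable _)

/-- The logic action of `S∞ = Perm ℕ` on the space of structures. -/
def permSMul (g : Equiv.Perm ℕ) (x : StructureSpace L) : StructureSpace L :=
  fun n R t => x n R fun i => g.symm (t i)

@[simp] theorem permSMul_one (x : StructureSpace L) : permSMul 1 x = x := rfl

theorem permSMul_mul (g h : Equiv.Perm ℕ) (x : StructureSpace L) :
    permSMul (g * h) x = permSMul g (permSMul h x) := rfl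

/-- The automorphism group of (the structure coded by) `x`, as a subgroup of `S∞`. -/
def autGroup (x : StructureSpace L) : Subgroup (Equiv.Perm ℕ) where
  carrier := {g | permSMul g x = x}
  one_mem' := permSMul_one x
  mul_mem' := by
    intro a b ha hb
    show permSMul (a * b) x = x
    rw [permSMul_mul, hb, ha]
  inv_mem' := by
    intro a ha
    show permSMul a⁻¹ x = x
    conv_lhs => rw [← ha]
    rw [← permSMul_mul, inv_mul_cancel, permSMul_one]

/-- The topology of pointwise convergence on `S∞` (and hence, by restriction, on
automorphism groups of structures with universe `ℕ`). -/
instance : TopologicalSpace (Equiv.Perm ℕ) :=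
  TopologicalSpace.induced
    (fun g => ((g : ℕ → ℕ), ((g⁻¹ : Equiv.Perm ℕ) : ℕ → ℕ))) inferInstance

/-- The age of the structure coded by a point of the structure space. -/
def agePoint [L.IsRelational] (x : StructureSpace L) : Set (Bundled.{0} L.Structure) :=
  @FirstOrder.Language.age L ℕ (pointStructure x)

/-- The subspace of the structure space consisting of structures whose age is contained
in `K`. -/
def spaceOf [L.IsRelational] (K : Set (Bundled.{0} L.Structure)) : Set (StructureSpace L) :=
  {x | agePoint x ⊆ K}

/-- `x` is a generic point for `K` : it lies in the space of structures with age `⊆ K`,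
and its `S∞`-orbit is comeagre there. -/
def IsGenericPoint [L.IsRelational] (K : Set (Bundled.{0} L.Structure))
    (x : StructureSpace L) : Prop :=
  x ∈ spaceOf K ∧
    {y : ↥(spaceOf K) | ∃ g : Equiv.Perm ℕ, (y : StructureSpace L) = permSMul g x} ∈
      residual ↥(spaceOf K)

/-- A topological group is extremely amenable if every continuous action on a nonempty
compact Hausdorff space has a fixed point. -/
def ExtremelyAmenable (G : Type*) [Group G] [TopologicalSpace G] : Prop :=
  ∀ (X : Type) [TopologicalSpace X] [CompactSpace X] [T2Space X] [Nonempty X]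
    [MulAction G X], ContinuousSMul G X → ∃ x : X, ∀ g : G, g • x = x

/-- A topological group is amenable if every continuous action on a nonempty compact
Hausdorff space supports an invariant Borel probability measure. -/
def AmenableGroup (G : Type*) [Group G] [TopologicalSpace G] : Prop :=
  ∀ (X : Type) [TopologicalSpace X] [CompactSpace X] [T2Space X] [Nonempty X]
    [MulAction G X], ContinuousSMul G X →
    letI : MeasurableSpace X := borel X
    ∃ μ : MeasureTheory.Measure X, MeasureTheory.IsProbabilityMeasure μ ∧
      ∀ g : G, MeasureTheory.Measure.map (fun p => g • p) μ = μ

/-- Uniform local finiteness: substructures generated by `n` elements have size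
bounded by a function of `n`. -/
def IsULF (L : FirstOrder.Language.{u, v}) (N : Type*) [L.Structure N] : Prop :=
  ∃ f : ℕ → ℕ, ∀ s : Finset N, Nat.card (Substructure.closure L (s : Set N)) ≤ f s.card

/-- `K` is (the universal class given by) the age of a countable uniformly locally
finite structure. -/
def IsAgeOfCountableULF (K : Set (Bundled.{0} L.Structure)) : Prop :=
  ∃ N : Bundled.{0} L.Structure, Countable N ∧ IsULF L N ∧ K = L.age N

theorem absLemma {P G : Type*} [Finite G] (le : P → P → Prop) (R : G → P → P → Prop)
    (p₀ : P) (hle : ∀ a b c, le a b → le b c → le a c)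
    (hR : ∀ σ r r' p, R σ r p → le r' r → R σ r' p)
    (hom : ∀ p q, ∃ r, le r p ∧ ∃ σ, R σ r q)
    (hc : ∀ σ r p q, R σ r p → R σ r q → ∃ s, le s p ∧ le s q) :
    ∃ p, ∀ q r, le q p → le r p → ∃ s, le s q ∧ le s r := by
  classical
  by_contra hcon
  push Not at hcon
  have h1 : ∀ n : ℕ, ∃ p l, (l : List P).length = n ∧
      (p :: l).Pairwise (fun q r => ¬ ∃ s, le s q ∧ le s r) := by
    intro n
    induction n with
    | zero => exact ⟨p₀, [], rfl, by simp⟩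
    | succ n ih =>
      obtain ⟨p, l, hl, hp⟩ := ih
      obtain ⟨q, r, hq, hr, hqr⟩ := hcon p
      rw [List.pairwise_cons] at hp
      refine ⟨q, r :: l, by simp [hl], ?_⟩
      rw [List.pairwise_cons, List.pairwise_cons]
      refine ⟨?_, ?_, hp.2⟩
      · intro x hx
        rcases List.mem_cons.1 hx with rfl | hx
        · rintro ⟨s, hs, hs'⟩
          exact hqr s hs hs'
        · rintro ⟨s, hs, hs'⟩
          exact hp.1 x hx ⟨s, hle _ _ _ hs hq, hs'⟩
      · rintro x hx ⟨s, hs, hs'⟩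
        exact hp.1 x hx ⟨s, hle _ _ _ hs hr, hs'⟩
  have h2 : ∀ l : List P, ∃ r, ∀ p ∈ l, ∃ σ, R σ r p := by
    intro l
    induction l with
    | nil => exact ⟨p₀, by simp⟩
    | cons q l ih =>
      obtain ⟨r, hr⟩ := ih
      obtain ⟨r', hr', σ, hσ⟩ := hom r q
      refine ⟨r', fun p hp => ?_⟩
      rcases List.mem_cons.1 hp with rfl | hp
      · exact ⟨σ, hσ⟩
      · obtain ⟨τ, hτ⟩ := hr p hp
        exact ⟨τ, hR _ _ _ _ hτ hr'⟩
  have := Fintype.ofFinite G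
  obtain ⟨p, l, hl, hp⟩ := h1 (Fintype.card G)
  obtain ⟨r, hr⟩ := h2 (p :: l)
  obtain ⟨τ, _⟩ := hr p (by simp)
  have hr' : ∀ q, ∃ σ, q ∈ p :: l → R σ r q := fun q => by
    by_cases h : q ∈ p :: l
    · obtain ⟨σ, hσ⟩ := hr q h
      exact ⟨σ, fun _ => hσ⟩
    · exact ⟨τ, fun h' => absurd h' h⟩
  choose f hf using hr'
  have hn : ((p :: l).map f).Nodup := by
    rw [List.Nodup, List.pairwise_map]
    refine hp.imp_of_mem ?_
    intro a b ha hb hab he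
    apply hab
    have h1 := hf a ha
    rw [he] at h1
    exact hc _ _ _ _ h1 (hf b hb)
  have := hn.length_le_card
  simp [hl] at this

structure Ptd {L : FirstOrder.Language.{u, v}} (K : Set (Bundled.{0} L.Structure))
    (A A' : Bundled.{0} L.Structure) where
  B : Bundled.{0} L.Structure
  mem : B ∈ K
  ne : Nonempty (A' ↪[L] B)
  a : A ↪[L] B

theorem exists_sigma {L : FirstOrder.Language.{u, v}} [L.IsRelational] {A D : Type}
    [L.Structure A] [L.Structure D] (e k : A ↪[L] D) (h : ∀ x, ∃ y, k y = e x) :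
    ∃ σ : A ↪[L] A, e = k.comp σ := by
  choose f hf using h
  refine ⟨⟨⟨f, ?_⟩, ?_, ?_⟩, ?_⟩
  · intro x y hxy
    apply e.injective
    rw [← hf, ← hf, hxy]
  · intro n g
    exact isEmptyElim g
  · intro n r x
    change Structure.RelMap r (f ∘ x) ↔ _
    rw [← k.map_rel, ← e.map_rel]
    have : k ∘ f ∘ x = e ∘ x := by
      funext i
      exact hf _
    rw [this]
  · ext x
    exact (hf x).symm

/-- If `K` has the Ramsey-type property (every `A` extends to `A'` such that every
extension `B₁` of `A'` has an extension `B₂` with `B₂ → (B₁)^A_2`), then `K` has the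
weak amalgamation property. -/
theorem statement3 (L : FirstOrder.Language.{u, v}) [L.IsRelational]
    (hL : Countable (Σ n, L.Relations n))
    (K : Set (Bundled.{0} L.Structure)) (hK : IsAgeOfCountableULF K)
    (hR : ∀ A ∈ K, ∃ A' ∈ K, Nonempty (A ↪[L] A') ∧
      ∀ B₁ ∈ K, Nonempty (A' ↪[L] B₁) →
        ∃ B₂ ∈ K, Nonempty (B₁ ↪[L] B₂) ∧
          ∀ ξ : L.Substructure B₂ → Fin 2,
            ∃ B' ∈ copies B₁ B₂, ∀ S₁ ∈ copies A B₂, ∀ S₂ ∈ copies A B₂,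
              S₁ ≤ B' → S₂ ≤ B' → ξ S₁ = ξ S₂) :
    WeakAmalgamation K := by
  classical
  obtain ⟨N, -, -, rfl⟩ := hK
  intro A hA
  obtain ⟨A', hA', ⟨i⟩, hX⟩ := hR A hA
  have hfin : Finite A := Structure.FG.finite hA.1
  have hG : Finite (A ↪[L] A) := Finite.of_injective (fun e => (e : A → A)) DFunLike.coe_injective
  have key := absLemma (P := Ptd (L.age N) A A') (G := A ↪[L] A)
    (fun r p => ∃ g : p.B ↪[L] r.B, g.comp p.a = r.a)
    (fun σ r p => ∃ g : p.B ↪[L] r.B, g.comp p.a = r.a.comp σ)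
    ⟨A', hA', ⟨Embedding.refl L A'⟩, i⟩ ?_ ?_ ?_ ?_
  · obtain ⟨p, hp⟩ := key
    refine ⟨p.B, p.a, p.mem, ?_⟩
    intro B₁ B₂ f₁ f₂ h₁ h₂
    obtain ⟨j⟩ := p.ne
    obtain ⟨s, ⟨g₁, hg₁⟩, g₂, hg₂⟩ := hp ⟨B₁, h₁, ⟨f₁.comp j⟩, f₁.comp p.a⟩
      ⟨B₂, h₂, ⟨f₂.comp j⟩, f₂.comp p.a⟩ ⟨f₁, rfl⟩ ⟨f₂, rfl⟩
    exact ⟨s.B, g₁, g₂, s.mem, hg₁.trans hg₂.symm⟩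
  · rintro a b c ⟨g, hg⟩ ⟨g', hg'⟩
    refine ⟨g.comp g', ?_⟩
    rw [Embedding.comp_assoc, hg', hg]
  · rintro σ r r' p ⟨g, hg⟩ ⟨g', hg'⟩
    refine ⟨g'.comp g, ?_⟩
    rw [Embedding.comp_assoc, hg, ← hg', Embedding.comp_assoc]
  · intro p q
    obtain ⟨C, hC, ⟨g₁⟩, ⟨g₂⟩⟩ := age.jointEmbedding (L := L) N p.B p.mem q.B q.mem
    obtain ⟨j⟩ := p.ne
    obtain ⟨D, hD, ⟨m⟩, hξ⟩ := hX C hC ⟨g₁.comp j⟩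
    obtain ⟨B', ⟨k⟩, hB⟩ := hξ (fun S => if ∃ h : q.B ↪[L] D, (h.comp q.a).toHom.range = S
      then 1 else 0)
    let k' : C ↪[L] D := B'.subtype.comp k.toEmbedding
    have hcop : ∀ e : A ↪[L] C, (k'.comp e).toHom.range ∈ copies A D ∧
        (k'.comp e).toHom.range ≤ B' := by
      intro e
      refine ⟨⟨(k'.comp e).equivRange⟩, ?_⟩
      rintro x ⟨y, rfl⟩
      exact (k (e y)).2
    have h1 := hcop (g₁.comp p.a)
    have h2 := hcop (g₂.comp q.a)
    have := hB _ h1.1 _ h2.1 h1.2 h2.2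
    rw [if_pos (c := ∃ h : q.B ↪[L] D, (h.comp q.a).toHom.range =
      (k'.comp (g₂.comp q.a)).toHom.range) ⟨k'.comp g₂, rfl⟩] at this
    have hex : ∃ h : q.B ↪[L] D, (h.comp q.a).toHom.range =
        (k'.comp (g₁.comp p.a)).toHom.range := by
      by_contra hne
      rw [if_neg hne] at this
      exact absurd this (by decide)
    obtain ⟨h, hh⟩ := hex
    obtain ⟨σ, hσ⟩ := exists_sigma (h.comp q.a) (k'.comp (g₁.comp p.a)) (by
      intro x
      have : (h.comp q.a) x ∈ (h.comp q.a).toHom.range := ⟨x, rfl⟩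
      rw [hh] at this
      obtain ⟨y, hy⟩ := this
      exact ⟨y, hy⟩)
    exact ⟨⟨D, hD, ⟨m.comp (g₁.comp j)⟩, k'.comp (g₁.comp p.a)⟩, ⟨k'.comp g₁, rfl⟩, σ, h, hσ⟩
  · rintro σ r p q ⟨g, hg⟩ ⟨g', hg'⟩
    exact ⟨⟨r.B, r.mem, r.ne, r.a.comp σ⟩, ⟨g, hg⟩, g', hg'⟩

end Paper
end

section
/- K satisfies Truss' condition if and only if there exists a cofinal subfamily C ⊆ K which satisfies the joint embedding property and the amalgamation property. -/
open FirstOrder FirstOrder.Language CategoryTheory Set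

universe u v

namespace Paper


variable {L : FirstOrder.Language.{u, v}}

variable {L : FirstOrder.Language.{u, v}}

/-- `K` satisfies Truss' condition iff there is a cofinal subfamily `C ⊆ K`
with the joint embedding property and the amalgamation property. -/
theorem statement4 (L : FirstOrder.Language.{u, v}) [L.IsRelational]
    (hL : Countable (Σ n, L.Relations n))
    (K : Set (Bundled.{0} L.Structure)) (hK : IsAgeOfCountableULF K) :
    TrussCondition K ↔
      ∃ C : Set (Bundled.{0} L.Structure),
        IsCofinalIn C K ∧ JointEmbedding C ∧ Amalgamation C := by
  constructor
  · intro hT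
    have hJ : JointEmbedding K := by
      obtain ⟨N, -, -, rfl⟩ := hK
      exact age.jointEmbedding N
    refine ⟨{A | IsAmalgamationBase K A}, ⟨fun A hA => hA.1, ?_⟩, ?_, ?_⟩
    · intro A hA
      obtain ⟨B, hB, hAB⟩ := hT A hA
      exact ⟨B, hB, hAB⟩
    · intro A hA B hB
      obtain ⟨D, hD, ⟨f⟩, ⟨g⟩⟩ := hJ A hA.1 B hB.1
      obtain ⟨E, hE, ⟨h⟩⟩ := hT D hD
      exact ⟨E, hE, ⟨h.comp f⟩, ⟨h.comp g⟩⟩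
    · intro M N P MN MP hM hN hP
      obtain ⟨D, f, g, hD, hfg⟩ := hM.2 N P MN MP hN.1 hP.1
      obtain ⟨E, hE, ⟨h⟩⟩ := hT D hD
      refine ⟨E, h.comp f, h.comp g, hE, ?_⟩
      rw [Embedding.comp_assoc, hfg, Embedding.comp_assoc]
  · rintro ⟨C, ⟨hCK, hcof⟩, -, hA⟩ A hAK
    obtain ⟨B, hB, hAB⟩ := hcof A hAK
    refine ⟨B, ⟨hCK hB, ?_⟩, hAB⟩
    intro E F f g hE hF
    obtain ⟨E', hE', ⟨e⟩⟩ := hcof E hE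
    obtain ⟨F', hF', ⟨k⟩⟩ := hcof F hF
    obtain ⟨Q, p, q, hQ, hpq⟩ := hA B E' F' (e.comp f) (k.comp g) hB hE' hF'
    refine ⟨Q, p.comp e, q.comp k, hCK hQ, ?_⟩
    rw [Embedding.comp_assoc, hpq, Embedding.comp_assoc]

end Paper
end

section
/- Let M be a countable totally categorical structure, presented in a regular adequate language with quantifier elimination, with 0-definable modular strictly minimal set D. Then the family C of all finite D-envelopes is cofinal in the class K of all finite substructures of M, has the joint embedding property and has the amalgamation property; consequently M is the generic structure for K with C as the corresponding family of amalgamation bases. -/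
open FirstOrder FirstOrder.Language CategoryTheory Set

universe u v

namespace Paper


variable {L : FirstOrder.Language.{u, v}}

variable {L : FirstOrder.Language.{u, v}}

variable {L : FirstOrder.Language.{u, v}}


/-- `M` is ω-categorical : its complete theory has, up to isomorphism, a unique
countable model. -/
def OmegaCategorical (L : FirstOrder.Language.{0, 0}) (M : Type) [L.Structure M] : Prop :=
  Cardinal.Categorical Cardinal.aleph0.{0} (L.completeTheory M)

/-- `M` is totally categorical : its complete theory is categorical in every infinite
cardinality. -/
def TotallyCategorical (L : FirstOrder.Language.{0, 0}) (M : Type) [L.Structure M] : Prop :=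
  ∀ κ : Cardinal.{0}, Cardinal.aleph0 ≤ κ → Cardinal.Categorical.{0,0,0} κ (L.completeTheory M)

/-- A formula in one free variable with parameter tuple, coded syntactically. -/
abbrev ParamFormula (L : FirstOrder.Language.{0, 0}) : Type :=
  Σ k : ℕ, L.Formula (Fin k ⊕ Fin 1) × (Fin k → ℕ)

/-- Realization of a parametrized formula at a point, in the structure `M` on `ℕ`. -/
def ParamFormula.RealizeAt (L : FirstOrder.Language.{0, 0}) (M : L.Structure ℕ)
    (q : ParamFormula L) (b : ℕ) : Prop :=
  @Formula.Realize L ℕ M _ q.2.1 (Sum.elim q.2.2 fun _ => b)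

/-- `p` is a complete 1-type over the parameter set `A` of the structure `M` on `ℕ` :
all parameters come from `A`, `p` is finitely satisfiable in `M` and complete. -/
def IsCompleteTypeOver (L : FirstOrder.Language.{0, 0}) (M : L.Structure ℕ) (A : Set ℕ)
    (p : Set (ParamFormula L)) : Prop :=
  (∀ q ∈ p, ∀ i, q.2.2 i ∈ A) ∧
    (∀ s : Finset (ParamFormula L), ↑s ⊆ p →
      ∃ b : ℕ, ∀ q ∈ s, ParamFormula.RealizeAt L M q b) ∧
    ∀ (k : ℕ) (φ : L.Formula (Fin k ⊕ Fin 1)) (a : Fin k → ℕ), (∀ i, a i ∈ A) →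
      (⟨k, (φ, a)⟩ : ParamFormula L) ∈ p ∨ (⟨k, (φ.not, a)⟩ : ParamFormula L) ∈ p

/-- `M` is ω-stable : over every countable parameter set there are only countably many
complete 1-types. -/
def OmegaStable (L : FirstOrder.Language.{0, 0}) (M : L.Structure ℕ) : Prop :=
  ∀ A : Set ℕ, A.Countable → {p | IsCompleteTypeOver L M A p}.Countable

/-- The structure on `ℕ` in the language expanded by the new relation symbols of `L'`,
obtained by adjoining to `M` the interpretations coded by `e`. -/
def expStructure (L' : FirstOrder.Language.{0, 0}) [L'.IsRelational]
    (M : L.Structure ℕ) (e : StructureSpace L') : (L.sum L').Structure ℕ where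
  funMap := fun {n} f t => Sum.casesOn f (fun f => @Structure.funMap L ℕ M n f t)
    (fun f => isEmptyElim f)
  RelMap := fun {n} R t => Sum.casesOn R (fun R => @Structure.RelMap L ℕ M n R t)
    (fun R => e n R t = true)

/-- The expansion `e` of `M` is precompact : every finite structure in the age of `M`
has only finitely many expansions in the age of the expanded structure. -/
def PrecompactExpansion (L' : FirstOrder.Language.{0, 0}) [L'.IsRelational]
    (M : L.Structure ℕ) (e : StructureSpace L') : Prop :=
  ∀ A : Bundled.{0} L.Structure, A ∈ @FirstOrder.Language.age L ℕ M → Finite A →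
    {S : (L.sum L').Structure A.α |
      @FirstOrder.Language.LHom.reduct L (L.sum L') LHom.sumInl A.α S = A.str ∧
        (Bundled.mk A.α S) ∈
          @FirstOrder.Language.age (L.sum L') ℕ (expStructure L' M e)}.Finite

/-- An (abstract) flow of a topological group `G` on a topological space `X`. -/
structure FlowOn (G : Type*) [Group G] [TopologicalSpace G] (X : Type*)
    [TopologicalSpace X] where
  act : G → X → X
  continuous_act : Continuous fun p : G × X => act p.1 p.2
  act_one : ∀ x, act 1 x = x
  act_mul : ∀ g h x, act (g * h) x = act g (act h x)

variable {G : Type*} [Group G] [TopologicalSpace G] {X : Type*} [TopologicalSpace X]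

/-- A flow is minimal if its phase space is a nonempty compact space in which
every orbit is dense. -/
def FlowOn.IsMinimal (F : FlowOn G X) : Prop :=
  Nonempty X ∧ CompactSpace X ∧ ∀ x : X, Dense (Set.range fun g : G => F.act g x)

/-- A flow is a universal minimal flow if it is minimal and admits a continuous
equivariant map to every nonempty compact flow. -/
def FlowOn.IsUniversalMinimal (F : FlowOn G X) : Prop :=
  F.IsMinimal ∧
    ∀ (Y : Type) [TopologicalSpace Y] [CompactSpace Y] [Nonempty Y] (F' : FlowOn G Y),
      ∃ f : X → Y, Continuous f ∧ ∀ g y, f (F.act g y) = F'.act g (f y)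

/-- The model-theoretic algebraic closure of a set `A` in a structure `W`: elements
satisfying a formula with parameters from `A` having finitely many solutions. -/
def aclSet (L : FirstOrder.Language.{0, 0}) (W : Type) [L.Structure W] (A : Set W) :
    Set W :=
  {b | ∃ (k : ℕ) (φ : L.Formula (Fin k ⊕ Fin 1)) (a : Fin k → W),
    (∀ i, a i ∈ A) ∧ φ.Realize (Sum.elim a fun _ => b) ∧
      {c | φ.Realize (Sum.elim a fun _ => c)}.Finite}

/-- Quantifier elimination: every formula is equivalent in `W` to a quantifier-free one. -/
def HasQE (L : FirstOrder.Language.{0, 0}) (W : Type) [L.Structure W] : Prop :=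
  ∀ (n : ℕ) (φ : L.Formula (Fin n)), ∃ ψ : L.Formula (Fin n),
    ψ.IsQF ∧ ∀ v : Fin n → W, φ.Realize v ↔ ψ.Realize v

/-- A `0`-definable set `D` is strongly minimal if it is infinite and every subset
definable with parameters is finite or cofinite in `D`. -/
def StronglyMinimalSet (L : FirstOrder.Language.{0, 0}) (W : Type) [L.Structure W]
    (D : Set W) : Prop :=
  D.Infinite ∧ ∀ s : Set W, (Set.univ : Set W).Definable₁ L s →
    (s ∩ D).Finite ∨ (D \ s).Finite

/-- A strictly minimal set: strongly minimal, `0`-definable, with `Aut(W)` acting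
transitively on it. -/
def StrictlyMinimalSet (L : FirstOrder.Language.{0, 0}) (W : Type) [L.Structure W]
    (D : Set W) : Prop :=
  (∅ : Set W).Definable₁ L D ∧ StronglyMinimalSet L W D ∧
    ∀ a ∈ D, ∀ b ∈ D, ∃ e : W ≃[L] W, e a = b

/-- `X` is a closed subset of `D` for the pregeometry given by algebraic closure. -/
def IsAclClosedIn (L : FirstOrder.Language.{0, 0}) (W : Type) [L.Structure W]
    (D X : Set W) : Prop :=
  X ⊆ D ∧ aclSet L W X ∩ D = X

/-- Modularity of the pregeometry on `D` given by algebraic closure, phrased as the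
modular law in the lattice of closed subsets of `D`. -/
def ModularGeometryOn (L : FirstOrder.Language.{0, 0}) (W : Type) [L.Structure W]
    (D : Set W) : Prop :=
  ∀ X Y Z : Set W, IsAclClosedIn L W D X → IsAclClosedIn L W D Y →
    IsAclClosedIn L W D Z → X ⊆ Z →
      aclSet L W (X ∪ (Y ∩ Z)) ∩ D = (aclSet L W (X ∪ Y) ∩ D) ∩ Z

/-- `E` is a `D`-envelope: for some `A ⊆ E`, `E` is maximal subject to `A ⊆ E` and
`acl(E) ∩ D = acl(A) ∩ D`. -/
def IsEnvelope (L : FirstOrder.Language.{0, 0}) (W : Type) [L.Structure W]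
    (D E : Set W) : Prop :=
  ∃ A : Set W, A ⊆ E ∧ aclSet L W E ∩ D = aclSet L W A ∩ D ∧
    ∀ E' : Set W, E ⊆ E' → aclSet L W E' ∩ D = aclSet L W A ∩ D → E' = E

/-- The induced structure on a subset of a structure in a relational language. -/
instance subsetStructure (L : FirstOrder.Language.{0, 0}) [L.IsRelational] (W : Type)
    [L.Structure W] (E : Set W) : L.Structure ↥E where
  funMap := fun f _ => isEmptyElim f
  RelMap := fun R t => Structure.RelMap R fun i => (t i : W)

/-- The class of all finite substructures of `W` (as bundled structures, up to
isomorphism). -/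
def finSubClass (L : FirstOrder.Language.{0, 0}) (W : Type) [L.Structure W] :
    Set (Bundled.{0} L.Structure) :=
  {A | Finite A ∧ Nonempty (A ↪[L] W)}

/-- The class of finite `D`-envelopes of `W`, as bundled structures. -/
def envClass (L : FirstOrder.Language.{0, 0}) [L.IsRelational] (W : Type)
    [L.Structure W] (D : Set W) : Set (Bundled.{0} L.Structure) :=
  {A | ∃ E : Set W, E.Finite ∧ IsEnvelope L W D E ∧ Nonempty (A ≃[L] ↥E)}

/-- Abstract data for the coordinatizing geometries of an ω-stable ω-categorical
structure in a regular adequate eq-presentation: a family of standard systems of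
(projective) geometries `Sys`, their equivalence classes `Cls`, domains, fibers, and
the meaning of "`J_b ∩ E` has the isomorphism type given by the value `m`". -/
structure GeomSystem (L : FirstOrder.Language.{0, 0}) (W : Type) [L.Structure W] where
  Cls : Type
  Sys : Type
  cls : Sys → Cls
  dom : Sys → Set W
  fib : Sys → W → Set W
  hasType : Sys → ℕ → Set W → Prop

/-- `E` is a `μ`-envelope for the dimension function `μ`:
(i) `E` is algebraically closed in `W`;
(ii) for every `c ∉ E` some fiber geometry over `E` grows when `c` is added;
(iii) every fiber geometry over `E` meets `E` in the isomorphism type prescribed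
by `μ`. -/
def IsMuEnvelope (L : FirstOrder.Language.{0, 0}) (W : Type) [L.Structure W]
    (G : GeomSystem L W) (μ : G.Cls → ℕ) (E : Set W) : Prop :=
  aclSet L W E = E ∧
    (∀ c ∉ E, ∃ J : G.Sys, ∃ b ∈ G.dom J ∩ E,
      aclSet L W E ∩ G.fib J b ⊂ aclSet L W (E ∪ {c}) ∩ G.fib J b) ∧
    ∀ J : G.Sys, ∀ b ∈ G.dom J ∩ E, G.hasType J (μ (G.cls J)) (G.fib J b ∩ E)

/-- The class `E_const` of all finite `μ`-envelopes for constant dimension functions. -/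
def envConstClass (L : FirstOrder.Language.{0, 0}) [L.IsRelational] (W : Type)
    [L.Structure W] (G : GeomSystem L W) : Set (Bundled.{0} L.Structure) :=
  {A | ∃ E : Set W, E.Finite ∧ (∃ m : ℕ, IsMuEnvelope L W G (fun _ => m) E) ∧
    Nonempty (A ≃[L] ↥E)}

end Paper

namespace Paper

section EMFilter

variable {I : Type} [LinearOrder I] {M : Type}

def Ev (U : Ultrafilter M) : List I → ((I → M) → Prop) → (I → M) → Prop
  | [], P, w => P w
  | i :: l, P, w => ∀ᶠ x in (U : Filter M), Ev U l P (Function.update w i x)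

def DepOn (s : Finset I) (P : (I → M) → Prop) : Prop :=
  ∀ w w', (∀ i ∈ s, w i = w' i) → (P w ↔ P w')

theorem ev_and (U : Ultrafilter M) (l : List I) (P Q : (I → M) → Prop) (w : I → M) :
    Ev U l (fun w => P w ∧ Q w) w ↔ Ev U l P w ∧ Ev U l Q w := by
  induction l generalizing w with
  | nil => rfl
  | cons i l ih => simp only [Ev, ih, Filter.eventually_and]

theorem ev_not (U : Ultrafilter M) (l : List I) (P : (I → M) → Prop) (w : I → M) :
    Ev U l (fun w => ¬ P w) w ↔ ¬ Ev U l P w := by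
  induction l generalizing w with
  | nil => rfl
  | cons i l ih => simp only [Ev, ih, Ultrafilter.eventually_not]

theorem ev_false (U : Ultrafilter M) (l : List I) (w : I → M) :
    ¬ Ev U l (fun _ => False) w := by
  induction l generalizing w with
  | nil => exact id
  | cons i l ih => simpa [Ev, ih] using U.neBot.ne

theorem ev_dep (U : Ultrafilter M) (l : List I) (s : Finset I) (P : (I → M) → Prop)
    (hP : DepOn s P) (w w' : I → M) (h : ∀ i ∈ s, i ∉ l → w i = w' i) :
    Ev U l P w ↔ Ev U l P w' := by
  induction l generalizing w w' with
  | nil => exact hP _ _ (fun i hi => h i hi (by simp))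
  | cons j l ih =>
    simp only [Ev]
    apply Filter.eventually_congr
    refine Filter.Eventually.of_forall fun x => ih _ _ fun i hi hil => ?_
    by_cases hij : i = j
    · subst hij; simp
    · simp only [Function.update_of_ne hij]
      exact h i hi (by simp [hij, hil])

theorem ev_filter (U : Ultrafilter M) (l : List I) (s : Finset I) (P : (I → M) → Prop)
    (hP : DepOn s P) (w : I → M) :
    Ev U l P w ↔ Ev U (l.filter (fun i => decide (i ∈ s))) P w := by
  induction l generalizing w with
  | nil => rfl
  | cons j l ih =>
    by_cases hj : j ∈ s
    · rw [List.filter_cons_of_pos (by simpa using hj)]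
      simp only [Ev]
      exact Filter.eventually_congr (Filter.Eventually.of_forall fun x => ih _)
    · rw [List.filter_cons_of_neg (by simpa using hj), ← ih]
      simp only [Ev]
      have : ∀ x, Ev U l P (Function.update w j x) ↔ Ev U l P w := fun x =>
        ev_dep U l s P hP _ _ (fun i hi _ => by
          rw [Function.update_of_ne]; rintro rfl; exact hj hi)
      simp [this]

theorem ev_sort_mono (U : Ultrafilter M) {s t : Finset I} (hst : s ⊆ t) (P : (I → M) → Prop)
    (hP : DepOn s P) (w : I → M) : Ev U t.sort P w ↔ Ev U s.sort P w := by
  rw [ev_filter U _ s P hP]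
  have : (t.sort.filter (fun i => decide (i ∈ s))) = s.sort := by
    apply List.Perm.eq_of_pairwise (le := (· ≤ ·)) (fun a b _ _ => le_antisymm)
      ((Finset.pairwise_sort t _).filter _) (Finset.pairwise_sort s _)
    rw [List.perm_ext_iff_of_nodup ((Finset.sort_nodup t _).filter _) (Finset.sort_nodup s _)]
    intro a
    simp only [List.mem_filter, Finset.mem_sort, decide_eq_true_eq]
    exact ⟨fun h => h.2, fun h => ⟨hst h, h⟩⟩
  rw [this]

/-- The iterated filter. -/
def emFilter (U : Ultrafilter M) : Filter (I → M) where
  sets := {P | ∃ (s : Finset I) (Q : (I → M) → Prop), DepOn s Q ∧ (∀ w, Q w → w ∈ P) ∧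
    ∀ w, Ev U s.sort Q w}
  univ_sets := ⟨∅, fun _ => True, fun _ _ _ => Iff.rfl, fun _ _ => trivial, fun _ => by simp [Ev]⟩
  sets_of_superset := by
    rintro P P' ⟨s, Q, h1, h2, h3⟩ h
    exact ⟨s, Q, h1, fun w hw => h (h2 w hw), h3⟩
  inter_sets := by
    rintro P P' ⟨s, Q, h1, h2, h3⟩ ⟨s', Q', h1', h2', h3'⟩
    refine ⟨s ∪ s', fun w => Q w ∧ Q' w, ?_, fun w hw => ⟨h2 w hw.1, h2' w hw.2⟩, fun w => ?_⟩
    · intro w w' h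
      show (Q w ∧ Q' w) ↔ (Q w' ∧ Q' w')
      rw [h1 w w' (fun i hi => h i (Finset.mem_union_left _ hi)),
        h1' w w' (fun i hi => h i (Finset.mem_union_right _ hi))]
    · rw [ev_and, ev_sort_mono U Finset.subset_union_left Q h1,
        ev_sort_mono U Finset.subset_union_right Q' h1']
      exact ⟨h3 w, h3' w⟩

theorem emFilter_neBot [Nonempty M] (U : Ultrafilter M) : (emFilter U : Filter (I → M)).NeBot := by
  constructor
  intro h
  have : (∅ : Set (I → M)) ∈ emFilter (I := I) U := by rw [h]; trivial
  obtain ⟨s, Q, h1, h2, h3⟩ := this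
  have w : I → M := fun _ => Classical.arbitrary M
  have := h3 w
  have e : Q = fun _ => False := by
    funext w
    exact propext ⟨fun hw => h2 w hw, False.elim⟩
  rw [e] at this
  exact ev_false _ _ _ this

variable [Nonempty M]

noncomputable def emUltra (I : Type) [LinearOrder I] (U : Ultrafilter M) : Ultrafilter (I → M) :=
  haveI := emFilter_neBot (I := I) U
  Ultrafilter.of (emFilter U)

theorem mem_emUltra (U : Ultrafilter M) (s : Finset I) (P : (I → M) → Prop) (hP : DepOn s P)
    (w : I → M) : (∀ᶠ w in (emUltra I U : Filter (I → M)), P w) ↔ Ev U s.sort P w := by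
  haveI := emFilter_neBot (I := I) U
  have key : ∀ P : (I → M) → Prop, DepOn s P → Ev U s.sort P w →
      ∀ᶠ w in (emUltra I U : Filter (I → M)), P w := by
    intro P hP h
    apply Ultrafilter.of_le (emFilter (I := I) U)
    refine ⟨s, P, hP, fun _ h => h, fun w' => ?_⟩
    rwa [ev_dep U _ s P hP w' w (fun i hi hi' => absurd ((Finset.mem_sort _).2 hi) hi')]
  refine ⟨fun h => ?_, key P hP⟩
  by_contra hc
  rw [← ev_not] at hc
  have := key _ (fun w w' hw => not_congr (hP w w' hw)) hc
  rw [Ultrafilter.eventually_not] at this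
  exact this h

theorem ev_map (U : Ultrafilter M) (s : Finset I) (σ : I → I) (hσ : Set.InjOn σ s)
    (P : (I → M) → Prop) (hP : DepOn s P) (l : List I) (hl : ∀ i ∈ l, i ∈ s) (w w' : I → M)
    (h : ∀ i ∈ s, w i = w' (σ i)) :
    Ev U l P w ↔ Ev U (l.map σ) (fun w => P (w ∘ σ)) w' := by
  induction l generalizing w w' with
  | nil => exact hP _ _ h
  | cons j l ih =>
    simp only [Ev, List.map_cons]
    apply Filter.eventually_congr
    refine Filter.Eventually.of_forall fun x => ih (fun i hi => hl i (by simp [hi])) _ _ ?_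
    intro i hi
    by_cases hij : i = j
    · subst hij; simp
    · rw [Function.update_of_ne hij, Function.update_of_ne, h i hi]
      exact fun hh => hij (hσ hi (hl j (by simp)) hh)

theorem em_indisc (U : Ultrafilter M) (s : Finset I) (σ : I → I) (hσ : StrictMonoOn σ s)
    (P : (I → M) → Prop) (hP : DepOn s P) :
    (∀ᶠ w in (emUltra I U : Filter (I → M)), P w) ↔
      ∀ᶠ w in (emUltra I U : Filter (I → M)), P (w ∘ σ) := by
  have w : I → M := fun _ => Classical.arbitrary M
  have hP' : DepOn (s.image σ) (fun w => P (w ∘ σ)) := fun w w' h =>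
    hP _ _ (fun i hi => h _ (Finset.mem_image_of_mem _ hi))
  rw [mem_emUltra U s P hP (w ∘ σ), mem_emUltra U (s.image σ) _ hP' w,
    ev_map U s σ hσ.injOn P hP (s.sort (fun a b => a ≤ b)) (fun i hi => (Finset.mem_sort _).1 hi) (w ∘ σ) w
      (fun _ _ => rfl)]
  have : (s.sort (fun a b => a ≤ b)).map σ = (s.image σ).sort (fun a b => a ≤ b) := by
    have hnd : ((s.sort (fun a b => a ≤ b)).map σ).Nodup := (Finset.sort_nodup s _).map_on
      (fun x hx y hy h => hσ.injOn ((Finset.mem_sort _).1 hx) ((Finset.mem_sort _).1 hy) h)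
    apply List.Perm.eq_of_pairwise (le := (· ≤ ·)) (fun a b _ _ => le_antisymm) _
      (Finset.pairwise_sort _ _)
    · rw [List.perm_ext_iff_of_nodup hnd (Finset.sort_nodup _ _)]
      intro a
      simp
    · rw [List.pairwise_map]
      refine (Finset.pairwise_sort s _).imp_of_mem ?_
      intro a b ha hb hab
      exact hσ.monotoneOn ((Finset.mem_sort _).1 ha) ((Finset.mem_sort _).1 hb) hab
  rw [this]

theorem em_mem (U : Ultrafilter M) (i : I) (S : Set M) (hS : S ∈ U) :
    ∀ᶠ w in (emUltra I U : Filter (I → M)), w i ∈ S := by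
  have w : I → M := fun _ => Classical.arbitrary M
  rw [mem_emUltra U {i} _ (fun w w' h => by rw [h i (by simp)]) w]
  simpa [Ev] using hS

theorem em_ne (U : Ultrafilter M) (hU : ∀ x, {x}ᶜ ∈ U) {i j : I} (hij : i < j) :
    ∀ᶠ w in (emUltra I U : Filter (I → M)), w i ≠ w j := by
  have w : I → M := fun _ => Classical.arbitrary M
  rw [mem_emUltra U {i, j} _ (fun w w' h => by rw [h i (by simp), h j (by simp)]) w]
  rw [Finset.sort_insert _ (by simpa using hij.le) (by simpa using hij.ne)]
  simp only [Finset.sort_singleton, Ev, Function.update_self, Function.update_of_ne hij.ne]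
  refine Filter.Eventually.of_forall fun x => ?_
  filter_upwards [hU x] with y hy
  exact fun h => hy h.symm

end EMFilter

end Paper

namespace Paper

section Ultrapower

abbrev UP {W : Type} (V : Ultrafilter W) (M : Type) : Type := (V : Filter W).Product (fun _ => M)

def up {W : Type} (V : Ultrafilter W) {M : Type} (f : W → M) : UP V M :=
  @Quotient.mk' (W → M) ((V : Filter W).productSetoid (fun _ => M)) f

variable {W : Type} (V : Ultrafilter W) {M : Type}

theorem up_eq {f g : W → M} : up V f = up V g ↔ ∀ᶠ w in (V : Filter W), f w = g w :=
  @Quotient.eq' _ ((V : Filter W).productSetoid (fun _ => M)) f g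

theorem up_surj (x : UP V M) : ∃ f, up V f = x := by
  induction x using Quotient.inductionOn' with
  | h f => exact ⟨f, rfl⟩

variable {L : FirstOrder.Language.{0, 0}} [L.Structure M] [Nonempty M]

theorem up_realize {β : Type} (φ : L.Formula β) (x : β → W → M) :
    φ.Realize (fun i => up V (x i)) ↔ ∀ᶠ w in (V : Filter W), φ.Realize (fun i => x i w) :=
  Ultraproduct.realize_formula_cast (u := V) (M := fun _ => M) φ x

theorem up_equiv : UP V M ≅[L] M := by
  rw [elementarilyEquivalent_iff]
  intro φ
  refine (Ultraproduct.sentence_realize (u := V) (M := fun _ => M) φ).trans ?_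
  simp

theorem up_diag {β : Type} (φ : L.Formula β) (x : β → M) :
    φ.Realize (fun i => up V (fun _ => x i)) ↔ φ.Realize x := by
  rw [up_realize]
  simp

end Ultrapower

section General

variable {L : FirstOrder.Language.{0, 0}} {M : Type} [L.Structure M]

theorem realize_equiv {N : Type} [L.Structure N] (e : M ≃[L] N) {β : Type} (φ : L.Formula β)
    (v : β → M) : φ.Realize (fun i => e (v i)) ↔ φ.Realize v :=
  StrongHomClass.realize_formula e φ (v := v)

theorem cat_iso {κ : Cardinal.{0}} (h : κ.Categorical (L.completeTheory M)) {N N' : Type}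
    [L.Structure N] [L.Structure N'] [Nonempty N] [Nonempty N'] (hN : N ≅[L] M) (hN' : N' ≅[L] M)
    (c : Cardinal.mk N = κ) (c' : Cardinal.mk N' = κ) : Nonempty (N ≃[L] N') := by
  have m : N ⊨ L.completeTheory M := by
    rw [← hN]; infer_instance
  have m' : N' ⊨ L.completeTheory M := by
    rw [← hN']; infer_instance
  exact h (Theory.ModelType.of _ N) (Theory.ModelType.of _ N') c c'

theorem definable_iff_fin {α : Type} {A : Set M} {s : Set (α → M)} :
    A.Definable L s ↔ ∃ (n : ℕ) (φ : L.Formula (Fin n ⊕ α)) (a : Fin n → M),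
      (∀ i, a i ∈ A) ∧ ∀ v, v ∈ s ↔ φ.Realize (Sum.elim a v) := by
  constructor
  · intro h
    rw [Set.definable_iff_finitely_definable] at h
    obtain ⟨A₀, h0, h1⟩ := h
    rw [Set.definable_iff_exists_formula_sum] at h1
    obtain ⟨φ, rfl⟩ := h1
    let e := A₀.equivFin
    refine ⟨A₀.card, φ.relabel (Sum.map (fun x : (A₀ : Set M) => e x) id), fun i => (e.symm i : M),
      fun i => h0 (e.symm i).2, fun v => ?_⟩
    rw [Formula.realize_relabel]
    simp only [Set.mem_ofPred_eq]
    have : (Sum.elim (fun i => ((e.symm i : A₀) : M)) v ∘ Sum.map (fun x : (A₀ : Set M) => e x) id)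
        = Sum.elim (fun x : (A₀ : Set M) => (x : M)) v := by
      funext x
      rcases x with x | x
      · simp
      · rfl
    rw [this]
  · rintro ⟨n, φ, a, ha, hs⟩
    rw [Set.definable_iff_exists_formula_sum]
    refine ⟨φ.relabel (Sum.map (fun i => (⟨a i, ha i⟩ : A)) id), ?_⟩
    ext v
    rw [hs, Set.mem_ofPred_eq, Formula.realize_relabel]
    have : (Sum.elim (fun x : A => (x : M)) v ∘ Sum.map (fun i => (⟨a i, ha i⟩ : A)) id)
        = Sum.elim a v := by
      funext x
      rcases x with x | x <;> rfl
    rw [this]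

theorem exists_elem {A : Set M} [L.IsRelational] (h : L.MeetsDefinable A) :
    ∃ S : L.ElementarySubstructure M, (S : Set M) = A := by
  refine ⟨⟨_, h.isElementary_closure⟩, ?_⟩
  exact h.closure_eq_self

theorem elem_realize (S : L.ElementarySubstructure M) {β : Type} (φ : L.Formula β) (v : β → S) :
    φ.Realize (fun i => (v i : M)) ↔ φ.Realize v :=
  S.subtype.map_formula φ v

end General

end Paper

namespace Paper

def Few (L : FirstOrder.Language.{0, 0}) (N : Type) [L.Structure N] : Prop :=
  ∀ (a : ℕ → N) (m : ℕ), ∃ key : (Fin m → N) → ℕ, ∀ v v', key v = key v' →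
    ∀ (n : ℕ) (φ : L.Formula (Fin n ⊕ Fin m)) (g : Fin n → ℕ),
      φ.Realize (Sum.elim (a ∘ g) v) ↔ φ.Realize (Sum.elim (a ∘ g) v')

theorem Few.of_equiv {L : FirstOrder.Language.{0, 0}} {N N' : Type} [L.Structure N]
    [L.Structure N'] (h : Few L N) (e : N' ≃[L] N) : Few L N' := by
  intro a m
  obtain ⟨key, hk⟩ := h (e ∘ a) m
  refine ⟨fun v => key (e ∘ v), fun v v' hv n φ g => ?_⟩
  have := hk _ _ hv n φ g
  have aux : ∀ v : Fin m → N', Sum.elim ((e ∘ a) ∘ g) (e ∘ v) =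
      fun i => e (Sum.elim (a ∘ g) v i) := by
    intro v; funext x; rcases x with x | x <;> rfl
  rw [aux, aux, realize_equiv, realize_equiv] at this
  exact this

theorem exists_cut {I : Type} [LinearOrder I] [WellFoundedLT I] (I₀ : Set I) (h : I₀.Countable) :
    ∃ c : I → ℕ, ∀ i i', c i = c i' → ∀ j ∈ I₀, (i ≤ j ↔ i' ≤ j) ∧ (i < j ↔ i' < j) := by
  classical
  have : Countable I₀ := h.to_subtype
  have aux : ∀ r : I → I → Prop, (∀ i j j', r i j → j ≤ j' → r i j') →
      ∃ c : I → Option I₀, ∀ i i', c i = c i' → ∀ j ∈ I₀, (r i j → r i' j) := by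
    intro r hr
    refine ⟨fun i => if hi : ∃ j : I₀, r i j then
      some (wellFounded_lt.min {j : I₀ | r i j} hi) else none, fun i i' hc j hj hij => ?_⟩
    have hi : ∃ j : I₀, r i j := ⟨⟨j, hj⟩, hij⟩
    beta_reduce at hc
    rw [dif_pos hi] at hc
    by_cases hi' : ∃ j : I₀, r i' j
    · rw [dif_pos hi', Option.some_inj] at hc
      have h1 : r i' _ := wellFounded_lt.min_mem {j : I₀ | r i' j} hi'
      rw [← hc] at h1
      refine hr _ _ _ h1 ?_
      have := wellFounded_lt.not_lt_min {j : I₀ | r i j} (x := ⟨j, hj⟩) hij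
      exact not_lt.1 this
    · rw [dif_neg hi'] at hc
      exact absurd hc (by simp)
  obtain ⟨c1, h1⟩ := aux (· ≤ ·) (fun i j j' => le_trans)
  obtain ⟨c2, h2⟩ := aux (· < ·) (fun i j j' => lt_of_lt_of_le)
  obtain ⟨f, hf⟩ := exists_injective_nat (Option I₀ × Option I₀)
  refine ⟨fun i => f (c1 i, c2 i), fun i i' hc j hj => ?_⟩
  have := hf hc
  simp only [Prod.mk.injEq] at this
  exact ⟨⟨h1 _ _ this.1 j hj, h1 _ _ this.1.symm j hj⟩,
    ⟨h2 _ _ this.2 j hj, h2 _ _ this.2.symm j hj⟩⟩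

theorem exists_relabel {L : FirstOrder.Language.{0, 0}} {I J : Type} [DecidableEq I] (f : J → I)
    (t : L.Term I) (h : ∀ i ∈ t.varFinset, i ∈ Set.range f) :
    ∃ t' : L.Term J, t'.relabel f = t := by
  induction t with
  | var i =>
    obtain ⟨j, hj⟩ := h i (by simp [Term.varFinset])
    exact ⟨Term.var j, by simp [Term.relabel, hj]⟩
  | func F ts ih =>
    choose t' ht' using fun l => ih l (fun i hi => h i (by
      simp only [Term.varFinset, Finset.mem_biUnion, Finset.mem_univ, true_and]
      exact ⟨l, hi⟩))
    exact ⟨Term.func F t', by simp [Term.relabel, ht']⟩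

theorem term_congr {L : FirstOrder.Language.{0, 0}} {I M : Type} [L.Structure M] [DecidableEq I]
    (t : L.Term I) (w w' : I → M) (h : ∀ i ∈ t.varFinset, w i = w' i) :
    t.realize w = t.realize w' := by
  induction t with
  | var i => exact h i (by simp [Term.varFinset])
  | func F ts ih =>
    simp only [Term.realize]
    congr 1
    funext l
    exact ih l (fun i hi => h i (by
      simp only [Term.varFinset, Finset.mem_biUnion, Finset.mem_univ, true_and]
      exact ⟨l, hi⟩))

section EM

variable {L : FirstOrder.Language.{0, 0}} [L.IsRelational] {M : Type} [L.Structure M] [Nonempty M]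
  {I : Type} [LinearOrder I]

/-- The Skolem hull. -/
def hull (U : Ultrafilter M) : Set (UP (emUltra I U) M) :=
  Set.range (fun t : L.skolem₁.Term I => up (emUltra I U) (fun w => t.realize w))

theorem hull_elem (U : Ultrafilter M) : ∃ S : L.ElementarySubstructure (UP (emUltra I U) M),
    (S : Set _) = hull (L := L) (I := I) U := by
  let V := emUltra I U
  let S : L.Substructure (UP V M) := ⟨hull (L := L) (I := I) U, fun {n} f => isEmptyElim f⟩
  refine ⟨⟨S, S.isElementary_of_exists ?_⟩, rfl⟩
  intro n φ x a ha
  choose t ht using fun i => (x i).2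
  have ht' : ((↑) ∘ x : Fin n → UP V M) = fun i => up V (fun w => (t i).realize w) := by
    funext i; exact (ht i).symm
  let T : L.skolem₁.Term I := Term.func (L := L.skolem₁) (φ : L.skolem₁.Functions n) t
  refine ⟨⟨up V (fun w => T.realize w), T, rfl⟩, ?_⟩
  obtain ⟨f, rfl⟩ := up_surj V a
  have key : ∀ g : (I → M) → M, φ.Realize default (Fin.snoc ((↑) ∘ x) (up V g) : _ → UP V M) ↔
      ∀ᶠ w in (V : Filter _), φ.Realize default (Fin.snoc (fun i => (t i).realize w) (g w) : _ → M) := by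
    intro g
    rw [ht']
    have e := Ultraproduct.boundedFormula_realize_cast (u := V) (M := fun _ => M) φ
      (fun i => Empty.elim i) (Fin.snoc (α := fun _ => (I → M) → M) (fun i w => (t i).realize w) g)
    have e1 : (Fin.snoc (fun i => up V (fun w => (t i).realize w)) (up V g) : Fin (n+1) → UP V M) =
        fun i => up V (Fin.snoc (α := fun _ => (I → M) → M) (fun i w => (t i).realize w) g i) := by
      funext i
      induction i using Fin.lastCases with
      | last => simp
      | cast i => simp
    have e2 : ∀ w, (Fin.snoc (fun i => (t i).realize w) (g w) : Fin (n+1) → M) =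
        fun i => (Fin.snoc (α := fun _ => (I → M) → M) (fun i w => (t i).realize w) g i) w := by
      intro w
      funext i
      induction i using Fin.lastCases with
      | last => simp
      | cast i => simp
    rw [e1]
    simp only [e2]
    rw [Subsingleton.elim (default : Empty → UP V M) (fun i => up V (Empty.elim i)),
      Subsingleton.elim (default : Empty → M) (fun i => (Empty.elim i : M))]
    have e3 : ∀ w : I → M, (fun i : Empty => (Empty.elim i : M)) =
      (fun i : Empty => (Empty.elim i : (I → M) → M) w) := fun w => Subsingleton.elim _ _
    rw [e3 (Classical.arbitrary _)]
    refine e.trans ?_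
    apply Filter.eventually_congr
    refine Filter.Eventually.of_forall fun w => ?_
    rw [Subsingleton.elim (fun i : Empty => (Empty.elim i : (I → M) → M) w)]
  rw [key] at ha ⊢
  filter_upwards [ha] with w hw
  exact Classical.epsilon_spec (p := fun a => φ.Realize default
    (Fin.snoc (fun i => (t i).realize w) a : _ → M)) ⟨_, hw⟩

end EM

end Paper

namespace Paper

section EM

variable {L : FirstOrder.Language.{0, 0}} {M : Type} [L.Structure M] [Nonempty M]
  {I : Type} [LinearOrder I] [WellFoundedLT I]

theorem countable_skolem [Countable L.Symbols] : Countable (Σ l, L.skolem₁.Functions l) := by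
  have : Function.Injective (fun x : (Σ l, L.skolem₁.Functions l) =>
      (⟨x.1 + 1, x.2⟩ : Σ n, L.BoundedFormula Empty n)) := by
    rintro ⟨a, b⟩ ⟨a', b'⟩ h
    simp only [Sigma.mk.injEq, Nat.add_right_cancel_iff] at h
    obtain ⟨rfl, h⟩ := h
    simpa using h
  exact this.countable

theorem hull_few [Countable L.Symbols] (U : Ultrafilter M) (S : L.ElementarySubstructure (UP (emUltra I U) M))
    (hS : (S : Set _) = hull (L := L) (I := I) U) : Few L S := by
  classical
  intro a m
  have := countable_skolem (L := L)
  have hmem : ∀ x : S, ∃ t : L.skolem₁.Term I, up (emUltra I U) (fun w => t.realize w) = x := by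
    intro x
    have : (x : UP (emUltra I U) M) ∈ hull (L := L) (I := I) U := by rw [← hS]; exact x.2
    exact this
  choose tm htm using hmem
  let I₀ : Set I := ⋃ n, ((tm (a n)).varFinset : Set I)
  have hI₀ : I₀.Countable := Set.countable_iUnion fun n => Finset.countable_toSet _
  obtain ⟨cut, hcut⟩ := exists_cut I₀ hI₀
  let sv : (Fin m → S) → Finset I := fun v => Finset.univ.biUnion fun l => (tm (v l)).varFinset
  let f : ∀ v : Fin m → S, Fin (sv v).card ↪o I := fun v => (sv v).orderEmbOfFin rfl
  have hf : ∀ v i, i ∈ sv v ↔ i ∈ Set.range (f v) := fun v i => by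
    rw [Finset.range_orderEmbOfFin]; rfl
  have hr : ∀ v l, ∃ t' : L.skolem₁.Term (Fin (sv v).card), t'.relabel (f v) = tm (v l) := by
    intro v l
    apply exists_relabel
    intro i hi
    rw [← hf]
    exact Finset.mem_biUnion.2 ⟨l, Finset.mem_univ _, hi⟩
  choose t' ht' using hr
  let Key := Σ k : ℕ, (Fin m → L.skolem₁.Term (Fin k)) × (Fin k → ℕ)
  have : Countable Key := inferInstance
  let key : (Fin m → S) → Key := fun v => ⟨(sv v).card, t' v, fun i => cut (f v i)⟩
  obtain ⟨enc, henc⟩ := exists_injective_nat Key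
  refine ⟨fun v => enc (key v), fun v v' hv n φ g => ?_⟩
  have hk := henc hv
  -- extract
  obtain ⟨k, fv, fv', T, hfv, hfv', hT, hT', hc⟩ : ∃ (k : ℕ) (fv fv' : Fin k → I)
      (T : Fin m → L.skolem₁.Term (Fin k)), (StrictMono fv ∧ ∀ i, i ∈ sv v ↔ i ∈ Set.range fv) ∧
      StrictMono fv' ∧ (∀ l, (T l).relabel fv = tm (v l)) ∧ (∀ l, (T l).relabel fv' = tm (v' l)) ∧
      ∀ i, cut (fv i) = cut (fv' i) := by
    have : ∀ (K : Key), K = key v' → ∃ (fv' : Fin K.1 → I), StrictMono fv' ∧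
        (∀ l, (K.2.1 l).relabel fv' = tm (v' l)) ∧ ∀ i, K.2.2 i = cut (fv' i) := by
      rintro K rfl
      exact ⟨f v', (f v').strictMono, ht' v', fun i => rfl⟩
    obtain ⟨fv', h1, h2, h3⟩ := this _ hk
    exact ⟨_, f v, fv', t' v, ⟨(f v).strictMono, hf v⟩, h1, ht' v, h2, h3⟩
  -- cut consequences
  have hc0 : ∀ i, fv i ∈ I₀ → fv' i = fv i := by
    intro i hi
    have := hcut _ _ (hc i) _ hi
    exact le_antisymm (this.1.1 le_rfl) (not_lt.1 (fun h => lt_irrefl _ (this.2.2 h)))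
  let σ : I → I := fun x => if hx : ∃ i, fv i = x then fv' hx.choose else x
  have σ1 : ∀ i, σ (fv i) = fv' i := by
    intro i
    have hx : ∃ j, fv j = fv i := ⟨i, rfl⟩
    simp only [σ, dif_pos hx]
    congr 1
    exact hfv.1.injective hx.choose_spec
  have σ0 : ∀ x ∈ I₀, σ x = x := by
    intro x hx
    by_cases h : ∃ i, fv i = x
    · obtain ⟨i, rfl⟩ := h
      rw [σ1, hc0 i hx]
    · simp only [σ, dif_neg h]
  let s : Finset I := (Finset.univ.biUnion fun i : Fin n => (tm (a (g i))).varFinset) ∪ sv v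
  have hs : ∀ x ∈ s, x ∈ I₀ ∨ ∃ i, fv i = x := by
    intro x hx
    rcases Finset.mem_union.1 hx with hx | hx
    · left
      obtain ⟨i, _, hi⟩ := Finset.mem_biUnion.1 hx
      exact Set.mem_iUnion.2 ⟨g i, hi⟩
    · right
      exact (hfv.2 x).1 hx
  have hσ : StrictMonoOn σ s := by
    intro x hx y hy hxy
    rcases hs x hx with hx | ⟨i, rfl⟩ <;> rcases hs y hy with hy | ⟨j, rfl⟩
    · rw [σ0 x hx, σ0 y hy]; exact hxy
    · rw [σ0 x hx, σ1]
      exact lt_of_not_ge (fun h => not_le_of_gt hxy ((hcut _ _ (hc j) x hx).1.2 h))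
    · rw [σ0 y hy, σ1]
      exact (hcut _ _ (hc i) y hy).2.1 hxy
    · rw [σ1, σ1]
      exact hfv' (hfv.1.lt_iff_lt.1 hxy)
  let X : (Fin m → S) → Fin n ⊕ Fin m → L.skolem₁.Term I := fun v => Sum.elim (fun i => tm (a (g i)))
    (fun l => tm (v l))
  let P : (Fin m → S) → (I → M) → Prop := fun v w => φ.Realize (fun i => (X v i).realize w)
  have hX : ∀ v, φ.Realize (Sum.elim (a ∘ g) v) ↔ ∀ᶠ w in (emUltra I U : Filter (I → M)), P v w := by
    intro v
    rw [← elem_realize, ← up_realize]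
    have : (fun i => up (emUltra I U) (fun w => (X v i).realize w)) =
      fun i => ((Sum.elim (a ∘ g) v i : S) : UP (emUltra I U) M) := by
      funext i
      rcases i with i | i
      · exact htm _
      · exact htm _
    rw [this]
  rw [hX v, hX v', em_indisc U s σ hσ (P v)]
  · apply Filter.eventually_congr
    refine Filter.Eventually.of_forall fun w => ?_
    have : (fun i => (X v i).realize (w ∘ σ)) = fun i => (X v' i).realize w := by
      funext i
      rcases i with i | i
      · apply term_congr
        intro x hx
        simp only [Function.comp]
        rw [σ0 x (Set.mem_iUnion.2 ⟨g i, hx⟩)]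
      · simp only [X, Sum.elim_inr]
        rw [← hT, ← hT', Term.realize_relabel, Term.realize_relabel]
        congr 1
        funext j
        simp only [Function.comp, σ1]
    simp only [P, this]
  · intro w w' hw
    have : (fun i => (X v i).realize w) = fun i => (X v i).realize w' := by
      funext i
      rcases i with i | i
      · apply term_congr
        intro x hx
        exact hw x (Finset.mem_union_left _ (Finset.mem_biUnion.2 ⟨i, Finset.mem_univ _, hx⟩))
      · apply term_congr
        intro x hx
        exact hw x (Finset.mem_union_right _ (Finset.mem_biUnion.2 ⟨i, Finset.mem_univ _, hx⟩))
    simp only [P, this]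

theorem up_var_inj (U : Ultrafilter M) (hU : ∀ x, {x}ᶜ ∈ U) :
    Function.Injective (fun i : I => up (emUltra I U) (fun w => w i)) := by
  intro i j h
  by_contra hij
  rcases lt_or_gt_of_ne hij with hl | hl
  · have := (em_ne U hU hl).and ((up_eq _).1 h)
    obtain ⟨w, h1, h2⟩ := this.exists
    exact h1 h2
  · have := (em_ne U hU hl).and ((up_eq _).1 h)
    obtain ⟨w, h1, h2⟩ := this.exists
    exact h1 h2.symm

theorem hull_card [Countable L.Symbols] (hI : Cardinal.mk I = Cardinal.aleph 1) (U : Ultrafilter M) (hU : ∀ x, {x}ᶜ ∈ U) :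
    Cardinal.mk (hull (L := L) (I := I) U) = Cardinal.aleph 1 := by
  have := countable_skolem (L := L)
  apply le_antisymm
  · refine Cardinal.mk_range_le.trans (Term.card_le.trans ?_)
    apply max_le (Cardinal.aleph0_le_aleph 1)
    rw [Cardinal.mk_sum, hI]
    simp only [Cardinal.lift_id]
    apply Cardinal.add_le_of_le (Cardinal.aleph0_le_aleph 1) le_rfl
    exact Cardinal.mk_le_aleph0.trans (Cardinal.aleph0_le_aleph 1)
  · rw [← hI]
    refine Cardinal.mk_le_of_injective (f := fun i : I => ⟨up (emUltra I U) (fun w => w i),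
      Term.var i, rfl⟩) ?_
    intro i j h
    exact up_var_inj U hU (congrArg Subtype.val h)

end EM

/-- index order of size aleph one -/
abbrev W1 : Type := (Cardinal.aleph.{0} 1).ord.ToType

theorem mk_W1 : Cardinal.mk W1 = Cardinal.aleph 1 := Cardinal.mk_ord_toType _

theorem exists_nonprincipal {M : Type} (S : Set M) (hS : S.Infinite) : ∃ U : Ultrafilter M, S ∈ U ∧ ∀ x, {x}ᶜ ∈ U := by
  have : (Filter.cofinite ⊓ Filter.principal S).NeBot := by
    rw [Filter.cofinite_inf_principal_neBot_iff]; exact hS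
  refine ⟨Ultrafilter.of (Filter.cofinite ⊓ Filter.principal S), ?_, fun x => ?_⟩
  · exact Ultrafilter.of_le _ (Filter.mem_inf_of_right (Filter.mem_principal_self S))
  · exact Ultrafilter.of_le _ (Filter.mem_inf_of_left (by simp))

theorem few_of_card {L : FirstOrder.Language.{0, 0}} [L.IsRelational] [Countable L.Symbols]
    {M : Type} [L.Structure M] [Infinite M]
    (hc : (Cardinal.aleph.{0} 1).Categorical (L.completeTheory M)) {N : Type} [L.Structure N]
    (hN : N ≅[L] M) (hcard : Cardinal.mk N = Cardinal.aleph 1) : Few L N := by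
  obtain ⟨U, -, hU⟩ := exists_nonprincipal (Set.univ : Set M) Set.infinite_univ
  obtain ⟨S, hS⟩ := hull_elem (L := L) (I := W1) U
  have h1 : Cardinal.mk S = Cardinal.aleph 1 := by
    refine Eq.trans ?_ (hull_card (L := L) mk_W1 U hU)
    rw [← hS]
    rfl
  have : Nonempty N := by
    rw [← Cardinal.mk_ne_zero_iff, hcard]
    exact (Cardinal.aleph_pos 1).ne'
  have : Nonempty S := by
    rw [← Cardinal.mk_ne_zero_iff, h1]
    exact (Cardinal.aleph_pos 1).ne'
  have h2 : S ≅[L] M := (S.elementarilyEquivalent).trans (up_equiv _)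
  obtain ⟨e⟩ := cat_iso hc hN h2 hcard h1
  exact (hull_few U S hS).of_equiv e

end Paper

namespace Paper

section Stab

variable {L : FirstOrder.Language.{0, 0}} [L.IsRelational] [Countable L.Symbols]
    {M : Type} [L.Structure M] [Infinite M]

theorem lang_card_le (κ : Cardinal.{0}) (h : Cardinal.aleph0 ≤ κ) : L.card ≤ κ := by
  refine le_trans ?_ h
  have : Countable L.Symbols := inferInstance
  exact Cardinal.mk_le_aleph0

theorem ls {N : Type} [L.Structure N] (s : Set N) (κ : Cardinal.{0}) (h : Cardinal.aleph0 ≤ κ)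
    (hs : Cardinal.mk s ≤ κ) (hb : κ ≤ Cardinal.mk N) :
    ∃ S : L.ElementarySubstructure N, s ⊆ S ∧ Cardinal.mk S = κ := by
  have : Nonempty N := by
    rw [← Cardinal.mk_ne_zero_iff]
    exact ((Cardinal.aleph0_pos.trans_le h).trans_le hb).ne'
  obtain ⟨S, hsS, hS⟩ := exists_elementarySubstructure_card_eq L s κ
    h (by simpa using hs)
    (by simpa using lang_card_le (L := L) _ h) (by simpa using hb)
  exact ⟨S, hsS, by simpa using hS⟩

theorem stab (hc : (Cardinal.aleph.{0} 1).Categorical (L.completeTheory M)) {N : Type}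
    [L.Structure N] [Nonempty N] (hN : N ≅[L] M) (m : ℕ) {ι : Type} [Countable ι]
    (P : ι → Set (Fin m → N)) (hP : ∀ j, (Set.univ : Set N).Definable L (P j)) :
    {t : Set ι | ∃ U : Ultrafilter (Fin m → N), t = {j | P j ∈ U}}.Countable := by
  classical
  by_contra hcon
  have h1 : Cardinal.mk W1 ≤ Cardinal.mk
      {t : Set ι | ∃ U : Ultrafilter (Fin m → N), t = {j | P j ∈ U}} := by
    rw [mk_W1, ← not_lt]
    intro h
    apply hcon
    rw [← Cardinal.succ_aleph0, Order.lt_succ_iff] at h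
    exact Cardinal.le_aleph0_iff_set_countable.1 h
  obtain ⟨⟨τ, hτ⟩⟩ := h1
  choose u hu using fun i => (τ i).2
  have huinj : ∀ i i', (∀ j, P j ∈ u i ↔ P j ∈ u i') → i = i' := by
    intro i i' h
    apply hτ
    apply Subtype.ext
    rw [hu, hu]
    ext j
    exact h j
  let V : Ultrafilter (W1 → Fin m → N) := Ultrafilter.of (Filter.pi fun i => (u i : Filter _))
  have hV : ∀ i (S : Set (Fin m → N)), (∀ᶠ w in (V : Filter (W1 → Fin m → N)), w i ∈ S) ↔ S ∈ u i := by
    have key : ∀ i (S : Set (Fin m → N)), S ∈ u i → (∀ᶠ w in (V : Filter (W1 → Fin m → N)), w i ∈ S) := by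
      intro i S hS
      have h1 : Filter.Tendsto (Function.eval i) (V : Filter (W1 → Fin m → N))
          (u i : Filter (Fin m → N)) :=
        (Filter.tendsto_eval_pi (fun i => (u i : Filter (Fin m → N))) i).mono_left
          (Ultrafilter.of_le _)
      exact h1 hS
    refine fun i S => ⟨fun h => ?_, key i S⟩
    by_contra hn
    rw [← Ultrafilter.compl_mem_iff_notMem] at hn
    obtain ⟨w, h1, h2⟩ := (h.and (key i _ hn)).exists
    exact h2 h1
  choose n φ a _ hφ using fun j => (definable_iff_fin).1 (hP j)
  obtain ⟨enc, henc⟩ := exists_injective_nat (Σ j, Fin (n j))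
  let f : ℕ → N := Function.extend enc (fun x => a x.1 x.2) (fun _ => Classical.arbitrary N)
  have hf : ∀ j i, f (enc ⟨j, i⟩) = a j i := fun j i => henc.extend_apply _ _ ⟨j, i⟩
  let c : W1 → Fin m → UP V N := fun i l => up V (fun w => w i l)
  let d : ℕ → UP V N := fun k => up V (fun _ => f k)
  have hreal : ∀ i j, (φ j).Realize (Sum.elim (d ∘ fun x => enc ⟨j, x⟩) (c i)) ↔ P j ∈ u i := by
    intro i j
    rw [← hV]
    have := up_realize V (φ j) (Sum.elim (fun x _ => f (enc ⟨j, x⟩)) (fun l w => w i l))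
    have e : (fun x => up V ((Sum.elim (fun x _ => f (enc ⟨j, x⟩)) (fun l w => w i l) :
        Fin (n j) ⊕ Fin m → (W1 → Fin m → N) → N) x)) = Sum.elim (d ∘ fun x => enc ⟨j, x⟩) (c i) := by
      funext x; rcases x with x | x <;> rfl
    rw [← e, this]
    apply Filter.eventually_congr
    refine Filter.Eventually.of_forall fun w => ?_
    rw [hφ]
    have e : (fun x => (Sum.elim (fun x _ => f (enc ⟨j, x⟩)) (fun l w => w i l) :
        Fin (n j) ⊕ Fin m → (W1 → Fin m → N) → N) x w) = Sum.elim (a j) (w i) := by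
      funext x; rcases x with x | x
      · exact hf j x
      · rfl
    rw [e]
  have hcinj : Function.Injective c := by
    intro i i' h
    apply huinj
    intro j
    rw [← hreal, ← hreal, h]
  have hW1 : ¬ Countable W1 := by
    rw [← Cardinal.mk_le_aleph0_iff, mk_W1, not_le]
    exact Cardinal.aleph0_lt_aleph_one
  have hbig : Cardinal.aleph 1 ≤ Cardinal.mk (UP V N) := by
    rw [← not_lt]
    intro h
    rw [← Cardinal.succ_aleph0, Order.lt_succ_iff, Cardinal.mk_le_aleph0_iff] at h
    exact hW1 hcinj.countable
  let s : Set (UP V N) := (Set.range fun x : W1 × Fin m => c x.1 x.2) ∪ Set.range d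
  have hs : Cardinal.mk s ≤ Cardinal.aleph 1 := by
    refine (Cardinal.mk_union_le _ _).trans ?_
    apply Cardinal.add_le_of_le (Cardinal.aleph0_le_aleph 1)
    · refine Cardinal.mk_range_le.trans ?_
      rw [Cardinal.mk_prod, Cardinal.lift_id, Cardinal.lift_id, mk_W1]
      apply Cardinal.mul_le_of_le (Cardinal.aleph0_le_aleph 1) le_rfl
      exact Cardinal.mk_le_aleph0.trans (Cardinal.aleph0_le_aleph 1)
    · refine Cardinal.mk_range_le.trans ?_
      exact Cardinal.mk_le_aleph0.trans (Cardinal.aleph0_le_aleph 1)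
  obtain ⟨S, hsS, hS'⟩ := ls (L := L) s (Cardinal.aleph.{0} 1)
    (Cardinal.aleph0_le_aleph 1) hs hbig
  have few : Few L S := few_of_card hc
    ((S.elementarilyEquivalent.trans (up_equiv V)).trans hN) hS'
  have hcS : ∀ i l, c i l ∈ S := fun i l => hsS (Or.inl ⟨(i, l), rfl⟩)
  have hdS : ∀ k, d k ∈ S := fun k => hsS (Or.inr ⟨k, rfl⟩)
  obtain ⟨key, hk⟩ := few (fun k => ⟨d k, hdS k⟩) m
  have : Function.Injective fun i : W1 => key (fun l => ⟨c i l, hcS i l⟩) := by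
    intro i i' h
    apply huinj
    intro j
    rw [← hreal, ← hreal]
    have := hk _ _ h _ (φ j) (fun x => enc ⟨j, x⟩)
    rw [← elem_realize, ← elem_realize] at this
    have aux : ∀ i, (fun x => ((Sum.elim ((fun k => (⟨d k, hdS k⟩ : S)) ∘ fun x => enc ⟨j, x⟩)
        (fun l => (⟨c i l, hcS i l⟩ : S)) x : S) : UP V N)) =
        Sum.elim (d ∘ fun x => enc ⟨j, x⟩) (c i) := by
      intro i
      funext x; rcases x with x | x <;> rfl
    rw [aux, aux] at this
    exact this
  exact hW1 this.countable

theorem no_indep (hc : (Cardinal.aleph.{0} 1).Categorical (L.completeTheory M)) {N : Type}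
    [L.Structure N] [Nonempty N] (hN : N ≅[L] M) (m : ℕ)
    (P : ℕ → Set (Fin m → N)) (hP : ∀ j, (Set.univ : Set N).Definable L (P j))
    (h : ∀ (s : Set ℕ) (k : ℕ), ∃ v, ∀ i < k, (v ∈ P i ↔ i ∈ s)) : False := by
  have h1 := stab hc hN m P hP
  have h2 : {t : Set ℕ | ∃ U : Ultrafilter (Fin m → N), t = {j | P j ∈ U}} = Set.univ := by
    rw [Set.eq_univ_iff_forall]
    intro s
    let F : ℕ → Set (Fin m → N) := fun k => {v | ∀ i < k, (v ∈ P i ↔ i ∈ s)}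
    have hne : (⨅ k, Filter.principal (F k)).NeBot := by
      apply Filter.iInf_neBot_of_directed'
      · intro k k'
        refine ⟨max k k', ?_, ?_⟩
        · refine Filter.principal_mono.2 ?_
          exact fun v hv i hi => hv i (lt_of_lt_of_le hi (le_max_left _ _))
        · refine Filter.principal_mono.2 ?_
          exact fun v hv i hi => hv i (lt_of_lt_of_le hi (le_max_right _ _))
      · intro k
        rw [Filter.principal_neBot_iff]
        exact h s k
    refine ⟨Ultrafilter.of (⨅ k, Filter.principal (F k)), ?_⟩
    have hF : ∀ k, F k ∈ Ultrafilter.of (⨅ k, Filter.principal (F k)) := fun k =>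
      Ultrafilter.of_le _ (Filter.mem_iInf_of_mem k (Filter.mem_principal_self _))
    ext j
    constructor
    · intro hj
      exact Filter.mem_of_superset (hF (j+1)) fun v hv => (hv j (by simp)).2 hj
    · intro hj
      obtain ⟨v, h1, h2⟩ := Ultrafilter.nonempty_of_mem (Filter.inter_mem hj (hF (j+1)))
      exact (h2 j (by simp)).1 h1
  rw [h2, Set.countable_univ_iff] at h1
  obtain ⟨f, hf⟩ := exists_injective_nat (Set ℕ)
  exact Function.cantor_injective f hf

theorem dens (hc : (Cardinal.aleph.{0} 1).Categorical (L.completeTheory M)) {N : Type}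
    [L.Structure N] [Nonempty N] (hN : N ≅[L] M) {m : ℕ} (A : Set N) (Φ : Set (Fin m → N))
    (hΦ : A.Definable L Φ) (hne : Φ.Nonempty) :
    ∃ Ψ ⊆ Φ, A.Definable L Ψ ∧ Ψ.Nonempty ∧ ∀ s, A.Definable L s → Ψ ⊆ s ∨ Disjoint Ψ s := by
  by_contra hcon
  push Not at hcon
  let T := {Ψ : Set (Fin m → N) // Ψ ⊆ Φ ∧ A.Definable L Ψ ∧ Ψ.Nonempty}
  have hsp : ∀ Ψ : T, ∃ s, A.Definable L s ∧ ¬ Ψ.1 ⊆ s ∧ ¬ Disjoint Ψ.1 s :=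
    fun Ψ => hcon Ψ.1 Ψ.2.1 Ψ.2.2.1 Ψ.2.2.2
  choose sp h1 h2 h3 using hsp
  let Q : List Bool → T := fun l => l.rec ⟨Φ, subset_rfl, hΦ, hne⟩ (fun b _ Ψ =>
    if b then ⟨Ψ.1 ∩ sp Ψ, inter_subset_left.trans Ψ.2.1, Ψ.2.2.1.inter (h1 Ψ),
      Set.not_disjoint_iff_nonempty_inter.1 (h3 Ψ)⟩
    else ⟨Ψ.1 \ sp Ψ, sdiff_subset.trans Ψ.2.1, Ψ.2.2.1.sdiff (h1 Ψ),
      Set.sdiff_nonempty.2 (h2 Ψ)⟩)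
  have Q1 : ∀ l, (Q (true :: l)).1 = (Q l).1 ∩ sp (Q l) := fun l => rfl
  have Q0 : ∀ l, (Q (false :: l)).1 = (Q l).1 \ sp (Q l) := fun l => rfl
  have Qs : ∀ b l, (Q (b :: l)).1 ⊆ (Q l).1 := by
    intro b l
    cases b
    · rw [Q0]; exact sdiff_subset
    · rw [Q1]; exact inter_subset_left
  let br : (ℕ → Bool) → ℕ → List Bool := fun f n => n.rec [] (fun n l => f n :: l)
  have brs : ∀ f n, br f (n+1) = f n :: br f n := fun f n => rfl
  have hanti : ∀ f, Antitone fun n => (Q (br f n)).1 := fun f =>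
    antitone_nat_of_succ_le fun n => by rw [brs]; exact Qs _ _
  have hU : ∀ f, ∃ U : Ultrafilter (Fin m → N), ∀ n, (Q (br f n)).1 ∈ U := by
    intro f
    have hne : (⨅ k, Filter.principal (Q (br f k)).1).NeBot := by
      apply Filter.iInf_neBot_of_directed'
      · intro k k'
        refine ⟨max k k', ?_, ?_⟩
        · refine Filter.principal_mono.2 ?_
          exact hanti f (le_max_left _ _)
        · refine Filter.principal_mono.2 ?_
          exact hanti f (le_max_right _ _)
      · intro k
        rw [Filter.principal_neBot_iff]
        exact (Q (br f k)).2.2.2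
    exact ⟨Ultrafilter.of (⨅ k, Filter.principal (Q (br f k)).1), fun k =>
      Ultrafilter.of_le _ (Filter.mem_iInf_of_mem k (Filter.mem_principal_self _))⟩
  choose U hU using hU
  have hdec : ∀ f n, sp (Q (br f n)) ∈ U f ↔ f n = true := by
    intro f n
    have := hU f (n+1)
    rw [brs] at this
    cases hfn : f n
    · rw [hfn, Q0] at this
      simp only [Bool.false_eq_true, iff_false]
      intro h
      obtain ⟨v, h1, h2⟩ := Ultrafilter.nonempty_of_mem (Filter.inter_mem this h)
      exact h1.2 h2
    · rw [hfn, Q1] at this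
      simp only [iff_true]
      exact Filter.mem_of_superset this inter_subset_right
  have hst := stab hc hN m (fun l => sp (Q l)) (fun l => (h1 _).mono (Set.subset_univ _))
  have hinj : Function.Injective fun f => (⟨{l | sp (Q l) ∈ U f}, U f, rfl⟩ :
      {t : Set (List Bool) | ∃ U : Ultrafilter (Fin m → N), t = {j | sp (Q j) ∈ U}}) := by
    intro f f' h
    have h' : ∀ l, sp (Q l) ∈ U f ↔ sp (Q l) ∈ U f' := fun l =>
      Set.ext_iff.1 (congrArg Subtype.val h) l
    have hb : ∀ n, br f n = br f' n ∧ f n = f' n := by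
      have step : ∀ n, br f n = br f' n → f n = f' n := by
        intro n hn
        have := h' (br f n)
        rw [hdec, hn, hdec] at this
        exact Bool.eq_iff_iff.2 this
      intro n
      induction n with
      | zero => exact ⟨rfl, step 0 rfl⟩
      | succ n ih =>
        have : br f (n+1) = br f' (n+1) := by rw [brs, brs, ih.1, ih.2]
        exact ⟨this, step _ this⟩
    exact funext fun n => (hb n).2
  have := hst.to_subtype
  have hc2 : Countable (ℕ → Bool) := hinj.countable
  obtain ⟨f, hf⟩ := exists_injective_nat (ℕ → Bool)
  classical
  exact Function.cantor_injective (fun s : Set ℕ => f (fun n => decide (n ∈ s))) (by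
    intro s t h
    have := hf h
    ext n
    simpa using congrFun this n)

end Stab

end Paper

namespace Paper

section Isol

variable {L : FirstOrder.Language.{0, 0}} {M : Type} [L.Structure M]

theorem formula_def {α : Type} (φ : L.Formula α) : (∅ : Set M).Definable L {v : α → M | φ.Realize v} :=
  Set.empty_definable_iff.2 ⟨φ, rfl⟩

theorem def_section {α β : Type} {S : Set (β ⊕ α → M)} (h : (∅ : Set M).Definable L S) {A : Set M}
    (w : β → M) (hw : ∀ b, w b ∈ A) : A.Definable L {z : α → M | Sum.elim w z ∈ S} := by
  obtain ⟨φ, rfl⟩ := Set.empty_definable_iff.1 h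
  rw [Set.definable_iff_exists_formula_sum]
  refine ⟨φ.relabel (Sum.map (fun i => (⟨w i, hw i⟩ : A)) id), ?_⟩
  ext v
  simp only [Set.mem_ofPred_eq]
  rw [Formula.realize_relabel]
  have : (Sum.elim (fun x : A => (x : M)) v ∘ Sum.map (fun i => (⟨w i, hw i⟩ : A)) id)
      = Sum.elim w v := by
    funext x
    rcases x with x | x <;> rfl
  rw [this]

theorem def_of_section {α : Type} {A : Set M} {s : Set (α → M)} (h : A.Definable L s) :
    ∃ (n : ℕ) (S : Set (Fin n ⊕ α → M)) (a : Fin n → M), (∅ : Set M).Definable L S ∧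
      (∀ i, a i ∈ A) ∧ s = {v | Sum.elim a v ∈ S} := by
  obtain ⟨n, φ, a, ha, hs⟩ := definable_iff_fin.1 h
  exact ⟨n, {v | φ.Realize v}, a, formula_def φ, ha, Set.ext hs⟩

variable (L) in
def Isol {α : Type} (v : α → M) : Prop :=
  ∃ S : Set (α → M), (∅ : Set M).Definable L S ∧ v ∈ S ∧
    ∀ S', (∅ : Set M).Definable L S' → v ∈ S' → S ⊆ S'

theorem Isol.comp {α β : Type} [Finite α] [Finite β] {v : β → M} (h : Isol L v) (f : α → β) :
    Isol L (v ∘ f) := by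
  obtain ⟨S, h1, h2, h3⟩ := h
  refine ⟨(fun g : β → M => g ∘ f) '' S, h1.image_comp f, ⟨v, h2, rfl⟩, fun S' hS' hv => ?_⟩
  rintro _ ⟨w, hw, rfl⟩
  exact h3 _ (hS'.preimage_comp f) hv hw

variable (L) in
def AtomicSet (N : Set M) : Prop :=
  ∀ (n : ℕ) (v : Fin n → M), (∀ i, v i ∈ N) → Isol L v

theorem AtomicSet.fin {N : Set M} (h : AtomicSet L N) {α : Type} [Finite α] (v : α → M)
    (hv : ∀ i, v i ∈ N) : Isol L v := by
  have e := Finite.equivFin α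
  have := (h _ (v ∘ e.symm) (fun i => hv _)).comp e
  simpa [Function.comp_def] using this

theorem atomic_insert {N : Set M} (h : AtomicSet L N) (Ψ : Set (Fin 1 → M)) (hΨ : N.Definable L Ψ)
    (hcomp : ∀ s, N.Definable L s → Ψ ⊆ s ∨ Disjoint Ψ s) (c : Fin 1 → M) (hc : c ∈ Ψ) :
    AtomicSet L (insert (c 0) N) := by
  classical
  intro n v hv
  obtain ⟨k, P, a, hP, ha, rfl⟩ := def_of_section hΨ
  let β := Fin k ⊕ {i : Fin n // v i ∈ N}
  let w : β → M := Sum.elim a (fun i => v i.1)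
  have hw : ∀ b, w b ∈ N := by
    rintro (b | b)
    · exact ha b
    · exact b.2
  obtain ⟨S, hS1, hS2, hS3⟩ := h.fin w hw
  let f : Fin n → β ⊕ Fin 1 := fun i => if hi : v i ∈ N then Sum.inl (Sum.inr ⟨i, hi⟩) else Sum.inr 0
  have hvf : v = (Sum.elim w c : β ⊕ Fin 1 → M) ∘ f := by
    funext i
    by_cases hi : v i ∈ N
    · simp [f, hi, w]
    · simp only [f, hi, Function.comp, dif_neg, not_false_eq_true, Sum.elim_inr]
      rcases hv i with h | h
      · exact h
      · exact absurd h hi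
  rw [hvf]
  apply Isol.comp
  let r : Fin k ⊕ Fin 1 → β ⊕ Fin 1 := Sum.map Sum.inl id
  have hr : ∀ (x : β → M) (z : Fin 1 → M), (Sum.elim x z : β ⊕ Fin 1 → M) ∘ r =
      Sum.elim (x ∘ Sum.inl) z := by
    intro x z; funext i; rcases i with i | i <;> rfl
  refine ⟨{x | x ∘ Sum.inl ∈ S} ∩ {x | x ∘ r ∈ P}, ?_, ⟨hS2, ?_⟩, ?_⟩
  · exact (hS1.preimage_comp Sum.inl).inter (hP.preimage_comp r)
  · show (Sum.elim w c : β ⊕ Fin 1 → M) ∘ r ∈ P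
    rw [hr]; exact hc
  · intro S' hS' hv'
    have h1 : {z | Sum.elim a z ∈ P} ⊆ {z | Sum.elim w z ∈ S'} := by
      rcases hcomp _ (def_section hS' w hw) with h | h
      · exact h
      · exact absurd hv' (fun hv' => Set.disjoint_left.1 h hc hv')
    let Z : Set (β ⊕ Fin 1 → M) := {x | x ∘ r ∈ P} ∩ S'ᶜ
    have hZ : (∅ : Set M).Definable L Z := (hP.preimage_comp r).inter hS'.compl
    have h2 := hS3 _ (hZ.image_comp Sum.inl).compl (by
      rintro ⟨x, hx, hxw⟩
      have hx' : x = Sum.elim w (x ∘ Sum.inr) := by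
        rw [← hxw]; exact (Sum.elim_comp_inl_inr x).symm
      apply hx.2
      rw [hx']
      apply h1
      have := hx.1
      simp only [Set.mem_ofPred_eq] at this
      rw [hx', hr] at this
      exact this)
    intro x hx
    by_contra hxS
    exact h2 hx.1 ⟨x, ⟨hx.2, hxS⟩, rfl⟩

theorem exists_max_atomic : ∃ N : Set M, Maximal (AtomicSet L) N := by
  obtain ⟨N, hN⟩ := zorn_subset {N : Set M | AtomicSet L N} (by
    intro c hc hch
    refine ⟨⋃₀ c, ?_, fun s hs => Set.subset_sUnion_of_mem hs⟩
    intro n v hv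
    rcases c.eq_empty_or_nonempty with rfl | hne
    · rcases Nat.eq_zero_or_pos n with rfl | hn
      · refine ⟨Set.univ, Set.definable_univ, trivial, fun S' _ h => ?_⟩
        intro w _
        rwa [Subsingleton.elim w v]
      · obtain ⟨t, ht, _⟩ := hv ⟨0, hn⟩
        exact absurd ht (by simp)
    · have : Set.range v ⊆ ⋃₀ c := by rintro _ ⟨i, rfl⟩; exact hv i
      obtain ⟨t, ht, htv⟩ := DirectedOn.exists_mem_subset_of_finite_of_subset_sUnion hne hch.directedOn (Set.finite_range v) this
      exact hc ht n v (fun i => htv ⟨i, rfl⟩))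
  exact ⟨N, hN⟩

theorem all_isol [L.IsRelational] [Countable L.Symbols] [Infinite M] [Countable M]
    (h0 : (Cardinal.aleph0.{0}).Categorical (L.completeTheory M))
    (hc : (Cardinal.aleph.{0} 1).Categorical (L.completeTheory M))
    {α : Type} [Finite α] (v : α → M) : Isol L v := by
  obtain ⟨N, hN⟩ := exists_max_atomic (L := L) (M := M)
  have meets : L.MeetsDefinable N := by
    intro s hne hs
    obtain ⟨x, hx⟩ := hne
    obtain ⟨Ψ, h1, h2, ⟨c, hcΨ⟩, h4⟩ := dens hc (rfl : M ≅[L] M) N _ hs ⟨fun _ => x, hx⟩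
    have := hN.2 (atomic_insert hN.1 Ψ h2 h4 c hcΨ) (Set.subset_insert _ _) (Set.mem_insert _ _)
    exact ⟨c 0, h1 hcΨ, this⟩
  obtain ⟨S, hS⟩ := exists_elem meets
  have hSinf : Infinite S := by
    exact (S.elementarilyEquivalent.infinite_iff).2 inferInstance
  obtain ⟨e⟩ := cat_iso h0 S.elementarilyEquivalent (rfl : M ≅[L] M)
    (Cardinal.mk_eq_aleph0 S) (Cardinal.mk_eq_aleph0 M)
  have key : ∀ φ : L.Formula α, φ.Realize (fun i => (e.symm (v i) : M)) ↔ φ.Realize v := by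
    intro φ
    rw [elem_realize S φ (fun i => e.symm (v i)), ← realize_equiv e]
    simp
  obtain ⟨S₀, h1, h2, h3⟩ := hN.1.fin (fun i => (e.symm (v i) : M)) (fun i => by
    rw [← hS]; exact (e.symm (v i)).2)
  refine ⟨S₀, h1, ?_, fun S' hS' hv => ?_⟩
  · obtain ⟨φ, rfl⟩ := Set.empty_definable_iff.1 h1
    exact (key φ).1 h2
  · apply h3 _ hS'
    obtain ⟨φ, rfl⟩ := Set.empty_definable_iff.1 hS'
    exact (key φ).2 hv

end Isol
end Paper

namespace Paper

section BF

variable (L : FirstOrder.Language.{0, 0}) [L.IsRelational] {M N : Type} [L.Structure M]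
  [L.Structure N]

def PI (s : Set (M × N)) : Prop :=
  (∀ p ∈ s, ∀ q ∈ s, (p.1 = q.1 ↔ p.2 = q.2)) ∧
    ∀ (k : ℕ) (R : L.Relations k) (g : Fin k → M × N), (∀ i, g i ∈ s) →
      (Structure.RelMap R (fun i => (g i).1) ↔ Structure.RelMap R (fun i => (g i).2))

theorem back_forth [Countable M] [Countable N] [Nonempty M] [Nonempty N]
    (forth : ∀ s : Set (M × N), s.Finite → PI L s → ∀ m, ∃ n, PI L (insert (m, n) s))
    (back : ∀ s : Set (M × N), s.Finite → PI L s → ∀ n, ∃ m, PI L (insert (m, n) s))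
    (s₀ : Set (M × N)) (hs₀ : s₀.Finite) (h₀ : PI L s₀) :
    ∃ e : M ≃[L] N, ∀ p ∈ s₀, e p.1 = p.2 := by
  obtain ⟨f, hf⟩ := exists_surjective_nat M
  obtain ⟨h, hh⟩ := exists_surjective_nat N
  let T := {s : Set (M × N) // s.Finite ∧ PI L s}
  have step : ∀ (k : ℕ) (s : T), ∃ s' : T, s.1 ⊆ s'.1 ∧ (∃ n, (f k, n) ∈ s'.1) ∧
      ∃ m, (m, h k) ∈ s'.1 := by
    rintro k ⟨s, h1, h2⟩
    obtain ⟨n, hn⟩ := forth s h1 h2 (f k)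
    obtain ⟨m, hm⟩ := back _ (h1.insert _) hn (h k)
    exact ⟨⟨_, (h1.insert _).insert _, hm⟩, fun x hx => Or.inr (Or.inr hx),
      ⟨n, Or.inr (Or.inl rfl)⟩, ⟨m, Or.inl rfl⟩⟩
  choose st st1 st2 st3 using step
  let Q : ℕ → T := fun k => k.rec ⟨s₀, hs₀, h₀⟩ (fun k s => st k s)
  have Qs : ∀ k, Q (k+1) = st k (Q k) := fun k => rfl
  have Qm : Monotone fun k => (Q k).1 := monotone_nat_of_le_succ fun k => by
    rw [Qs]; exact st1 _ _
  let G : Set (M × N) := ⋃ k, (Q k).1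
  have hG : PI L G := by
    constructor
    · intro p hp q hq
      obtain ⟨k, hk⟩ := Set.mem_iUnion.1 hp
      obtain ⟨l, hl⟩ := Set.mem_iUnion.1 hq
      exact (Q (max k l)).2.2.1 p (Qm (le_max_left _ _) hk) q (Qm (le_max_right _ _) hl)
    · intro k R g hg
      choose j hj using fun i => Set.mem_iUnion.1 (hg i)
      obtain ⟨B, hB⟩ := (Set.finite_range j).bddAbove
      exact (Q B).2.2.2 k R g (fun i => Qm (hB ⟨i, rfl⟩) (hj i))
  have tot : ∀ m, ∃ n, (m, n) ∈ G := by
    intro m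
    obtain ⟨k, rfl⟩ := hf m
    obtain ⟨n, hn⟩ := st2 k (Q k)
    exact ⟨n, Set.mem_iUnion.2 ⟨k+1, hn⟩⟩
  have sur : ∀ n, ∃ m, (m, n) ∈ G := by
    intro n
    obtain ⟨k, rfl⟩ := hh n
    obtain ⟨m, hm⟩ := st3 k (Q k)
    exact ⟨m, Set.mem_iUnion.2 ⟨k+1, hm⟩⟩
  choose F hF using tot
  choose F' hF' using sur
  refine ⟨⟨⟨F, F', fun m => ?_, fun n => ?_⟩, fun {n} f => isEmptyElim f, fun {n} R x => ?_⟩,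
    fun p hp => ?_⟩
  · exact (hG.1 _ (hF' (F m)) _ (hF m)).2 rfl
  · exact (hG.1 _ (hF (F' n)) _ (hF' n)).1 rfl
  · exact (hG.2 n R (fun i => (x i, F (x i))) (fun i => hF _)).symm
  · have : p ∈ G := Set.mem_iUnion.2 ⟨0, hp⟩
    exact (hG.1 _ (hF p.1) _ this).1 rfl

end BF

section Homog

variable {L : FirstOrder.Language.{0, 0}} [L.IsRelational] {M : Type} [L.Structure M]

def SameT (L : FirstOrder.Language.{0, 0}) {M : Type} [L.Structure M] {α : Type} (a b : α → M) :
  Prop := ∀ φ : L.Formula α, φ.Realize a ↔ φ.Realize b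

/-- QF formulas are determined by atomic ones. -/
theorem qf_congr {N : Type} [L.Structure N] {n : ℕ} (a : Fin n → M) (b : Fin n → N)
    (heq : ∀ i j, a i = a j ↔ b i = b j)
    (hrel : ∀ (k : ℕ) (R : L.Relations k) (g : Fin k → Fin n),
      (Structure.RelMap R (fun i => a (g i)) ↔ Structure.RelMap R (fun i => b (g i))))
    (φ : L.Formula (Fin n)) (hφ : φ.IsQF) : φ.Realize a ↔ φ.Realize b := by
  have tm : ∀ t : L.Term (Fin n ⊕ Fin 0), ∃ i, t = Term.var (Sum.inl i) := by
    intro t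
    cases t with
    | var i =>
      rcases i with i | i
      · exact ⟨i, rfl⟩
      · exact i.elim0
    | func f _ => exact isEmptyElim f
  unfold Formula.Realize
  have main : ∀ {ψ : L.BoundedFormula (Fin n) 0}, ψ.IsQF →
      (ψ.Realize a default ↔ ψ.Realize b default) := by
    intro ψ hψ
    induction hψ with
    | falsum => rfl
    | of_isAtomic h =>
      cases h with
      | equal t₁ t₂ =>
        obtain ⟨i, rfl⟩ := tm t₁
        obtain ⟨j, rfl⟩ := tm t₂
        simpa using heq i j
      | rel R ts =>
        choose g hg using fun i => tm (ts i)
        have : ts = fun i => Term.var (Sum.inl (g i)) := funext hg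
        subst this
        simpa [BoundedFormula.realize_rel] using hrel _ R g
    | imp _ _ h1 h2 =>
      rw [BoundedFormula.realize_imp, BoundedFormula.realize_imp, h1, h2]
  exact main hφ

theorem pi_iff (hqe : HasQE L M) {s : Set (M × M)} (hs : s.Finite) :
    PI L s ↔ SameT L (fun p : s => p.1.1) (fun p : s => p.1.2) := by
  have : Finite s := hs
  constructor
  · intro h φ
    have e := Finite.equivFin s
    obtain ⟨ψ, h1, h2⟩ := hqe _ (φ.relabel e)
    have h3 := h2 (fun i => (e.symm i).1.1)
    have h4 := h2 (fun i => (e.symm i).1.2)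
    rw [Formula.realize_relabel] at h3 h4
    have e1 : ((fun i => (e.symm i).1.1) ∘ e) = fun p : s => p.1.1 := by
      funext x
      exact congrArg (fun q : s => q.1.1) (Equiv.symm_apply_apply e x)
    have e2 : ((fun i => (e.symm i).1.2) ∘ e) = fun p : s => p.1.2 := by
      funext x
      exact congrArg (fun q : s => q.1.2) (Equiv.symm_apply_apply e x)
    rw [e1] at h3
    rw [e2] at h4
    rw [h3, h4]
    apply qf_congr _ _ _ _ _ h1
    · intro i j
      exact h.1 _ (e.symm i).2 _ (e.symm j).2
    · intro k R g
      exact h.2 k R _ (fun i => (e.symm (g i)).2)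
  · intro h
    constructor
    · intro p hp q hq
      have := h (Term.equal (Term.var ⟨p, hp⟩) (Term.var ⟨q, hq⟩))
      rw [Formula.realize_equal, Formula.realize_equal] at this
      exact this
    · intro k R g hg
      have := h (R.formula (fun i => Term.var ⟨g i, hg i⟩))
      simpa [Formula.realize_rel] using this

theorem SameT.symm {α : Type} {a b : α → M} (h : SameT L a b) : SameT L b a := fun φ => (h φ).symm

theorem sameT_def {α : Type} {a b : α → M} (h : SameT L a b) {S : Set (α → M)}
    (hS : (∅ : Set M).Definable L S) : a ∈ S ↔ b ∈ S := by
  obtain ⟨φ, rfl⟩ := Set.empty_definable_iff.1 hS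
  exact h φ

theorem sameT_of_isol {α : Type} {a b : α → M} {S : Set (α → M)} (ha : a ∈ S) (hb : b ∈ S)
    (hS : ∀ S', (∅ : Set M).Definable L S' → a ∈ S' → S ⊆ S') : SameT L a b := by
  intro φ
  by_cases h : φ.Realize a
  · exact iff_of_true h (hS _ (formula_def φ) h hb)
  · refine iff_of_false h ?_
    exact hS _ (formula_def φ).compl h hb

theorem sameT_ext (hiso : ∀ (α : Type) [Finite α] (v : α → M), Isol L v) {α : Type} [Finite α]
    {a b : α → M} (h : SameT L a b) (m : M) :
    ∃ n, SameT L (Sum.elim a (fun _ : Fin 1 => m)) (Sum.elim b (fun _ : Fin 1 => n)) := by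
  obtain ⟨S, h1, h2, h3⟩ := hiso _ (Sum.elim a (fun _ : Fin 1 => m))
  have := (sameT_def h (h1.image_comp Sum.inl)).1 ⟨_, h2, rfl⟩
  obtain ⟨w, hw, hwb⟩ := this
  refine ⟨w (Sum.inr 0), sameT_of_isol h2 ?_ h3⟩
  have : w = Sum.elim b (fun _ => w (Sum.inr 0)) := by
    rw [← hwb]
    funext x
    rcases x with x | x
    · rfl
    · rw [Subsingleton.elim x 0]; rfl
  rw [← this]
  exact hw

theorem SameT.comp {α β : Type} {a b : α → M} (h : SameT L a b) (f : β → α) :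
    SameT L (a ∘ f) (b ∘ f) := by
  intro φ
  have := h (φ.relabel f)
  rwa [Formula.realize_relabel, Formula.realize_relabel] at this

theorem pi_forth (hqe : HasQE L M) (hiso : ∀ (α : Type) [Finite α] (v : α → M), Isol L v)
    (s : Set (M × M)) (hs : s.Finite) (h : PI L s) (m : M) : ∃ n, PI L (insert (m, n) s) := by
  classical
  have : Finite s := hs
  rw [pi_iff hqe hs] at h
  obtain ⟨n, hn⟩ := sameT_ext hiso h m
  refine ⟨n, ?_⟩
  rw [pi_iff hqe (hs.insert _)]
  let f : ↥(insert (m, n) s) → s ⊕ Fin 1 := fun p => if hp : p.1 ∈ s then Sum.inl ⟨p.1, hp⟩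
    else Sum.inr 0
  have := hn.comp f
  have e1 : (Sum.elim (fun p : s => p.1.1) (fun _ : Fin 1 => m)) ∘ f = fun p => p.1.1 := by
    funext ⟨p, hp⟩
    by_cases h : p ∈ s
    · simp [f, h]
    · rcases hp with rfl | hp
      · simp [f, h]
      · exact absurd hp h
  have e2 : (Sum.elim (fun p : s => p.1.2) (fun _ : Fin 1 => n)) ∘ f = fun p => p.1.2 := by
    funext ⟨p, hp⟩
    by_cases h : p ∈ s
    · simp [f, h]
    · rcases hp with rfl | hp
      · simp [f, h]
      · exact absurd hp h
  rwa [e1, e2] at this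

theorem PI.swap {N : Type} [L.Structure N] {s : Set (M × N)} (h : PI L s) : PI L (Prod.swap '' s) := by
  constructor
  · rintro _ ⟨p, hp, rfl⟩ _ ⟨q, hq, rfl⟩
    exact (h.1 p hp q hq).symm
  · intro k R g hg
    have := h.2 k R (fun i => (g i).swap) (fun i => by
      obtain ⟨p, hp, hpg⟩ := hg i
      rw [← hpg]; simpa using hp)
    exact this.symm

theorem homog_pi [Countable M] [Nonempty M] (hqe : HasQE L M)
    (hiso : ∀ (α : Type) [Finite α] (v : α → M), Isol L v)
    (s : Set (M × M)) (hs : s.Finite) (h : PI L s) : ∃ e : M ≃[L] M, ∀ p ∈ s, e p.1 = p.2 := by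
  refine back_forth L (pi_forth hqe hiso) ?_ s hs h
  intro s hs h n
  obtain ⟨m, hm⟩ := pi_forth hqe hiso _ (hs.image _) h.swap n
  refine ⟨m, ?_⟩
  have := hm.swap
  rwa [Set.image_insert_eq, Set.image_image, Prod.swap_prod_mk, show (fun x : M × M => x.swap.swap) = id from rfl, Set.image_id] at this

theorem homog [Countable M] [Nonempty M] (hqe : HasQE L M)
    (hiso : ∀ (α : Type) [Finite α] (v : α → M), Isol L v) {α : Type} [Finite α] {a b : α → M}
    (h : SameT L a b) : ∃ e : M ≃[L] M, ∀ i, e (a i) = b i := by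
  let s : Set (M × M) := Set.range fun i => (a i, b i)
  have hs : s.Finite := Set.finite_range _
  obtain ⟨e, he⟩ := homog_pi hqe hiso s hs (by
    rw [pi_iff hqe hs]
    choose f hf using fun p : s => p.2
    have := h.comp f
    have e1 : a ∘ f = fun p => p.1.1 := by funext p; rw [← hf p]; rfl
    have e2 : b ∘ f = fun p => p.1.2 := by funext p; rw [← hf p]; rfl
    rwa [e1, e2] at this)
  exact ⟨e, fun i => he _ ⟨i, rfl⟩⟩

theorem homog_emb [Countable M] [Nonempty M] (hqe : HasQE L M)
    (hiso : ∀ (α : Type) [Finite α] (v : α → M), Isol L v) {A : Type} [L.Structure A] [Finite A]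
    (f g : A ↪[L] M) : ∃ e : M ≃[L] M, ∀ i, e (f i) = g i := by
  obtain ⟨e, he⟩ := homog_pi hqe hiso (Set.range fun i => (f i, g i)) (Set.finite_range _) (by
    constructor
    · rintro _ ⟨i, rfl⟩ _ ⟨j, rfl⟩
      simp
    · intro k R x hx
      choose y hy using hx
      have : x = fun i => (f (y i), g (y i)) := funext fun i => (hy i).symm
      subst this
      exact (f.map_rel R y).trans (g.map_rel R y).symm)
  exact ⟨e, fun i => he _ ⟨i, rfl⟩⟩

/-- orbits are definable -/
theorem orbit_def [Countable M] [Nonempty M] (hqe : HasQE L M)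
    (hiso : ∀ (α : Type) [Finite α] (v : α → M), Isol L v) {α : Type} [Finite α] (a : α → M) :
    (∅ : Set M).Definable L {b : α → M | ∃ e : M ≃[L] M, ∀ i, e (a i) = b i} := by
  obtain ⟨S, h1, h2, h3⟩ := hiso _ a
  convert! h1 using 1
  ext b
  constructor
  · rintro ⟨e, he⟩
    obtain ⟨φ, rfl⟩ := Set.empty_definable_iff.1 h1
    have := (realize_equiv e φ a).2 h2
    have e1 : (fun i => e (a i)) = b := funext he
    rwa [e1] at this
  · intro hb
    exact homog hqe hiso (sameT_of_isol h2 hb h3)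

end Homog

end Paper

namespace Paper

section Orbits

theorem fin1eta {M : Type} (z : Fin 1 → M) : (fun _ : Fin 1 => z 0) = z :=
  funext fun i => congrArg z (Subsingleton.elim 0 i)

variable {L : FirstOrder.Language.{0, 0}} {M : Type} [L.Structure M]

variable (L) in
def Orb {α : Type} (a : α → M) : Set (α → M) := {b | ∃ e : M ≃[L] M, ∀ i, e (a i) = b i}

theorem fin_orb [L.IsRelational] [Countable L.Symbols] [Countable M] [Infinite M]
    (h0 : (Cardinal.aleph0.{0}).Categorical (L.completeTheory M))
    (horb : ∀ (α : Type) [Finite α] (a : α → M), (∅ : Set M).Definable L (Orb L a))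
    (α : Type) [Finite α] :
    ∃ T : Set (α → M), T.Finite ∧ ∀ b, ∃ a ∈ T, b ∈ Orb L a := by
  classical
  by_contra hcon
  push Not at hcon
  obtain ⟨V, hV⟩ := Ultrafilter.exists_ultrafilter_of_finite_inter_nonempty
    (Set.range fun a : α → M => (Orb L a)ᶜ) (by
      intro T hT
      choose f hf using fun s : T => hT s.2
      obtain ⟨b, hb⟩ := hcon (Set.range f) (Set.finite_range f)
      refine ⟨b, ?_⟩
      intro s hs
      have h1 := hb (f ⟨s, hs⟩) ⟨_, rfl⟩
      have h2 := hf ⟨s, hs⟩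
      simp only at h2
      rw [← h2]
      exact h1)
  let t : α → UP V M := fun i => up V (fun w => w i)
  have hinf : Infinite (UP V M) := (ElementarilyEquivalent.infinite_iff (up_equiv (L := L) (M := M) V)).2 inferInstance
  obtain ⟨S, hS1, hS2⟩ := ls (L := L) (Set.range t) Cardinal.aleph0 le_rfl
    (Set.finite_range t).lt_aleph0.le (Cardinal.aleph0_le_mk _)
  have hSne : Nonempty S := by
    rw [← Cardinal.mk_ne_zero_iff, hS2]; exact Cardinal.aleph0_ne_zero
  obtain ⟨e⟩ := cat_iso h0 (N := S) (N' := M)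
    ((S.elementarilyEquivalent).symm.symm.trans (up_equiv V)) rfl hS2 (Cardinal.mk_eq_aleph0 M)
  let t' : α → S := fun i => ⟨t i, hS1 ⟨i, rfl⟩⟩
  let u : α → M := fun i => e (t' i)
  obtain ⟨φ, hφ⟩ := Set.empty_definable_iff.1 (horb α u)
  have h1 : φ.Realize u := by
    have : u ∈ Orb L u := ⟨Language.Equiv.refl L M, fun i => rfl⟩
    rw [hφ] at this
    exact this
  have h2 : φ.Realize t := (elem_realize S φ t').2 ((realize_equiv e φ t').1 h1)
  have h3 := (up_realize V φ (fun i w => w i)).1 h2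
  have h4 := hV ⟨u, rfl⟩
  obtain ⟨w, h5, h6⟩ := (h3.and h4).exists
  apply h6
  rw [hφ]
  exact h5

end Orbits

structure Ctx (L : FirstOrder.Language.{0, 0}) (M : Type) [L.Structure M] (D : Set M) : Prop where
  orb : ∀ (α : Type) [Finite α] (a : α → M), (∅ : Set M).Definable L (Orb L a)
  fin : ∀ (α : Type) [Finite α], ∃ T : Set (α → M), T.Finite ∧ ∀ b, ∃ a ∈ T, b ∈ Orb L a
  ddef : (∅ : Set M).Definable₁ L D
  inf : D.Infinite
  min : ∀ s : Set M, (Set.univ : Set M).Definable₁ L s → (s ∩ D).Finite ∨ (D \ s).Finite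

section Acl

variable {L : FirstOrder.Language.{0, 0}} {M : Type} [L.Structure M]

local notation "acl" => aclSet L M

theorem acl_mono {A B : Set M} (h : A ⊆ B) : acl A ⊆ acl B := by
  rintro b ⟨k, φ, a, ha, h1, h2⟩
  exact ⟨k, φ, a, fun i => h (ha i), h1, h2⟩

theorem subset_acl (A : Set M) : A ⊆ acl A := by
  intro b hb
  refine ⟨1, Term.equal (Term.var (Sum.inl 0)) (Term.var (Sum.inr 0)), fun _ => b, fun _ => hb, ?_, ?_⟩
  · rw [Formula.realize_equal]; rfl
  · refine (Set.finite_singleton b).subset ?_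
    intro c hc
    have hc : Formula.Realize _ _ := hc
    rw [Formula.realize_equal] at hc
    exact hc.symm

theorem acl_fin {A : Set M} {b : M} (h : b ∈ acl A) : ∃ F ⊆ A, F.Finite ∧ b ∈ acl F := by
  obtain ⟨k, φ, a, ha, h1, h2⟩ := h
  exact ⟨Set.range a, by rintro _ ⟨i, rfl⟩; exact ha i, Set.finite_range a, k, φ, a,
    fun i => ⟨i, rfl⟩, h1, h2⟩

theorem acl_equiv (e : M ≃[L] M) {A : Set M} {b : M} (h : b ∈ acl A) : e b ∈ acl (e '' A) := by
  obtain ⟨k, φ, a, ha, h1, h2⟩ := h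
  have key : ∀ c, φ.Realize (Sum.elim (fun i => e (a i)) fun _ => e c) ↔
      φ.Realize (Sum.elim a fun _ => c) := by
    intro c
    rw [← realize_equiv e φ (Sum.elim a fun _ => c)]
    apply iff_of_eq
    congr 1
    funext x
    rcases x with x | x <;> rfl
  refine ⟨k, φ, fun i => e (a i), fun i => ⟨_, ha i, rfl⟩, (key b).2 h1, ?_⟩
  refine (h2.image e).subset ?_
  intro c hc
  refine ⟨e.symm c, ?_, by simp⟩
  have := key (e.symm c)
  rw [show e (e.symm c) = c by simp] at this
  exact this.1 hc

def Fixes (C : Set M) (e : M ≃[L] M) : Prop := ∀ c ∈ C, e c = c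

theorem Fixes.image {C : Set M} {e : M ≃[L] M} (h : Fixes C e) : e '' C = C := by
  ext x
  constructor
  · rintro ⟨y, hy, rfl⟩
    rw [h y hy]; exact hy
  · intro hx
    exact ⟨x, hx, h x hx⟩

theorem Fixes.symm {C : Set M} {e : M ≃[L] M} (h : Fixes C e) : Fixes C e.symm := by
  intro c hc
  conv_lhs => rw [← h c hc]
  simp

theorem Fixes.comp {C : Set M} {e f : M ≃[L] M} (h : Fixes C e) (h' : Fixes C f) :
    Fixes C (f.comp e) := by
  intro c hc
  show f (e c) = c
  rw [h c hc, h' c hc]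

theorem Fixes.mono {C C' : Set M} {e : M ≃[L] M} (h : Fixes C' e) (hC : C ⊆ C') : Fixes C e :=
  fun c hc => h c (hC hc)

theorem fixes_acl {C : Set M} {e : M ≃[L] M} (h : Fixes C e) {b : M} : e b ∈ acl C ↔ b ∈ acl C := by
  constructor
  · intro hb
    have := acl_equiv e.symm hb
    rw [h.symm.image] at this
    simpa using this
  · intro hb
    have := acl_equiv e hb
    rwa [h.image] at this

theorem acl_orbit_fin {C : Set M} {b : M} (h : b ∈ acl C) :
    {b' | ∃ e : M ≃[L] M, Fixes C e ∧ e b = b'}.Finite := by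
  obtain ⟨k, φ, a, ha, h1, h2⟩ := h
  refine h2.subset ?_
  rintro _ ⟨e, he, rfl⟩
  have := (realize_equiv e φ _).2 h1
  have e1 : (fun i => e (Sum.elim a (fun _ : Fin 1 => b) i)) = Sum.elim a (fun _ : Fin 1 => e b) := by
    funext x
    rcases x with x | x
    · exact he _ (ha x)
    · rfl
  rw [e1] at this
  exact this

variable {D : Set M}

theorem orbit_formula (H : Ctx L M D) {k : ℕ} (c : Fin k → M) (b : M) :
    ∃ φ : L.Formula (Fin k ⊕ Fin 1), ∀ b', φ.Realize (Sum.elim c fun _ => b') ↔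
      ∃ e : M ≃[L] M, Fixes (Set.range c) e ∧ e b = b' := by
  obtain ⟨φ, hφ⟩ := Set.empty_definable_iff.1 (H.orb _ (Sum.elim c (fun _ : Fin 1 => b)))
  refine ⟨φ, fun b' => ?_⟩
  have : φ.Realize (Sum.elim c fun _ => b') ↔
    (Sum.elim c fun _ => b') ∈ Orb L (Sum.elim c (fun _ : Fin 1 => b)) := by rw [hφ]; rfl
  rw [this]
  constructor
  · rintro ⟨e, he⟩
    refine ⟨e, ?_, he (Sum.inr 0)⟩
    rintro _ ⟨i, rfl⟩
    exact he (Sum.inl i)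
  · rintro ⟨e, he, rfl⟩
    refine ⟨e, ?_⟩
    rintro (i | i)
    · exact he _ ⟨i, rfl⟩
    · rfl

theorem exists_enum {C : Set M} (hC : C.Finite) : ∃ (k : ℕ) (c : Fin k → M), Set.range c = C := by
  have : Finite C := hC
  let e := Finite.equivFin C
  refine ⟨_, fun i => (e.symm i).1, ?_⟩
  ext x
  constructor
  · rintro ⟨i, rfl⟩
    exact (e.symm i).2
  · intro hx
    exact ⟨e ⟨x, hx⟩, congrArg Subtype.val (e.symm_apply_apply ⟨x, hx⟩)⟩

theorem acl_iff (H : Ctx L M D) {C : Set M} (hC : C.Finite) {b : M} : b ∈ acl C ↔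
    {b' | ∃ e : M ≃[L] M, Fixes C e ∧ e b = b'}.Finite := by
  refine ⟨acl_orbit_fin, fun h => ?_⟩
  obtain ⟨k, c, rfl⟩ := exists_enum hC
  obtain ⟨φ, hφ⟩ := orbit_formula H c b
  refine ⟨k, φ, c, fun i => ⟨i, rfl⟩, (hφ b).2 ⟨Language.Equiv.refl L M, fun _ _ => rfl, rfl⟩, ?_⟩
  refine h.subset fun b' hb' => (hφ b').1 hb'

theorem acl_finite (H : Ctx L M D) {C : Set M} (hC : C.Finite) : (acl C).Finite := by
  obtain ⟨k, c, rfl⟩ := exists_enum hC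
  obtain ⟨T, hT, hT2⟩ := H.fin (Fin k ⊕ Fin 1)
  let X : (Fin k ⊕ Fin 1 → M) → Set M := fun r => {b | (Sum.elim c fun _ => b) ∈ Orb L r}
  have : acl (Set.range c) ⊆ ⋃ r ∈ {r ∈ T | (X r).Finite}, X r := by
    intro b hb
    obtain ⟨r, hr, e, he⟩ := hT2 (Sum.elim c fun _ => b)
    have hfin : (X r).Finite := by
      refine (acl_orbit_fin hb).subset ?_
      rintro b' ⟨e', he'⟩
      refine ⟨e'.comp e.symm, ?_, ?_⟩
      · rintro _ ⟨i, rfl⟩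
        show e' (e.symm (c i)) = c i
        have := he (Sum.inl i)
        rw [Sum.elim_inl] at this
        have h3 := he' (Sum.inl i)
        rw [Sum.elim_inl] at h3
        conv_lhs => rw [← this]
        rw [show e.symm (e (r (Sum.inl i))) = r (Sum.inl i) by simp]
        exact h3
      · show e' (e.symm b) = b'
        have := he (Sum.inr 0)
        rw [Sum.elim_inr] at this
        rw [← this]
        have := he' (Sum.inr 0)
        rw [Sum.elim_inr] at this
        simp [this]
    exact Set.mem_biUnion (⟨hr, hfin⟩ : r ∈ {r ∈ T | (X r).Finite}) ⟨e, he⟩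
  refine Set.Finite.subset (Set.Finite.biUnion (hT.subset fun r hr => hr.1) fun r hr => hr.2) this

theorem acl_idem (H : Ctx L M D) (A : Set M) : acl (acl A) ⊆ acl A := by
  intro b hb
  obtain ⟨F, hF, hFf, hb⟩ := acl_fin hb
  choose! G hG1 hG2 hG3 using fun x (hx : x ∈ F) => acl_fin (hF hx)
  let C := ⋃ x ∈ F, G x
  have hC : C.Finite := hFf.biUnion hG2
  have hFC : F ⊆ acl C := fun x hx => acl_mono (Set.subset_biUnion_of_mem hx) (hG3 x hx)
  have hCA : C ⊆ A := Set.iUnion₂_subset hG1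
  apply acl_mono hCA
  rw [acl_iff H hC]
  refine (acl_finite H (acl_finite H hC)).subset ?_
  rintro _ ⟨e, he, rfl⟩
  have := acl_equiv e (acl_mono hFC hb)
  refine acl_mono ?_ this
  rintro _ ⟨x, hx, rfl⟩
  exact (fixes_acl he).2 hx

theorem acl_le (H : Ctx L M D) {A B : Set M} (h : A ⊆ acl B) : acl A ⊆ acl B :=
  (acl_mono h).trans (acl_idem H B)

theorem D_inv (H : Ctx L M D) (e : M ≃[L] M) {b : M} : e b ∈ D ↔ b ∈ D := by
  obtain ⟨φ, hφ⟩ := Set.empty_definable_iff.1 H.ddef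
  have : ∀ b, b ∈ D ↔ φ.Realize (fun _ => b) := by
    intro b
    have h1 : (fun _ => b) ∈ {x : Fin 1 → M | x 0 ∈ D} ↔ φ.Realize (fun _ => b) := by rw [hφ]; rfl
    exact h1
  rw [this, this]
  exact realize_equiv e φ (fun _ => b)

theorem gen (H : Ctx L M D) {C : Set M} (hC : C.Finite) {b b' : M} (hb : b ∈ D) (hb' : b' ∈ D)
    (h : b ∉ acl C) (h' : b' ∉ acl C) : ∃ e : M ≃[L] M, Fixes C e ∧ e b = b' := by
  have cof : ∀ b ∈ D, b ∉ acl C → (D \ {b' | ∃ e : M ≃[L] M, Fixes C e ∧ e b = b'}).Finite := by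
    intro b hb h
    obtain ⟨k, c, rfl⟩ := exists_enum hC
    obtain ⟨φ, hφ⟩ := orbit_formula H c b
    have := H.min {b' | ∃ e : M ≃[L] M, Fixes (Set.range c) e ∧ e b = b'} (by
      have := def_section (A := Set.univ) (formula_def (M := M) φ) c (fun _ => trivial)
      unfold Set.Definable₁
      convert! this using 1
      ext z
      have h3 := hφ (z 0)
      rw [show (fun _ : Fin 1 => z 0) = z from fin1eta _] at h3
      exact h3.symm)
    rcases this with h1 | h1
    · exfalso
      apply h
      rw [acl_iff H hC]
      refine h1.subset ?_
      rintro _ ⟨e, he, rfl⟩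
      exact ⟨⟨e, he, rfl⟩, (D_inv H e).2 hb⟩
    · exact h1
  have h1 := cof b hb h
  have h2 := cof b' hb' h'
  obtain ⟨d, hd, hd'⟩ := (H.inf.sdiff (h1.union h2)).nonempty
  have h3 : ∃ e : M ≃[L] M, Fixes C e ∧ e b = d := by
    by_contra hx; exact hd' (Or.inl ⟨hd, hx⟩)
  have h4 : ∃ e : M ≃[L] M, Fixes C e ∧ e b' = d := by
    by_contra hx; exact hd' (Or.inr ⟨hd, hx⟩)
  obtain ⟨e, he, rfl⟩ := h3
  obtain ⟨f, hf, hfe⟩ := h4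
  refine ⟨f.symm.comp e, he.comp hf.symm, ?_⟩
  show f.symm (e b) = b'
  rw [← hfe]; simp

theorem exists_gen (H : Ctx L M D) {C : Set M} (hC : C.Finite) : ∃ b ∈ D, b ∉ acl C := by
  obtain ⟨b, hb, hb'⟩ := (H.inf.sdiff (acl_finite H hC)).nonempty
  exact ⟨b, hb, hb'⟩

/-- Exchange -/
theorem exchange (H : Ctx L M D) {C : Set M} (hC : C.Finite) {a b : M} (ha : a ∈ D) (hb : b ∈ D)
    (h : a ∈ acl (insert b C)) (h' : a ∉ acl C) : b ∈ acl (insert a C) := by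
  by_contra hcon
  have hbC : b ∉ acl C := fun hx => hcon (acl_mono (Set.subset_insert _ _) hx)
  have hfin := acl_finite H (hC.insert b)
  obtain ⟨A, hA1, hA2, hA3⟩ := (H.inf.sdiff (acl_finite H hC)).exists_subset_ncard_eq ((acl (insert b C)).ncard + 1)
  obtain ⟨b', hb', hb'2⟩ := exists_gen H (hC.union hA2)
  have hb'C : b' ∉ acl C := fun hx => hb'2 (acl_mono Set.subset_union_left hx)
  obtain ⟨e, he, heb⟩ := gen H hC hb hb' hbC hb'C
  have : A ⊆ e '' (acl (insert b C)) := by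
    intro x hx
    obtain ⟨f, hf, hfa⟩ := gen H hC ha (hA1 hx).1 h' (hA1 hx).2
    have h1 : f b ∉ acl (insert x C) := by
      intro h2
      have h3 := acl_equiv f.symm h2
      rw [Set.image_insert_eq, hf.symm.image, ← hfa] at h3
      apply hcon
      simpa using h3
    have h2 : b' ∉ acl (insert x C) := fun h2 => hb'2 (acl_mono (Set.insert_subset (Set.mem_union_right _ hx) Set.subset_union_left) h2)
    obtain ⟨g, hg, hgb⟩ := gen H (hC.insert x) ((D_inv H f).2 hb) hb' h1 h2
    have hgC : Fixes C g := hg.mono (Set.subset_insert _ _)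
    have h4 : x ∈ acl (insert b' C) := by
      have h5 := acl_equiv (g.comp f) h
      rw [Set.image_insert_eq, (hf.comp hgC).image] at h5
      have e1 : (g.comp f) b = b' := hgb
      have e2 : (g.comp f) a = x := by
        show g (f a) = x
        rw [hfa]; exact hg x (Set.mem_insert _ _)
      rwa [e1, e2] at h5
    have h6 := acl_equiv e.symm h4
    rw [Set.image_insert_eq, he.symm.image, ← heb] at h6
    refine ⟨e.symm x, by simpa using h6, by simp⟩
  have h1 := Set.ncard_le_ncard this (hfin.image _)
  have h2 := Set.ncard_image_le (f := e) hfin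
  omega

/-- uniform bound -/
theorem unif (H : Ctx L M D) {k : ℕ} (φ : L.Formula (Fin k ⊕ Fin 1)) : ∃ m : ℕ, ∀ z : Fin k → M,
    ({y | φ.Realize (Sum.elim z fun _ => y)} ∩ D).encard ≤ m ∨
    (D \ {y | φ.Realize (Sum.elim z fun _ => y)}).encard ≤ m := by
  obtain ⟨T, hT, hT2⟩ := H.fin (Fin k)
  have h1 : ∀ z : Fin k → M, ∃ m : ℕ, ({y | φ.Realize (Sum.elim z fun _ => y)} ∩ D).encard ≤ m ∨
    (D \ {y | φ.Realize (Sum.elim z fun _ => y)}).encard ≤ m := by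
    intro z
    have := H.min {y | φ.Realize (Sum.elim z fun _ => y)} (by
      have := def_section (A := Set.univ) (formula_def (M := M) φ) z (fun _ => trivial)
      unfold Set.Definable₁
      convert! this using 1
      ext y
      show φ.Realize (Sum.elim z fun _ => y 0) ↔ φ.Realize (Sum.elim z y)
      rw [show (fun _ : Fin 1 => y 0) = y from fin1eta _])
    rcases this with h | h
    · obtain ⟨m, hm⟩ := ENat.ne_top_iff_exists.1 (Set.encard_ne_top_iff.2 h)
      exact ⟨m, Or.inl hm.symm.le⟩
    · obtain ⟨m, hm⟩ := ENat.ne_top_iff_exists.1 (Set.encard_ne_top_iff.2 h)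
      exact ⟨m, Or.inr hm.symm.le⟩
  choose m hm using h1
  obtain ⟨B, hB⟩ := (hT.image m).bddAbove
  refine ⟨B, fun z => ?_⟩
  obtain ⟨r, hr, e, he⟩ := hT2 z
  have key : ∀ y, φ.Realize (Sum.elim z fun _ => e y) ↔ φ.Realize (Sum.elim r fun _ => y) := by
    intro y
    rw [← realize_equiv e φ (Sum.elim r fun _ => y)]
    apply iff_of_eq
    congr 1
    funext x
    rcases x with x | x
    · exact (he x).symm
    · rfl
  have hle : ((m r : ℕ) : ℕ∞) ≤ B := by exact_mod_cast hB ⟨r, hr, rfl⟩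
  have hs : {y | φ.Realize (Sum.elim z fun _ => y)} = e '' {y | φ.Realize (Sum.elim r fun _ => y)} := by
    ext y
    constructor
    · intro hy
      refine ⟨e.symm y, ?_, by simp⟩
      have := key (e.symm y)
      rw [show e (e.symm y) = y by simp] at this
      exact this.1 hy
    · rintro ⟨y, hy, rfl⟩
      exact (key y).2 hy
  have hD : D = e '' D := by
    ext y
    constructor
    · intro hy
      exact ⟨e.symm y, (D_inv H _).2 hy, by simp⟩
    · rintro ⟨y, hy, rfl⟩
      exact (D_inv H _).2 hy
  rw [hs]
  rcases hm r with h | h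
  · left
    rw [hD, ← Set.image_inter e.injective, e.injective.encard_image]
    exact h.trans hle
  · right
    rw [hD, ← Set.image_sdiff e.injective, e.injective.encard_image]
    exact h.trans hle

end Acl

end Paper

namespace Paper

section Indep

variable {L : FirstOrder.Language.{0, 0}} {M : Type} [L.Structure M] {D : Set M}

local notation "acl" => aclSet L M

def lset (l : List M) : Set M := {x | x ∈ l}

theorem lset_fin (l : List M) : (lset l).Finite := List.finite_toSet l

theorem lset_cons (x : M) (l : List M) : lset (x :: l) = insert x (lset l) := by
  ext y; simp [lset]

theorem lset_nil : lset ([] : List M) = ∅ := by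
  ext y; simp [lset]

theorem lset_append (l l' : List M) : lset (l ++ l') = lset l ∪ lset l' := by
  ext y; simp [lset]

theorem lset_map (e : M ≃[L] M) (l : List M) : lset (l.map e) = e '' lset l := by
  ext y; simp [lset]

variable (L D) in
def Ind (C : Set M) : List M → Prop
  | [] => True
  | x :: l => x ∈ D ∧ x ∉ aclSet L M (C ∪ lset l) ∧ Ind C l

theorem Ind.subD {C : Set M} : ∀ {l : List M}, Ind L D C l → lset l ⊆ D
  | [], _ => by rw [lset_nil]; exact Set.empty_subset _
  | x :: l, h => by
    rw [lset_cons]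
    exact Set.insert_subset h.1 h.2.2.subD

theorem Ind.map (H : Ctx L M D) {C : Set M} {e : M ≃[L] M} (he : Fixes C e) : ∀ {l : List M}, Ind L D C l →
    Ind L D C (l.map e)
  | [], _ => trivial
  | x :: l, h => by
    refine ⟨(D_inv H e).2 h.1, fun hx => h.2.1 ?_, h.2.2.map H he⟩
    have := acl_equiv e.symm hx
    rw [Set.image_union, he.symm.image, lset_map, Set.image_image] at this
    simpa using this

theorem ind_conj (H : Ctx L M D) {C : Set M} (hC : C.Finite) : ∀ {l l' : List M}, Ind L D C l →
    Ind L D C l' → l.length = l'.length → ∃ e : M ≃[L] M, Fixes C e ∧ l.map e = l'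
  | [], [], _, _, _ => ⟨Language.Equiv.refl L M, fun _ _ => rfl, rfl⟩
  | x :: l, x' :: l', h, h', hl => by
    obtain ⟨e, he, hel⟩ := ind_conj H hC h.2.2 h'.2.2 (by simpa using hl)
    have h1 := h.map H he
    rw [List.map_cons, hel] at h1
    obtain ⟨f, hf, hfx⟩ := gen H (hC.union (lset_fin l')) h1.1 h'.1 h1.2.1 h'.2.1
    refine ⟨f.comp e, he.comp (hf.mono Set.subset_union_left), ?_⟩
    rw [List.map_cons]
    congr 1
    rw [show (⇑(f.comp e) : M → M) = f ∘ e from rfl, ← List.map_map, hel]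
    conv_rhs => rw [← List.map_id l']
    apply List.map_congr_left
    intro y hy
    exact hf y (Or.inr hy)

theorem ind_append {C : Set M} (l' : List M) : ∀ {l : List M}, Ind L D C (l ++ l') ↔
    Ind L D (C ∪ lset l') l ∧ Ind L D C l'
  | [] => by simp [Ind]
  | x :: l => by
    have := ind_append (C := C) l' (l := l)
    have h1 : Ind L D C (x :: l ++ l') ↔ x ∈ D ∧ x ∉ aclSet L M (C ∪ lset (l ++ l')) ∧
      Ind L D C (l ++ l') := Iff.rfl
    have h2 : Ind L D (C ∪ lset l') (x :: l) ↔ x ∈ D ∧ x ∉ aclSet L M (C ∪ lset l' ∪ lset l) ∧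
      Ind L D (C ∪ lset l') l := Iff.rfl
    rw [h1, h2, this, lset_append, Set.union_comm (lset l), Set.union_assoc]
    tauto

theorem Ind.mono (H : Ctx L M D) {C C' : Set M} (hC : C' ⊆ acl C) : ∀ {l : List M}, Ind L D C l →
    Ind L D C' l
  | [], _ => trivial
  | x :: l, h => by
    refine ⟨h.1, fun hx => h.2.1 (acl_le H ?_ hx), h.2.2.mono H hC⟩
    exact Set.union_subset (hC.trans (acl_mono Set.subset_union_left))
      (Set.subset_union_right.trans (subset_acl _))

theorem ind_exists (H : Ctx L M D) {C : Set M} (hC : C.Finite) : ∀ n, ∃ l : List M, l.length = n ∧ Ind L D C l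
  | 0 => ⟨[], rfl, trivial⟩
  | n+1 => by
    obtain ⟨l, h1, h2⟩ := ind_exists H hC n
    obtain ⟨b, h3, h4⟩ := exists_gen H (hC.union (lset_fin l))
    exact ⟨b :: l, by simp [h1], h3, h4, h2⟩

theorem ind_sub (H : Ctx L M D) {C : Set M} : ∀ (l : List M), lset l ⊆ D → ∃ l' : List M,
    lset l' ⊆ lset l ∧ Ind L D C l' ∧ lset l ⊆ acl (C ∪ lset l')
  | [], _ => ⟨[], subset_rfl, trivial, by rw [lset_nil]; exact Set.empty_subset _⟩
  | x :: l, h => by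
    rw [lset_cons] at h ⊢
    obtain ⟨l', h1, h2, h3⟩ := ind_sub H (C := C) l ((Set.subset_insert _ _).trans h)
    by_cases hx : x ∈ acl (C ∪ lset l')
    · exact ⟨l', h1.trans (Set.subset_insert _ _), h2, Set.insert_subset hx h3⟩
    · refine ⟨x :: l', ?_, ⟨h (Set.mem_insert _ _), hx, h2⟩, ?_⟩
      · rw [lset_cons]; exact Set.insert_subset_insert h1
      · rw [lset_cons]
        refine Set.insert_subset (subset_acl _ (Or.inr (Set.mem_insert _ _))) (h3.trans (acl_mono ?_))
        exact Set.union_subset_union_right _ (Set.subset_insert _ _)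

theorem ind_disj (H : Ctx L M D) {C Z : Set M} (hC : C.Finite) {p : M} (hp : p ∈ D)
    (h1 : p ∈ acl (C ∪ Z)) : ∀ {l : List M}, Ind L D (C ∪ Z) l → p ∈ acl (C ∪ lset l) → p ∈ acl C
  | [], _, h => by rwa [lset_nil, Set.union_empty] at h
  | x :: l, hI, h => by
    by_cases hpl : p ∈ acl (C ∪ lset l)
    · exact ind_disj H hC hp h1 hI.2.2 hpl
    · exfalso
      rw [lset_cons, Set.union_insert] at h
      have := exchange H (hC.union (lset_fin l)) hp hI.1 h hpl
      apply hI.2.1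
      refine acl_le H ?_ this
      refine Set.insert_subset (acl_mono Set.subset_union_left h1) ?_
      refine Set.Subset.trans ?_ (subset_acl _)
      exact Set.union_subset_union_left _ Set.subset_union_left

theorem cl_closed (H : Ctx L M D) (A : Set M) : IsAclClosedIn L M D (acl A ∩ D) := by
  refine ⟨Set.inter_subset_right, ?_⟩
  apply Set.Subset.antisymm
  · exact Set.inter_subset_inter_left _ (acl_le H Set.inter_subset_left)
  · exact Set.subset_inter (subset_acl _) Set.inter_subset_right

theorem step_claim (H : Ctx L M D) (hmod : ModularGeometryOn L M D) {C Z : Set M} (hC : C.Finite)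
    (hZ : Z ⊆ D) {X : List M} (hX : Ind L D (C ∪ Z) X) {d : M} (hd : d ∈ D)
    (h1 : d ∈ acl (C ∪ lset X)) (h2 : d ∉ acl ((acl C ∩ D) ∪ lset X)) :
    d ∉ acl ((acl C ∩ D) ∪ Z ∪ lset X) := by
  intro h3
  set Y := acl C ∩ D with hY
  have hYC : Y ⊆ acl C := Set.inter_subset_left
  have hXD := hX.subD
  have key := hmod (acl (Y ∪ lset X) ∩ D) (acl (Y ∪ Z) ∩ D) (acl (Y ∪ insert d (lset X)) ∩ D)
    (cl_closed H _) (cl_closed H _) (cl_closed H _)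
    (Set.inter_subset_inter_left _ (acl_mono (Set.union_subset_union_right _ (Set.subset_insert _ _))))
  have hdm : d ∈ (acl (acl (Y ∪ lset X) ∩ D ∪ acl (Y ∪ Z) ∩ D) ∩ D) ∩ (acl (Y ∪ insert d (lset X)) ∩ D) := by
    refine ⟨⟨acl_mono ?_ h3, hd⟩, subset_acl _ (Or.inr (Set.mem_insert _ _)), hd⟩
    rintro x ((hx | hx) | hx)
    · exact Or.inl ⟨subset_acl _ (Or.inl hx), hx.2⟩
    · exact Or.inr ⟨subset_acl _ (Or.inr hx), hZ hx⟩
    · exact Or.inl ⟨subset_acl _ (Or.inr hx), hXD hx⟩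
  rw [← key] at hdm
  apply h2
  refine acl_le H ?_ hdm.1
  rintro p (hp | ⟨hp1, hp2⟩)
  · exact hp.1
  · refine subset_acl _ (Or.inl ⟨?_, hp1.2⟩)
    refine ind_disj H hC hp1.2 ?_ hX ?_
    · refine acl_le H ?_ hp1.1
      exact Set.union_subset (hYC.trans (acl_mono Set.subset_union_left))
        (Set.subset_union_right.trans (subset_acl _))
    · refine acl_le H ?_ hp2.1
      refine Set.union_subset (hYC.trans (acl_mono Set.subset_union_left)) (Set.insert_subset h1 ?_)
      exact Set.subset_union_right.trans (subset_acl _)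

theorem word (H : Ctx L M D) (hmod : ModularGeometryOn L M D) {C : Set M} (hC : C.Finite)
    {X : List M} (hX : Ind L D C X) {d : M} (hd : d ∈ D)
    (h1 : d ∈ acl (C ∪ lset X)) (h2 : d ∉ acl ((acl C ∩ D) ∪ lset X)) (s : Set ℕ) :
    ∃ (b Q : ℕ → List M), Q 0 = [] ∧ ∀ k, Q (k+1) = b k ++ Q k ∧ Ind L D (acl C ∩ D) (Q k) ∧
      (b k).length = (d :: X).length ∧
      ((∃ h : M ≃[L] M, Fixes C h ∧ (d :: X).map h = b k) ↔ k ∈ s) := by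
  classical
  set Y := acl C ∩ D with hY
  have hYC : Y ⊆ acl C := Set.inter_subset_left
  have step : ∀ (k : ℕ) (q : {q : List M // Ind L D Y q}), ∃ b : List M, Ind L D Y (b ++ q.1) ∧
      b.length = (d :: X).length ∧
      ((∃ h : M ≃[L] M, Fixes C h ∧ (d :: X).map h = b) ↔ k ∈ s) := by
    rintro k ⟨q, hq⟩
    have hCq : (C ∪ lset q).Finite := hC.union (lset_fin q)
    have hsub : Y ∪ lset q ⊆ acl (C ∪ lset q) := Set.union_subset
      (hYC.trans (acl_mono Set.subset_union_left)) (Set.subset_union_right.trans (subset_acl _))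
    have hsub2 : C ⊆ acl (C ∪ lset q) := Set.subset_union_left.trans (subset_acl _)
    by_cases hk : k ∈ s
    · obtain ⟨X', hX'l, hX'⟩ := ind_exists H hCq X.length
      obtain ⟨g, hg, hgX⟩ := ind_conj H hC hX (hX'.mono H hsub2) hX'l.symm
      refine ⟨(d :: X).map g, ?_, by simp, iff_of_true ⟨g, hg, rfl⟩ hk⟩
      rw [ind_append]
      refine ⟨?_, hq⟩
      rw [List.map_cons, hgX]
      refine ⟨(D_inv H g).2 hd, ?_, hX'.mono H hsub⟩
      apply step_claim H hmod hC hq.subD hX' ((D_inv H g).2 hd)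
      · have := acl_equiv g h1
        rwa [Set.image_union, hg.image, ← lset_map, hgX] at this
      · intro h3
        apply h2
        have := acl_equiv g.symm h3
        rw [← hgX, lset_map, Set.image_union, Set.image_image] at this
        have e2 : (fun x => g.symm (g x)) '' lset X = lset X := by simp
        have e3 : g.symm '' (acl C ∩ D) = acl C ∩ D := by
          ext x
          constructor
          · rintro ⟨y, hy, rfl⟩
            exact ⟨(fixes_acl hg.symm).2 hy.1, (D_inv H _).2 hy.2⟩
          · rintro hx
            exact ⟨g x, ⟨(fixes_acl hg).2 hx.1, (D_inv H _).2 hx.2⟩, by simp⟩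
        rw [e2, e3] at this
        simpa using this
    · obtain ⟨b, hbl, hb⟩ := ind_exists H hCq (d :: X).length
      refine ⟨b, ?_, hbl, iff_of_false ?_ hk⟩
      · rw [ind_append]
        exact ⟨hb.mono H hsub, hq⟩
      · rintro ⟨h, hh, rfl⟩
        have hb' := hb.mono H hsub2
        apply hb'.2.1
        have := acl_equiv h h1
        rwa [Set.image_union, hh.image, ← lset_map] at this
  choose blk hb1 hb2 hb3 using step
  let Q : ℕ → {q : List M // Ind L D Y q} := fun k => k.rec ⟨[], trivial⟩
    (fun k q => ⟨blk k q ++ q.1, hb1 k q⟩)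
  exact ⟨fun k => blk k (Q k), fun k => (Q k).1, rfl, fun k => ⟨rfl, (Q k).2, hb2 _ _, hb3 _ _⟩⟩

theorem map_iff {n : List M} {r : List M} (hl : r.length = n.length) (h : M → M) :
    n.map h = r ↔ ∀ j : Fin n.length, h n[j] = r[j.1]'(lt_of_lt_of_eq j.2 hl.symm) := by
  constructor
  · rintro rfl j
    simp
  · intro hj
    apply List.ext_getElem (by simp [hl])
    intro i h1 h2
    rw [List.getElem_map]
    exact hj ⟨i, by simpa using h1⟩

theorem key_II [L.IsRelational] [Countable L.Symbols] [Infinite M] (H : Ctx L M D)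
    (hmod : ModularGeometryOn L M D)
    (hc : (Cardinal.aleph.{0} 1).Categorical (L.completeTheory M)) {C X : Set M} (hC : C.Finite)
    (hX : X.Finite) (hXD : X ⊆ D) : acl (C ∪ X) ∩ D ⊆ acl ((acl C ∩ D) ∪ X) := by
  rintro d ⟨hd1, hd⟩
  by_contra hd2
  obtain ⟨X₀, hX₀⟩ : ∃ l : List M, lset l = X := by
    refine ⟨hX.toFinset.toList, ?_⟩
    ext x; simp [lset]
  subst hX₀
  obtain ⟨X', h1, h2, h3⟩ := ind_sub H (C := C) X₀ hXD
  have h4 : d ∈ acl (C ∪ lset X') := acl_le H (Set.union_subset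
    (Set.subset_union_left.trans (subset_acl _)) h3) hd1
  have h5 : d ∉ acl ((acl C ∩ D) ∪ lset X') := fun h => hd2
    (acl_mono (Set.union_subset_union_right _ h1) h)
  obtain ⟨r, Q, hQ0, hQ⟩ := word H hmod hC h2 hd h4 h5 ∅
  obtain ⟨m, c, hcC⟩ := exists_enum hC
  let P : ℕ → Set (Fin m → M) := fun i => {v | ∃ h : M ≃[L] M, (∀ j, h (c j) = v j) ∧
    (d :: X').map h = r i}
  refine no_indep hc (rfl : M ≅[L] M) m P ?_ ?_
  · intro i
    have hl := (hQ i).2.2.1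
    have := def_section (A := Set.univ) (H.orb _ (Sum.elim (fun j : Fin (d :: X').length => (d :: X')[j]) c))
      (fun j => (r i)[j.1]'(lt_of_lt_of_eq j.2 hl.symm)) (fun _ => trivial)
    convert! this using 1
    ext v
    constructor
    · rintro ⟨h, hh1, hh2⟩
      refine ⟨h, ?_⟩
      rintro (j | j)
      · exact (map_iff hl h).1 hh2 j
      · exact hh1 j
    · rintro ⟨h, hh⟩
      exact ⟨h, fun j => hh (Sum.inr j), (map_iff hl h).2 fun j => hh (Sum.inl j)⟩
  · intro s k
    obtain ⟨b, Q', hQ0', hQ'⟩ := word H hmod hC h2 hd h4 h5 s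
    have hlen : ∀ k, (Q' k).length = (Q k).length := by
      intro k
      induction k with
      | zero => rw [hQ0, hQ0']
      | succ k ih => rw [(hQ k).1, (hQ' k).1, List.length_append, List.length_append, ih,
          (hQ k).2.2.1, (hQ' k).2.2.1]
    have hYf : (acl C ∩ D).Finite := (acl_finite H hC).subset Set.inter_subset_left
    obtain ⟨e, he, heQ⟩ := ind_conj H hYf (hQ' k).2.1 (hQ k).2.1 (hlen k)
    have hblk : ∀ k, (Q' k).map e = Q k → ∀ i < k, (b i).map e = r i := by
      intro k
      induction k with
      | zero => intro _ i hi; omega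
      | succ k ih =>
        intro hk i hi
        rw [(hQ k).1, (hQ' k).1, List.map_append] at hk
        obtain ⟨hk1, hk2⟩ := List.append_inj hk (by rw [List.length_map, (hQ k).2.2.1, (hQ' k).2.2.1])
        rcases Nat.lt_succ_iff_lt_or_eq.1 hi with hi | rfl
        · exact ih hk2 i hi
        · exact hk1
    refine ⟨fun j => e (c j), fun i hi => ?_⟩
    rw [← (hQ' i).2.2.2]
    have hbi := hblk k heQ i hi
    constructor
    · rintro ⟨h, hh1, hh2⟩
      refine ⟨e.symm.comp h, ?_, ?_⟩
      · rw [← hcC]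
        rintro _ ⟨j, rfl⟩
        show e.symm (h (c j)) = c j
        rw [hh1]; simp
      · rw [show (⇑(e.symm.comp h) : M → M) = e.symm ∘ h from rfl, ← List.map_map, hh2, ← hbi,
          List.map_map]
        conv_rhs => rw [← List.map_id (b i)]
        apply List.map_congr_left
        intro y hy
        simp
    · rintro ⟨h, hh1, hh2⟩
      refine ⟨e.comp h, fun j => ?_, ?_⟩
      · show e (h (c j)) = e (c j)
        rw [hh1 _ (hcC ▸ ⟨j, rfl⟩)]
      · rw [show (⇑(e.comp h) : M → M) = e ∘ h from rfl, ← List.map_map, hh2, hbi]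

end Indep

end Paper

namespace Paper

section Ext

variable {L : FirstOrder.Language.{0, 0}} {M : Type} [L.Structure M]

theorem def_sec' {α β : Type} {A : Set M} {S : Set (α ⊕ β → M)} (h : A.Definable L S)
    (w : β → M) (hw : ∀ b, w b ∈ A) : A.Definable L {x : α → M | Sum.elim x w ∈ S} := by
  obtain ⟨n, S0, a, h1, h2, rfl⟩ := def_of_section h
  let σ : Fin n ⊕ (α ⊕ β) → (Fin n ⊕ β) ⊕ α := Sum.elim (fun i => Sum.inl (Sum.inl i))
    (Sum.elim Sum.inr (fun b => Sum.inl (Sum.inr b)))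
  have h3 := h1.preimage_comp σ
  have h4 := def_section (A := A) h3 (Sum.elim a w) (by rintro (i | i); exacts [h2 i, hw i])
  convert! h4 using 1
  ext x
  have : (Sum.elim (Sum.elim a w) x) ∘ σ = Sum.elim a (Sum.elim x w) := by
    funext j
    rcases j with j | j | j <;> rfl
  show _ ↔ (Sum.elim (Sum.elim a w) x) ∘ σ ∈ S0
  rw [this]
  rfl

variable {D : Set M}

def DS (N : Type) [L.Structure N] (δ : L.Formula (Fin 1)) : Set N := {x | δ.Realize (fun _ => x)}

theorem exists_dform (H : Ctx L M D) : ∃ δ : L.Formula (Fin 1), D = DS M δ := by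
  obtain ⟨φ, hφ⟩ := Set.empty_definable_iff.1 H.ddef
  refine ⟨φ, ?_⟩
  ext b
  have h1 : (fun _ => b) ∈ {x : Fin 1 → M | x 0 ∈ D} ↔ φ.Realize (fun _ => b) := by rw [hφ]; rfl
  exact h1

variable {W : Type} (V : Ultrafilter W) [Nonempty M]

theorem up_DS (δ : L.Formula (Fin 1)) (f : W → M) : up V f ∈ DS (UP V M) δ ↔
    ∀ᶠ w in (V : Filter W), f w ∈ DS M δ := up_realize V δ (fun _ => f)

theorem up_realize_sum {k : ℕ} (φ : L.Formula (Fin k ⊕ Fin 1)) (f : Fin k → W → M) (g : W → M) :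
    φ.Realize (Sum.elim (fun i => up V (f i)) (fun _ => up V g)) ↔
    ∀ᶠ w in (V : Filter W), φ.Realize (Sum.elim (fun i => f i w) fun _ => g w) := by
  have := up_realize V φ (Sum.elim f (fun _ => g))
  have e1 : (fun i => up V (Sum.elim f (fun _ : Fin 1 => g) i)) =
      Sum.elim (fun i => up V (f i)) (fun _ => up V g) := by
    funext x; rcases x with x | x <;> rfl
  have e2 : ∀ w, (fun i => Sum.elim f (fun _ : Fin 1 => g) i w) =
      Sum.elim (fun i => f i w) (fun _ => g w) := by
    intro w; funext x; rcases x with x | x <;> rfl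
  rw [e1] at this
  rw [this]
  apply iff_of_eq
  congr 1
  funext w
  exact congrArg φ.Realize (e2 w)

/-- many pointwise solutions give many solutions -/
theorem up_many (m : ℕ) (P : W → Set M) (h : ∀ᶠ w in (V : Filter W), (m : ℕ∞) ≤ (P w).encard) :
    ∃ s : Fin m → W → M, (Function.Injective fun j => up V (s j)) ∧
      ∀ᶠ w in (V : Filter W), ∀ j, s j w ∈ P w := by
  classical
  have h1 : ∀ w, ∃ t : Fin m → M, (m : ℕ∞) ≤ (P w).encard → Function.Injective t ∧ ∀ j, t j ∈ P w := by
    intro w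
    by_cases hw : (m : ℕ∞) ≤ (P w).encard
    · obtain ⟨t, ht1, ht2⟩ := Set.exists_subset_encard_eq hw
      have hf : t.Finite := Set.finite_of_encard_eq_coe ht2
      have hf' : Finite t := hf
      have : Nat.card t = m := by
        rw [Nat.card_coe_set_eq, Set.ncard, ht2]; rfl
      let e := Finite.equivFinOfCardEq this
      exact ⟨fun j => (e.symm j).1, fun _ => ⟨fun i j hij => e.symm.injective (Subtype.ext hij),
        fun j => ht1 (e.symm j).2⟩⟩
    · exact ⟨fun _ => Classical.arbitrary M, fun h => absurd h hw⟩
  choose t ht using h1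
  refine ⟨fun j w => t w j, ?_, ?_⟩
  · intro i j hij
    by_contra hne
    obtain ⟨w, hw1, hw2⟩ := (h.and ((up_eq V).1 hij)).exists
    exact hne ((ht w hw1).1 hw2)
  · filter_upwards [h] with w hw using (ht w hw).2

theorem up_unif (H : Ctx L M D) (δ : L.Formula (Fin 1)) (hδ : D = DS M δ) {k : ℕ}
    (φ : L.Formula (Fin k ⊕ Fin 1)) (z : Fin k → UP V M) :
    ({y | φ.Realize (Sum.elim z fun _ => y)} ∩ DS (UP V M) δ).Finite ∨
    (DS (UP V M) δ \ {y | φ.Realize (Sum.elim z fun _ => y)}).Finite := by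
  obtain ⟨m, hm⟩ := unif H φ
  by_contra hcon
  push Not at hcon
  obtain ⟨h1, h2⟩ := hcon
  choose f hf using fun i => up_surj V (z i)
  obtain rfl : (fun i => up V (f i)) = z := funext hf
  obtain ⟨A, hA1, hA2, hA3⟩ := Set.Infinite.exists_subset_ncard_eq h1 (m+1)
  obtain ⟨B, hB1, hB2, hB3⟩ := Set.Infinite.exists_subset_ncard_eq h2 (m+1)
  have aux : ∀ A : Set (UP V M), A.Finite → A.ncard = m + 1 → ∀ P : W → Set M,
      (∀ g, up V g ∈ A → ∀ᶠ w in (V : Filter W), g w ∈ P w) →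
      ∀ᶠ w in (V : Filter W), ((m + 1 : ℕ) : ℕ∞) ≤ (P w).encard := by
    intro A hA hA' P hP
    have hf' : Finite A := hA
    have : Nat.card A = m + 1 := by rw [Nat.card_coe_set_eq, hA']
    let e := Finite.equivFinOfCardEq this
    choose g hg using fun j => up_surj V (e.symm j).1
    have h3 : ∀ᶠ w in (V : Filter W), ∀ j, g j w ∈ P w := by
      rw [Filter.eventually_all]
      intro j
      apply hP
      rw [hg]; exact (e.symm j).2
    have h4 : ∀ᶠ w in (V : Filter W), ∀ i j, g i w = g j w → i = j := by
      rw [Filter.eventually_all]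
      intro i
      rw [Filter.eventually_all]
      intro j
      by_cases hij : i = j
      · exact Filter.Eventually.of_forall fun _ _ => hij
      · have : ¬ (∀ᶠ w in (V : Filter W), g i w = g j w) := by
          rw [← up_eq, hg, hg]
          intro h
          exact hij (e.symm.injective (Subtype.ext h))
        rw [← Ultrafilter.eventually_not] at this
        filter_upwards [this] with w hw h using absurd h hw
    filter_upwards [h3, h4] with w hw3 hw4
    have h5 : (Set.range fun j => g j w) ⊆ P w := by rintro _ ⟨j, rfl⟩; exact hw3 j
    have h6 : Function.Injective fun j => g j w := fun i j h => hw4 i j h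
    refine le_trans ?_ (Set.encard_le_encard h5)
    rw [← Set.image_univ, h6.encard_image, Set.encard_univ]
    simp
  have a1 := aux A hA2 hA3 (fun w => {y | φ.Realize (Sum.elim (fun i => f i w) fun _ => y)} ∩ D) (by
    intro g hg
    have := hA1 hg
    have h5 := (up_realize_sum V φ f g).1 this.1
    have h6 := (up_DS V δ g).1 this.2
    rw [← hδ] at h6
    exact h5.and h6)
  have a2 := aux B hB2 hB3 (fun w => D \ {y | φ.Realize (Sum.elim (fun i => f i w) fun _ => y)}) (by
    intro g hg
    have := hB1 hg
    have h5 : ¬ (∀ᶠ w in (V : Filter _), φ.Realize (Sum.elim (fun i => f i w) fun _ => g w)) :=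
      fun h => this.2 ((up_realize_sum V φ f g).2 h)
    rw [← Ultrafilter.eventually_not] at h5
    have h6 := (up_DS V δ g).1 this.1
    rw [← hδ] at h6
    exact h6.and h5)
  obtain ⟨w, hw1, hw2⟩ := (a1.and a2).exists
  have : ¬ ((m + 1 : ℕ) : ℕ∞) ≤ m := by
    rw [Nat.cast_le]; omega
  rcases hm (fun i => f i w) with h | h
  · exact this (hw1.trans h)
  · exact this (hw2.trans h)

variable [L.IsRelational] [Countable L.Symbols] [Infinite M]

theorem up_acl (H : Ctx L M D) (hmod : ModularGeometryOn L M D)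
    (hc : (Cardinal.aleph.{0} 1).Categorical (L.completeTheory M))
    (δ : L.Formula (Fin 1)) (hδ : D = DS M δ) (E : Set M) (hE : (aclSet L M E ∩ D).Finite)
    (A : Set (UP V M)) (hA : ∀ x ∈ A, (∃ f, up V f = x ∧ ∀ᶠ w in (V : Filter W), f w ∈ E) ∨
      ∃ d ∈ D, up V (fun _ => d) = x) :
    aclSet L (UP V M) A ∩ DS (UP V M) δ ⊆ (fun d => up V (fun _ => d)) '' D := by
  classical
  rintro b ⟨⟨k, φ, a, ha, hb1, hb2⟩, hb3⟩
  obtain ⟨g, rfl⟩ := up_surj V b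
  have h1 : ∀ i, ∃ f : W → M, up V f = a i ∧ ((∀ᶠ w in (V : Filter W), f w ∈ E) ∨
      ∃ d ∈ D, f = fun _ => d) := by
    intro i
    rcases hA _ (ha i) with ⟨f, h1, h2⟩ | ⟨d, h1, h2⟩
    · exact ⟨f, h1, Or.inl h2⟩
    · exact ⟨_, h2, Or.inr ⟨d, h1, rfl⟩⟩
  choose f hf1 hf2 using h1
  obtain rfl : (fun i => up V (f i)) = a := funext hf1
  let X : Set M := {d | d ∈ D ∧ ∃ i, f i = fun _ => d}
  have hXf : X.Finite := by
    obtain ⟨w₀, -⟩ := (Filter.Eventually.of_forall (f := (V : Filter W)) (p := fun _ => True) fun _ => trivial).exists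
    refine (Set.finite_range fun i => f i w₀).subset ?_
    rintro d ⟨-, i, hi⟩
    exact ⟨i, by simp [hi]⟩
  have hXD : X ⊆ D := fun d hd => hd.1
  set Y := aclSet L M E ∩ D with hY
  have hYX : (aclSet L M (Y ∪ X)).Finite := acl_finite H (hE.union hXf)
  have e1 : ∀ᶠ w in (V : Filter W), ∀ i, f i w ∈ E ∪ X := by
    rw [Filter.eventually_all]
    intro i
    rcases hf2 i with h | ⟨d, hd, h⟩
    · filter_upwards [h] with w hw using Or.inl hw
    · refine Filter.Eventually.of_forall fun w => Or.inr ⟨by rw [h]; exact hd, i, ?_⟩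
      rw [h]
  have e2 := (up_realize_sum V φ f g).1 hb1
  have e3 := (up_DS V δ g).1 hb3
  have e4 : ∀ᶠ w in (V : Filter W), {c | φ.Realize (Sum.elim (fun i => f i w) fun _ => c)}.Finite := by
    by_contra hcon
    rw [← Ultrafilter.eventually_not] at hcon
    set m := {c | φ.Realize (Sum.elim (fun i => up V (f i)) fun _ => c)}.ncard with hm
    obtain ⟨s, hs1, hs2⟩ := up_many V (m+1) (fun w => {c | φ.Realize (Sum.elim (fun i => f i w) fun _ => c)}) (by
      filter_upwards [hcon] with w hw
      rw [Set.Infinite.encard_eq hw]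
      exact le_top)
    have hsub : Set.range (fun j => up V (s j)) ⊆ {c | φ.Realize (Sum.elim (fun i => up V (f i)) fun _ => c)} := by
      rintro _ ⟨j, rfl⟩
      refine (up_realize_sum V φ f (s j)).2 ?_
      filter_upwards [hs2] with w hw using hw j
    have h7 := Set.ncard_le_ncard hsub hb2
    rw [← Set.image_univ, Set.ncard_image_of_injective _ hs1, Set.ncard_univ, Nat.card_fin] at h7
    omega
  have e5 : ∀ᶠ w in (V : Filter W), g w ∈ aclSet L M (Y ∪ X) ∩ D := by
    filter_upwards [e1, e2, e3, e4] with w h1 h2 h3 h4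
    rw [← hδ] at h3
    refine ⟨?_, h3⟩
    have h5 : g w ∈ aclSet L M (Set.range fun i => f i w) := ⟨k, φ, _, fun i => ⟨i, rfl⟩, h2, h4⟩
    let C : Set M := (Set.range fun i => f i w) ∩ E
    have hC : C.Finite := (Set.finite_range _).subset Set.inter_subset_left
    have h6 : g w ∈ aclSet L M (C ∪ X) := by
      refine acl_mono ?_ h5
      rintro _ ⟨i, rfl⟩
      rcases h1 i with h | h
      · exact Or.inl ⟨⟨i, rfl⟩, h⟩
      · exact Or.inr h
    refine acl_mono ?_ (key_II H hmod hc hC hXf hXD ⟨h6, h3⟩)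
    exact Set.union_subset_union_left _ (Set.inter_subset_inter_left _ (acl_mono Set.inter_subset_right))
  have hfin : (aclSet L M (Y ∪ X) ∩ D).Finite := hYX.subset Set.inter_subset_left
  have := (Ultrafilter.eventually_exists_mem_iff hfin (f := V) (P := fun d w => g w = d)).1 (by
    filter_upwards [e5] with w hw using ⟨_, hw, rfl⟩)
  obtain ⟨d, hd, hgd⟩ := this
  exact ⟨d, hd.2, ((up_eq V).2 hgd).symm⟩

theorem ext_model (H : Ctx L M D) 
    (hc : (Cardinal.aleph.{0} 1).Categorical (L.completeTheory M))
    (δ : L.Formula (Fin 1)) (hδ : D = DS M δ) (A D₁ : Set (UP V M)) (hinf : D₁.Infinite)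
    (hD : D₁ ⊆ DS (UP V M) δ) (hDA : D₁ ⊆ A)
    (hA : aclSet L (UP V M) A ∩ DS (UP V M) δ ⊆ D₁) :
    ∃ S : L.ElementarySubstructure (UP V M), A ⊆ S ∧ (S : Set (UP V M)) ∩ DS (UP V M) δ ⊆ D₁ := by
  classical
  obtain ⟨N, hAN, hN⟩ := zorn_subset_nonempty {N : Set (UP V M) | aclSet L (UP V M) N ∩ DS (UP V M) δ ⊆ D₁}
    (by
      intro c hc hchain hne
      refine ⟨⋃₀ c, ?_, fun s hs => Set.subset_sUnion_of_mem hs⟩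
      rintro b ⟨hb, hb'⟩
      obtain ⟨F, hF1, hF2, hF3⟩ := acl_fin hb
      obtain ⟨N, hN, hFN⟩ := DirectedOn.exists_mem_subset_of_finite_of_subset_sUnion hne
        hchain.directedOn hF2 hF1
      exact hc hN ⟨acl_mono hFN hF3, hb'⟩) A hA
  have meets : L.MeetsDefinable N := by
    intro s hne hs
    obtain ⟨x, hx⟩ := hne
    obtain ⟨Ψ, p1, p2, ⟨c, hcΨ⟩, p4⟩ := dens hc (up_equiv (L := L) (M := M) V) N _ hs ⟨fun _ => x, hx⟩
    refine ⟨c 0, p1 hcΨ, ?_⟩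
    by_contra hcN
    have hnot : ¬ (aclSet L (UP V M) (insert (c 0) N) ∩ DS (UP V M) δ ⊆ D₁) := by
      intro h
      exact hcN (hN.2 h (Set.subset_insert _ _) (Set.mem_insert _ _))
    obtain ⟨d, ⟨⟨k, θ, a, ha, hθ1, hθ2⟩, hdD⟩, hd1⟩ := Set.not_subset.1 hnot
    obtain ⟨n₀, hn₀⟩ := hinf.nonempty
    have hn₀N : n₀ ∈ N := hAN (hDA hn₀)
    let σ : Fin k ⊕ Fin 1 → Fin k ⊕ (Fin 1 ⊕ Fin 1) := Sum.elim
      (fun i => if a i ∈ N then Sum.inl i else Sum.inr (Sum.inl 0)) (fun j => Sum.inr (Sum.inr j))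
    let w : Fin k → UP V M := fun i => if a i ∈ N then a i else n₀
    have hΘ := def_section (A := N) ((formula_def (M := UP V M) θ).preimage_comp σ) w (by
      intro i
      by_cases h : a i ∈ N
      · simp only [w, if_pos h]; exact h
      · simp only [w, if_neg h]; exact hn₀N)
    set Θ : Set (Fin 1 ⊕ Fin 1 → UP V M) := {z | Sum.elim w z ∈ (fun g => g ∘ σ) ⁻¹' {v | θ.Realize v}} with hΘdef
    have hsub : ∀ y : UP V M, Sum.elim c (fun _ => y) ∈ Θ ↔ θ.Realize (Sum.elim a fun _ => y) := by
      intro y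
      have : (Sum.elim w (Sum.elim c (fun _ : Fin 1 => y))) ∘ σ = Sum.elim a fun _ => y := by
        funext j
        rcases j with i | j
        · by_cases h : a i ∈ N
          · simp [σ, w, h]
          · have : a i = c 0 := (ha i).resolve_right h
            simp [σ, w, h, this, hcN]
        · rfl
      rw [← this]
      rfl
    let χ : Set (Fin 1 → UP V M) := ((fun g : Fin 1 ⊕ Fin 1 → UP V M => g ∘ Sum.inr) ''
      (((fun g : Fin 1 ⊕ Fin 1 → UP V M => g ∘ Sum.inl) ⁻¹' Ψ) ∩ Θ)) ∩ {v | δ.Realize v}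
    have hχ : N.Definable L χ := by
      refine Set.Definable.inter (Set.Definable.image_comp (Set.Definable.inter ?_ hΘ) _) ?_
      · exact p2.preimage_comp _
      · exact (formula_def δ).mono (Set.empty_subset _)
    obtain ⟨n, χf, e, he1, he2⟩ := definable_iff_fin.1 hχ
    have hdχ : (fun _ => d) ∈ χ := by
      refine ⟨⟨Sum.elim c (fun _ => d), ⟨?_, (hsub d).2 hθ1⟩, ?_⟩, hdD⟩
      · show (Sum.elim c (fun _ : Fin 1 => d)) ∘ Sum.inl ∈ Ψ
        rw [Sum.elim_comp_inl]; exact hcΨ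
      · funext j; rfl
    rcases up_unif V H δ hδ χf e with h | h
    · apply hd1
      refine hN.1 ⟨⟨n, χf, e, he1, (he2 _).1 hdχ, ?_⟩, hdD⟩
      refine h.subset fun y hy => ⟨hy, ?_⟩
      exact ((he2 _).2 hy).2
    · have hinf2 := hinf.sdiff h
      refine hinf2 (hθ2.subset ?_)
      rintro y ⟨hy1, hy2⟩
      have hyχ : (fun _ => y) ∈ χ := by
        rw [he2]
        by_contra hcon
        exact hy2 ⟨hD hy1, hcon⟩
      obtain ⟨⟨g, ⟨hg1, hg2⟩, hg3⟩, -⟩ := hyχ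
      have hyN : y ∈ N := hAN (hDA hy1)
      have hdef := def_sec' hΘ (fun _ : Fin 1 => y) (fun _ => hyN)
      have hgin : g = Sum.elim (g ∘ Sum.inl) (fun _ => y) := by
        rw [← hg3, Sum.elim_comp_inl_inr]
      rcases p4 _ hdef with h | h
      · exact (hsub y).1 (h hcΨ)
      · exfalso
        refine Set.disjoint_left.1 h hg1 ?_
        show Sum.elim (g ∘ Sum.inl) (fun _ => y) ∈ Θ
        rw [← hgin]; exact hg2
  obtain ⟨S, hS⟩ := exists_elem meets
  refine ⟨S, by rw [hS]; exact hAN, ?_⟩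
  rw [hS]
  exact (Set.inter_subset_inter_left _ (subset_acl N)).trans hN.1

theorem env_fin [Countable M] (H : Ctx L M D) (hmod : ModularGeometryOn L M D)
    (hc : (Cardinal.aleph.{0} 1).Categorical (L.completeTheory M))
    (E : Set M) (hE : (aclSet L M E ∩ D).Finite) : E.Finite := by
  by_contra hEinf
  obtain ⟨δ, hδ⟩ := exists_dform H
  obtain ⟨U, hU1, hU2⟩ := exists_nonprincipal E hEinf
  let V := emUltra W1 U
  let D₁ : Set (UP V M) := (fun d => up V (fun _ => d)) '' D
  have hinj : Function.Injective (fun d : M => up V (fun _ => d)) := by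
    intro a b h
    obtain ⟨w, hw⟩ := ((up_eq V).1 h).exists
    exact hw
  let A : Set (UP V M) := Set.range (fun i : W1 => up V (fun w => w i)) ∪ D₁
  have hA : aclSet L (UP V M) A ∩ DS (UP V M) δ ⊆ D₁ := by
    apply up_acl V H hmod hc δ hδ E hE
    rintro x (⟨i, rfl⟩ | ⟨d, hd, rfl⟩)
    · exact Or.inl ⟨_, rfl, em_mem U i E hU1⟩
    · exact Or.inr ⟨d, hd, rfl⟩
  obtain ⟨S, hS1, hS2⟩ := ext_model V H hc δ hδ A D₁ (H.inf.image hinj.injOn) (by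
    rintro _ ⟨d, hd, rfl⟩
    rw [up_DS]
    rw [hδ] at hd
    exact Filter.Eventually.of_forall fun _ => hd) Set.subset_union_right hA
  have hScard : Cardinal.aleph.{0} 1 ≤ Cardinal.mk S := by
    rw [← mk_W1]
    refine Cardinal.mk_le_of_injective (f := fun i : W1 => (⟨up V (fun w => w i), hS1 (Or.inl ⟨i, rfl⟩)⟩ : S)) ?_
    intro i j h
    exact up_var_inj U hU2 (congrArg Subtype.val h)
  obtain ⟨S', -, hS'⟩ := ls (L := L) (N := S) ∅ (Cardinal.aleph.{0} 1) (Cardinal.aleph0_le_aleph 1)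
    (by simp) hScard
  have hScount : (DS S' δ).Countable := by
    have h1 : D₁.Countable := (Set.to_countable D).image _
    have h2 : Function.Injective (fun x : S' => ((x : S) : UP V M)) :=
      fun x y h => Subtype.ext (Subtype.ext h)
    refine (h1.preimage h2).mono ?_
    intro x hx
    apply hS2
    refine ⟨(x : S).2, ?_⟩
    have h3 := (elem_realize S' δ (fun _ => x)).2 hx
    exact (elem_realize S δ (fun _ => (x : S))).2 h3
  have hS'M : S' ≅[L] M := S'.elementarilyEquivalent.trans
    (S.elementarilyEquivalent.trans (up_equiv V))
  obtain ⟨U', hU1', hU2'⟩ := exists_nonprincipal D H.inf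
  let V' := emUltra W1 U'
  have hrange : Cardinal.mk (Set.range (fun i : W1 => up V' (fun w : W1 → M => w i))) = Cardinal.aleph.{0} 1 := by
    rw [Cardinal.mk_range_eq _ (up_var_inj U' hU2'), mk_W1]
  obtain ⟨S'', hS''1, hS''2⟩ := ls (L := L) (N := UP V' M) (Set.range (fun i : W1 => up V' (fun w => w i)))
    (Cardinal.aleph.{0} 1) (Cardinal.aleph0_le_aleph 1) hrange.le (by
      rw [← hrange]; exact Cardinal.mk_set_le _)
  have ne1 : Nonempty S' := by
    rw [← Cardinal.mk_ne_zero_iff, hS']; exact (Cardinal.aleph_pos 1).ne'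
  have ne2 : Nonempty S'' := by
    rw [← Cardinal.mk_ne_zero_iff, hS''2]; exact (Cardinal.aleph_pos 1).ne'
  obtain ⟨e⟩ := cat_iso hc (N := S'') (N' := S') (S''.elementarilyEquivalent.trans (up_equiv V')) hS'M
    hS''2 hS'
  let q : W1 → S'' := fun i => ⟨up V' (fun w => w i), hS''1 ⟨i, rfl⟩⟩
  have hq : ∀ i, e (q i) ∈ DS S' δ := by
    intro i
    refine (realize_equiv e δ (fun _ => q i)).2 ?_
    refine (elem_realize S'' δ (fun _ => q i)).1 ?_
    refine (up_DS V' δ (fun w => w i)).2 ?_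
    rw [← hδ]
    exact em_mem U' i D hU1'
  have hcw : Countable W1 := by
    have : Countable (DS S' δ) := hScount.to_subtype
    refine Function.Injective.countable (f := fun i => (⟨e (q i), hq i⟩ : DS S' δ)) ?_
    intro i j h
    have h1 : q i = q j := e.injective (congrArg Subtype.val h)
    exact up_var_inj U' hU2' (congrArg Subtype.val h1)
  rw [← Cardinal.mk_le_aleph0_iff, mk_W1] at hcw
  exact absurd hcw (not_le.2 (Cardinal.aleph0_lt_aleph_one))

theorem exists_env [Countable M] (H : Ctx L M D) (hmod : ModularGeometryOn L M D)
    (hc : (Cardinal.aleph.{0} 1).Categorical (L.completeTheory M))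
    (F : Set M) (hF : F.Finite) : ∃ E, F ⊆ E ∧ E.Finite ∧ IsEnvelope L M D E := by
  obtain ⟨E, hFE, hE⟩ := zorn_subset_nonempty {E : Set M | aclSet L M E ∩ D ⊆ aclSet L M F}
    (by
      intro c hc hchain hne
      refine ⟨⋃₀ c, ?_, fun s hs => Set.subset_sUnion_of_mem hs⟩
      rintro b ⟨hb, hb'⟩
      obtain ⟨F', hF1, hF2, hF3⟩ := acl_fin hb
      obtain ⟨N, hN, hFN⟩ := DirectedOn.exists_mem_subset_of_finite_of_subset_sUnion hne
        hchain.directedOn hF2 hF1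
      exact hc hN ⟨acl_mono hFN hF3, hb'⟩) F Set.inter_subset_left
  have hfin : (aclSet L M E ∩ D).Finite := (acl_finite H hF).subset hE.1
  refine ⟨E, hFE, env_fin H hmod hc E hfin, F, hFE, ?_, ?_⟩
  · apply Set.Subset.antisymm
    · exact Set.subset_inter hE.1 Set.inter_subset_right
    · exact Set.inter_subset_inter_left _ (acl_mono hFE)
  · intro E' hEE' h
    apply Set.Subset.antisymm _ hEE'
    apply hE.2 _ hEE'
    show aclSet L M E' ∩ D ⊆ aclSet L M F
    rw [h]; exact Set.inter_subset_left

end Ext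

end Paper

namespace Paper

section Classes

variable {L : FirstOrder.Language.{0, 0}} [L.IsRelational] {M : Type} [L.Structure M] {D : Set M}

def codR {A : Type} [L.Structure A] (f : A ↪[L] M) (E : Set M) (h : ∀ a, f a ∈ E) : A ↪[L] ↥E where
  toFun a := ⟨f a, h a⟩
  inj' a b hab := f.injective (congrArg Subtype.val hab)
  map_fun' {n} g := isEmptyElim g
  map_rel' {n} R x := f.map_rel R x

def inclE (E : Set M) : ↥E ↪[L] M where
  toFun a := a
  inj' a b hab := Subtype.ext hab
  map_fun' {n} g := isEmptyElim g
  map_rel' {n} R x := Iff.rfl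

theorem env_sub {A : Bundled.{0} L.Structure} (hA : A ∈ envClass L M D) : A ∈ finSubClass L M := by
  obtain ⟨E, hE, -, ⟨e⟩⟩ := hA
  have : Finite E := hE
  exact ⟨Finite.of_equiv E e.toEquiv.symm, ⟨(inclE E).comp e.toEmbedding⟩⟩

theorem mem_env {E : Set M} (h : E.Finite) (h' : IsEnvelope L M D E) :
    (Bundled.mk ↥E (subsetStructure L M E) : Bundled.{0} L.Structure) ∈ envClass L M D :=
  ⟨E, h, h', ⟨Language.Equiv.refl L _⟩⟩

theorem cofin (hex : ∀ F : Set M, F.Finite → ∃ E, F ⊆ E ∧ E.Finite ∧ IsEnvelope L M D E) :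
    IsCofinalIn (envClass L M D) (finSubClass L M) := by
  refine ⟨fun A hA => env_sub hA, ?_⟩
  rintro A ⟨hA, ⟨f⟩⟩
  obtain ⟨E, h1, h2, h3⟩ := hex (Set.range f) (Set.finite_range f)
  exact ⟨_, mem_env h2 h3, ⟨codR f E fun a => h1 ⟨a, rfl⟩⟩⟩

theorem jep (hex : ∀ F : Set M, F.Finite → ∃ E, F ⊆ E ∧ E.Finite ∧ IsEnvelope L M D E) :
    JointEmbedding (envClass L M D) := by
  intro A hA B hB
  obtain ⟨hA, ⟨f⟩⟩ := env_sub hA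
  obtain ⟨hB, ⟨g⟩⟩ := env_sub hB
  obtain ⟨E, h1, h2, h3⟩ := hex (Set.range f ∪ Set.range g)
    ((Set.finite_range f).union (Set.finite_range g))
  exact ⟨_, mem_env h2 h3, ⟨codR f E fun a => h1 (Or.inl ⟨a, rfl⟩)⟩,
    ⟨codR g E fun a => h1 (Or.inr ⟨a, rfl⟩)⟩⟩

theorem amal [Countable M] [Nonempty M] (hqe : HasQE L M)
    (hiso : ∀ (α : Type) [Finite α] (v : α → M), Isol L v)
    (hex : ∀ F : Set M, F.Finite → ∃ E, F ⊆ E ∧ E.Finite ∧ IsEnvelope L M D E)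
    (A B C : Bundled.{0} L.Structure) (f : A ↪[L] B) (g : A ↪[L] C) (hB : B ∈ finSubClass L M)
    (hC : C ∈ finSubClass L M) :
    ∃ (Q : Bundled.{0} L.Structure) (f' : B ↪[L] Q) (g' : C ↪[L] Q),
      Q ∈ envClass L M D ∧ f'.comp f = g'.comp g := by
  obtain ⟨hB, ⟨β⟩⟩ := hB
  obtain ⟨hC, ⟨γ⟩⟩ := hC
  have hA : Finite A := Finite.of_injective f f.injective
  obtain ⟨e, he⟩ := homog_emb hqe hiso (β.comp f) (γ.comp g)
  let β' : B ↪[L] M := e.toEmbedding.comp β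
  obtain ⟨E, h1, h2, h3⟩ := hex (Set.range β' ∪ Set.range γ)
    ((Set.finite_range β').union (Set.finite_range γ))
  refine ⟨_, codR β' E fun a => h1 (Or.inl ⟨a, rfl⟩), codR γ E fun a => h1 (Or.inr ⟨a, rfl⟩),
    mem_env h2 h3, ?_⟩
  apply Language.Embedding.ext
  intro a
  exact Subtype.ext (he a)

end Classes

section Generic

variable {L : FirstOrder.Language.{0, 0}} [L.IsRelational] {M : Type} [L.Structure M]

def NP (_ : StructureSpace L) : Type := ℕ

instance npStr (x : StructureSpace L) : L.Structure (NP x) := pointStructure x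

instance npCountable (x : StructureSpace L) : Countable (NP x) := inferInstanceAs (Countable ℕ)

instance npNonempty (x : StructureSpace L) : Nonempty (NP x) := inferInstanceAs (Nonempty ℕ)

instance npInf (x : StructureSpace L) : Infinite (NP x) := inferInstanceAs (Infinite ℕ)

def PIx (y : StructureSpace L) (s : Set (M × ℕ)) : Prop := PI (N := NP y) L s

theorem PIx_mono {y : StructureSpace L} {s t : Set (M × ℕ)} (hst : s ⊆ t) (h : PIx y t) : PIx y s :=
  ⟨fun p hp q hq => h.1 p (hst hp) q (hst hq), fun k R g hg => h.2 k R g fun i => hst (hg i)⟩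

theorem mem_space {y : StructureSpace L} (e : NP y ↪[L] M) : y ∈ spaceOf (finSubClass L M) := by
  rintro A ⟨hA, ⟨f⟩⟩
  have hf : Finite A := by
    have := Structure.fg_def.1 hA
    obtain ⟨S, hS⟩ := this
    have h2 : (Substructure.closure L (S : Set A) : Set A) = S := by
      rw [Substructure.closure_eq_of_isRelational]
    rw [hS] at h2
    have : (Set.univ : Set A).Finite := by
      have h3 : (Set.univ : Set A) = S := by rw [← h2]; rfl
      rw [h3]; exact S.finite_toSet
    exact Set.finite_univ_iff.1 this
  exact ⟨hf, ⟨e.comp f⟩⟩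

theorem fin_emb {y : StructureSpace L} (hy : y ∈ spaceOf (finSubClass L M)) (B : Set (NP y))
    (hB : B.Finite) : Nonempty (↥B ↪[L] M) := by
  have : Finite B := hB
  have h : (Bundled.mk ↥B (subsetStructure L (NP y) B) : Bundled.{0} L.Structure) ∈ agePoint y :=
    ⟨Structure.FG.of_finite, ⟨inclE B⟩⟩
  exact (hy h).2

theorem PI_empty {y : StructureSpace L} (hy : y ∈ spaceOf (finSubClass L M)) :
    PI (M := M) (N := NP y) L ∅ := by
  refine ⟨fun p hp => hp.elim, fun k R g hg => ?_⟩
  obtain ⟨f⟩ := fin_emb hy (∅ : Set (NP y)) Set.finite_empty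
  have h : IsEmpty (Fin k) := ⟨fun i => (hg i).elim⟩
  have := f.map_rel R (fun i => h.elim i)
  have e1 : (fun i => (g i).1) = f ∘ (fun i : Fin k => h.elim i) := funext fun i => h.elim i
  rw [e1, this]
  have e2 : (fun i => (g i).2) = fun i => ((h.elim i : (∅ : Set (NP y))) : NP y) :=
    funext fun i => h.elim i
  rw [e2]
  exact Iff.rfl

theorem adj [Countable M] [Nonempty M] (hqe : HasQE L M)
    (hiso : ∀ (α : Type) [Finite α] (v : α → M), Isol L v)
    {y : StructureSpace L} (hy : y ∈ spaceOf (finSubClass L M)) (s : Set (M × ℕ)) (hs : s.Finite)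
    (h : PIx y s) (B : Set ℕ) (hB : B.Finite) :
    ∃ s', s ⊆ s' ∧ s'.Finite ∧ PIx y s' ∧ ∀ b ∈ B, ∃ a, (a, b) ∈ s' := by
  let B' : Set (NP y) := B ∪ Prod.snd '' s
  have hB' : B'.Finite := hB.union (hs.image _)
  have : Finite B' := hB'
  obtain ⟨f⟩ := fin_emb hy B' hB'
  have hm : ∀ p : s, p.1.2 ∈ B' := fun p => Or.inr ⟨_, p.2, rfl⟩
  have : Finite s := hs
  obtain ⟨e, he⟩ := homog_pi hqe hiso (Set.range fun p : s => (f ⟨p.1.2, hm p⟩, p.1.1))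
    (Set.finite_range _) (by
      constructor
      · rintro _ ⟨p, rfl⟩ _ ⟨q, rfl⟩
        simp only [f.injective.eq_iff]
        exact Subtype.ext_iff.trans (h.1 _ p.2 _ q.2).symm
      · intro k R x hx
        choose g hg using hx
        obtain rfl : (fun i => (f ⟨(g i).1.2, hm (g i)⟩, (g i).1.1)) = x := funext hg
        refine (f.map_rel R (fun i => ⟨(g i).1.2, hm (g i)⟩)).trans ?_
        exact (h.2 k R (fun i => (g i).1) (fun i => (g i).2)).symm)
  refine ⟨Set.range fun b : B' => (e (f b), b.1), ?_, Set.finite_range _, ?_, ?_⟩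
  · intro p hp
    refine ⟨⟨p.2, hm ⟨p, hp⟩⟩, ?_⟩
    exact Prod.ext (he _ ⟨⟨p, hp⟩, rfl⟩) rfl
  · constructor
    · rintro _ ⟨b, rfl⟩ _ ⟨c, rfl⟩
      simp only [e.injective.eq_iff, f.injective.eq_iff]
      exact Subtype.ext_iff
    · intro k R x hx
      choose g hg using hx
      obtain rfl : (fun i => (e (f (g i)), (g i).1)) = x := funext hg
      exact (e.map_rel R (fun i => f (g i))).trans (f.map_rel R g)
  · intro b hb
    exact ⟨e (f ⟨b, Or.inl hb⟩), ⟨⟨b, Or.inl hb⟩, rfl⟩⟩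

theorem qf_clopen {n : ℕ} (φ : L.Formula (Fin n)) (hφ : φ.IsQF) (b : Fin n → ℕ) :
    IsClopen {y : StructureSpace L | Formula.Realize (M := NP y) φ b} := by
  have tm : ∀ t : L.Term (Fin n ⊕ Fin 0), ∃ i, t = Term.var (Sum.inl i) := by
    intro t
    cases t with
    | var i =>
      rcases i with i | i
      · exact ⟨i, rfl⟩
      · exact i.elim0
    | func f _ => exact isEmptyElim f
  unfold Formula.Realize
  have main : ∀ {ψ : L.BoundedFormula (Fin n) 0}, ψ.IsQF →
      IsClopen {y : StructureSpace L | BoundedFormula.Realize (M := NP y) ψ b default} := by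
    intro ψ hψ
    induction hψ with
    | falsum => exact isClopen_empty
    | of_isAtomic h =>
      cases h with
      | equal t₁ t₂ =>
        obtain ⟨i, rfl⟩ := tm t₁
        obtain ⟨j, rfl⟩ := tm t₂
        by_cases hb : b i = b j
        · convert! isClopen_univ using 1
          exact Set.eq_univ_of_forall fun y => hb
        · convert! isClopen_empty using 1
          exact Set.eq_empty_of_forall_notMem fun y h => hb h
      | @rel l R ts =>
        choose g hg using fun i => tm (ts i)
        have : ts = fun i => Term.var (Sum.inl (g i)) := funext hg
        subst this
        have hc : Continuous fun y : StructureSpace L => y l R (fun i => b (g i)) := by fun_prop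
        exact (isClopen_discrete {true}).preimage hc
    | imp _ _ h1 h2 =>
      convert! h1.compl.union h2 using 1
      ext y
      exact imp_iff_not_or
  exact main hφ

theorem pi_clopen [Countable M] [Nonempty M] (hqe : HasQE L M)
    (hiso : ∀ (α : Type) [Finite α] (v : α → M), Isol L v) (s : Set (M × ℕ)) (hs : s.Finite) :
    IsClopen {y : ↥(spaceOf (L := L) (finSubClass L M)) | PIx y.1 s} := by
  have : Finite s := hs
  have e := Finite.equivFin s
  let a : Fin (Nat.card s) → M := fun i => (e.symm i).1.1
  let b : Fin (Nat.card s) → ℕ := fun i => (e.symm i).1.2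
  obtain ⟨S, h1, h2, h3⟩ := hiso _ a
  obtain ⟨φ, rfl⟩ := Set.empty_definable_iff.1 h1
  obtain ⟨ψ, hψ, hφψ⟩ := hqe _ φ
  convert! (qf_clopen ψ hψ b).preimage (continuous_subtype_val (p := fun y => y ∈ spaceOf (L := L) (finSubClass L M))) using 1
  ext ⟨y, hy⟩
  have hab : ∀ p (hp : p ∈ s), a (e ⟨p, hp⟩) = p.1 ∧ b (e ⟨p, hp⟩) = p.2 := by
    intro p hp
    have := Equiv.symm_apply_apply e ⟨p, hp⟩
    exact ⟨congrArg (fun z : s => z.1.1) this, congrArg (fun z : s => z.1.2) this⟩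
  constructor
  · intro h
    refine (qf_congr (N := NP y) a b ?_ ?_ ψ hψ).1 ((hφψ a).1 h2)
    · intro i j
      exact h.1 _ (e.symm i).2 _ (e.symm j).2
    · intro k R g
      exact h.2 k R (fun i => (e.symm (g i)).1) (fun i => (e.symm (g i)).2)
  · intro h
    replace h : Formula.Realize (M := NP y) ψ b := h
    let B : Set (NP y) := Set.range b
    obtain ⟨f⟩ := fin_emb hy B (Set.finite_range _)
    let b' : Fin (Nat.card s) → B := fun i => ⟨b i, i, rfl⟩
    have h4 : ψ.Realize (fun i => f (b' i)) := by
      refine (qf_congr (N := NP y) (fun i => f (b' i)) b ?_ ?_ ψ hψ).2 h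
      · intro i j
        rw [f.injective.eq_iff]
        exact Subtype.ext_iff
      · intro k R g
        exact f.map_rel R (fun i => b' (g i))
    have h5 : SameT L a (fun i => f (b' i)) := sameT_of_isol h2 ((hφψ _).2 h4) h3
    have h6 : ∀ i j, a i = a j ↔ b i = b j := by
      intro i j
      have := h5 (Term.equal (Term.var i) (Term.var j))
      rw [Formula.realize_equal, Formula.realize_equal] at this
      refine this.trans ?_
      simp only [Term.realize_var]
      rw [f.injective.eq_iff]
      exact Subtype.ext_iff
    constructor
    · intro p hp q hq
      have := h6 (e ⟨p, hp⟩) (e ⟨q, hq⟩)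
      rwa [(hab p hp).1, (hab p hp).2, (hab q hq).1, (hab q hq).2] at this
    · intro k R g hg
      have h7 := h5 (R.formula (fun i => Term.var (e ⟨g i, hg i⟩)))
      simp only [Formula.realize_rel, Term.realize_var] at h7
      have h8 := h7.trans (f.map_rel R (fun i => b' (e ⟨g i, hg i⟩)))
      have e1 : (fun i => a (e ⟨g i, hg i⟩)) = fun i => (g i).1 := funext fun i => (hab _ (hg i)).1
      have e2 : (fun i => b (e ⟨g i, hg i⟩)) = fun i => (g i).2 := funext fun i => (hab _ (hg i)).2
      rw [e1] at h8
      rw [← e2]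
      exact h8

theorem ext_bij {A B : Type} [Countable A] [Infinite A] [Countable B] [Infinite B]
    (s : Set (A × B)) (hs : s.Finite) (h : ∀ p ∈ s, ∀ q ∈ s, (p.1 = q.1 ↔ p.2 = q.2)) :
    ∃ e : A ≃ B, ∀ p ∈ s, e p.1 = p.2 := by
  let _ : Language.empty.Structure A := Language.emptyStructure
  let _ : Language.empty.Structure B := Language.emptyStructure
  have emp : ∀ s : Set (A × B), (∀ p ∈ s, ∀ q ∈ s, (p.1 = q.1 ↔ p.2 = q.2)) → PI Language.empty s :=
    fun s hs => ⟨hs, fun k R => isEmptyElim R⟩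
  obtain ⟨e, he⟩ := back_forth Language.empty (M := A) (N := B) (by
    intro s hs h m
    by_cases hm : ∃ n, (m, n) ∈ s
    · obtain ⟨n, hn⟩ := hm
      exact ⟨n, by rwa [Set.insert_eq_of_mem hn]⟩
    · push Not at hm
      obtain ⟨n, hn⟩ := (hs.image Prod.snd).exists_notMem
      refine ⟨n, emp _ ?_⟩
      have k1 : ∀ p ∈ s, p.1 ≠ m := fun p hp h => hm p.2 (by rw [← h]; exact hp)
      have k2 : ∀ p ∈ s, p.2 ≠ n := fun p hp h => hn ⟨p, hp, h⟩
      rintro p (rfl | hp) q (rfl | hq)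
      · simp
      · exact iff_of_false (k1 q hq).symm (k2 q hq).symm
      · exact iff_of_false (k1 p hp) (k2 p hp)
      · exact h.1 p hp q hq) (by
    intro s hs h n
    by_cases hm : ∃ m, (m, n) ∈ s
    · obtain ⟨m, hm⟩ := hm
      exact ⟨m, by rwa [Set.insert_eq_of_mem hm]⟩
    · push Not at hm
      obtain ⟨m, hn⟩ := (hs.image Prod.fst).exists_notMem
      refine ⟨m, emp _ ?_⟩
      have k2 : ∀ p ∈ s, p.2 ≠ n := fun p hp h => hm p.1 (by rw [← h]; exact hp)
      have k1 : ∀ p ∈ s, p.1 ≠ m := fun p hp h => hn ⟨p, hp, h⟩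
      rintro p (rfl | hp) q (rfl | hq)
      · simp
      · exact iff_of_false (k1 q hq).symm (k2 q hq).symm
      · exact iff_of_false (k1 p hp) (k2 p hp)
      · exact h.1 p hp q hq) s hs (emp s h)
  exact ⟨e.toEquiv, he⟩

noncomputable def pull (σ : M ≃ ℕ) : StructureSpace L := fun _ R t =>
  @decide (Structure.RelMap R fun i => σ.symm (t i)) (Classical.propDecidable _)

def pullEquiv (σ : M ≃ ℕ) : M ≃[L] NP (pull (L := L) σ) where
  toEquiv := σ
  map_fun' {n} f := isEmptyElim f
  map_rel' {n} R x := by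
    show pull σ n R (σ ∘ x) = true ↔ _
    simp [pull]

theorem pull_mem (σ : M ≃ ℕ) : pull (L := L) σ ∈ spaceOf (finSubClass L M) :=
  mem_space (pullEquiv σ).symm.toEmbedding

theorem pull_PI (σ : M ≃ ℕ) (s : Set (M × ℕ)) (hs : ∀ p ∈ s, σ p.1 = p.2) :
    PIx (pull (L := L) σ) s := by
  constructor
  · intro p hp q hq
    rw [← hs p hp, ← hs q hq]
    exact σ.injective.eq_iff.symm
  · intro k R g hg
    have : (fun i => (g i).2) = fun i => σ (g i).1 := funext fun i => (hs _ (hg i)).symm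
    rw [this]
    exact ((pullEquiv σ).map_rel R (fun i => (g i).1)).symm

theorem forth_res [Countable M] [Infinite M] (hqe : HasQE L M)
    (hiso : ∀ (α : Type) [Finite α] (v : α → M), Isol L v) (s : Set (M × ℕ)) (hs : s.Finite) (m : M) :
    {y : ↥(spaceOf (L := L) (finSubClass L M)) | PIx y.1 s → ∃ n, PIx y.1 (insert (m, n) s)} ∈
      residual ↥(spaceOf (L := L) (finSubClass L M)) := by
  have hset : {y : ↥(spaceOf (L := L) (finSubClass L M)) | PIx y.1 s → ∃ n, PIx y.1 (insert (m, n) s)}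
      = {y | PIx y.1 s}ᶜ ∪ ⋃ n, {y | PIx y.1 (insert (m, n) s)} := by
    ext y
    simp only [Set.mem_ofPred_eq, Set.mem_union, Set.mem_compl_iff, Set.mem_iUnion]
    exact imp_iff_not_or
  apply residual_of_dense_open
  · rw [hset]
    exact (pi_clopen hqe hiso s hs).compl.isOpen.union
      (isOpen_iUnion fun n => (pi_clopen hqe hiso _ (hs.insert _)).isOpen)
  · rintro ⟨y, hy⟩
    by_cases hp : PIx y s
    · have step : ∀ k : ℕ, ∃ σ : M ≃ ℕ, (∀ p ∈ s, σ p.1 = p.2) ∧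
          ∀ (n : ℕ) (R : L.Relations n) (t : Fin n → ℕ), (∀ i, t i < k) → pull σ n R t = y n R t := by
        intro k
        obtain ⟨s', h1, h2, h3, h4⟩ := adj hqe hiso hy s hs hp (Set.Iio k) (Set.finite_Iio k)
        obtain ⟨σ, hσ⟩ := ext_bij s' h2 h3.1
        refine ⟨σ, fun p hp => hσ p (h1 hp), ?_⟩
        intro n R t ht
        choose a ha using fun i => h4 (t i) (ht i)
        have h5 := h3.2 n R (fun i => (a i, t i)) ha
        have h6 : (fun i => σ.symm (t i)) = a := by
          funext i
          exact (Equiv.symm_apply_eq σ).2 (hσ _ (ha i)).symm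
        rw [Bool.eq_iff_iff]
        simp only [pull, decide_eq_true_eq]
        rw [h6]
        exact h5
      choose σ hσ1 hσ2 using step
      refine mem_closure_of_tendsto (f := fun k => (⟨pull (σ k), pull_mem (σ k)⟩ :
        ↥(spaceOf (L := L) (finSubClass L M)))) (b := Filter.atTop) ?_ (Filter.Eventually.of_forall ?_)
      · rw [tendsto_subtype_rng]
        rw [tendsto_pi_nhds]; intro n
        rw [tendsto_pi_nhds]; intro R
        rw [tendsto_pi_nhds]; intro t
        refine tendsto_const_nhds.congr' ?_
        obtain ⟨B, hB⟩ := (Set.finite_range t).bddAbove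
        filter_upwards [Filter.eventually_gt_atTop B] with k hk
        exact (hσ2 k n R t fun i => lt_of_le_of_lt (hB ⟨i, rfl⟩) hk).symm
      · intro k _
        refine ⟨σ k m, pull_PI _ _ ?_⟩
        rintro p (rfl | hp)
        · rfl
        · exact hσ1 k p hp
    · exact subset_closure fun h => absurd h hp

theorem iso_res [Countable M] [Infinite M] (hqe : HasQE L M)
    (hiso : ∀ (α : Type) [Finite α] (v : α → M), Isol L v) :
    {y : ↥(spaceOf (L := L) (finSubClass L M)) | Nonempty (M ≃[L] NP y.1)} ∈
      residual ↥(spaceOf (L := L) (finSubClass L M)) := by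
  have h := (eventually_countable_forall (l := residual ↥(spaceOf (L := L) (finSubClass L M)))
    (p := fun y (i : Finset (M × ℕ) × M) => PIx y.1 (i.1 : Set (M × ℕ)) →
      ∃ n, PIx y.1 (insert (i.2, n) (i.1 : Set (M × ℕ))))).2
    (fun i => forth_res hqe hiso _ i.1.finite_toSet i.2)
  filter_upwards [h] with y hy
  obtain ⟨e, -⟩ := back_forth L (M := M) (N := NP y.1) (by
    intro s hs hp m
    let s' : Set (M × ℕ) := s
    have hs' : s'.Finite := hs
    have := hy (hs'.toFinset, m)
    simp only [hs'.coe_toFinset] at this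
    exact this hp) (by
    intro s hs hp n
    obtain ⟨s', h1, h2, h3, h4⟩ := adj hqe hiso y.2 s hs hp {n} (Set.finite_singleton _)
    obtain ⟨a, ha⟩ := h4 n rfl
    refine ⟨a, PIx_mono ?_ h3⟩
    exact Set.insert_subset ha h1) ∅ Set.finite_empty (PI_empty y.2)
  exact ⟨e⟩

end Generic

end Paper

namespace Paper

/-- For a totally categorical structure `M` (in a regular adequate language with
quantifier elimination) with `0`-definable modular strictly minimal set `D`, the family
of finite `D`-envelopes is cofinal in the class of finite substructures of `M`, has JEP
and AP, consists of amalgamation bases, and `M` is the corresponding generic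
structure. -/
theorem statement7 (L : FirstOrder.Language.{0, 0}) [L.IsRelational]
    [inst : L.Structure ℕ] (hL : Countable (Σ n, L.Relations n))
    (htc : TotallyCategorical L ℕ) (hqe : HasQE L ℕ)
    (D : Set ℕ) (hmin : StrictlyMinimalSet L ℕ D) (hmod : ModularGeometryOn L ℕ D) :
    IsCofinalIn (envClass L ℕ D) (finSubClass L ℕ) ∧
      JointEmbedding (envClass L ℕ D) ∧ Amalgamation (envClass L ℕ D) ∧
      (∀ A ∈ envClass L ℕ D, IsAmalgamationBase (finSubClass L ℕ) A) ∧
      IsGenericPoint (finSubClass L ℕ) (ofStructure inst) := by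
  have hsym : Countable L.Symbols := by
    have : IsEmpty (Σ n, L.Functions n) := ⟨fun x => isEmptyElim x.2⟩
    show Countable ((Σ n, L.Functions n) ⊕ Σ n, L.Relations n)
    infer_instance
  have h0 := htc Cardinal.aleph0 le_rfl
  have hc := htc (Cardinal.aleph.{0} 1) (Cardinal.aleph0_le_aleph 1)
  have hiso : ∀ (α : Type) [Finite α] (v : α → ℕ), Isol L v := fun α _ v => all_isol h0 hc v
  have horb : ∀ (α : Type) [Finite α] (a : α → ℕ), (∅ : Set ℕ).Definable L (Orb L a) :=
    fun α _ a => orbit_def hqe hiso a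
  have H : Ctx L ℕ D := ⟨horb, fun α _ => fin_orb h0 horb α, hmin.1, hmin.2.1.1, hmin.2.1.2⟩
  have hex := fun F hF => exists_env H hmod hc F hF
  refine ⟨cofin hex, jep hex, ?_, ?_, ?_, ?_⟩
  · intro A B C f g hA hB hC
    exact amal hqe hiso hex A B C f g (env_sub hB) (env_sub hC)
  · intro A hA
    refine ⟨env_sub hA, fun B C f g hB hC => ?_⟩
    obtain ⟨Q, f', g', h1, h2⟩ := amal hqe hiso hex A B C f g hB hC
    exact ⟨Q, f', g', env_sub h1, h2⟩
  · have : ofStructure inst = pull (L := L) (Equiv.refl ℕ) := rfl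
    rw [this]
    exact pull_mem _
  · filter_upwards [iso_res hqe hiso] with y hy
    obtain ⟨e⟩ := hy
    refine ⟨e.toEquiv, ?_⟩
    funext n R t
    have h := e.symm.map_rel R t
    rw [Bool.eq_iff_iff]
    simp only [permSMul, ofStructure, decide_eq_true_eq]
    exact h.symm


end Paper
end
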